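/- For every smooth vector field Y with compact support in B₁ there exists a constant C(Y) > 0 such that for every x₀ ∈ {u = v} and every R ≥ 1, with κ := R⁴ and (u_κ, v_κ) the corresponding rescaled solution, | ∫_{B₁} [ |∇(u_κ − v_κ)|² div Y − 2 DY(∇(u_κ − v_κ), ∇(u_κ − v_κ)) ] dx | ≤ C(Y) κ^{−1/4}. -/

import Mathlib

/-!
Write `U = u_κ`, `V = v_κ`. The stress tensor of the pair `(U, V)` is divergence free, and testing
this against `Y` (`stationary`) reduces the claim to showing that `κ U² V²` and `|∇U| |∇V|` are
`O(1 / R)` in `L¹(B₁)`, uniformly in the centre (`tail_bound`, `integrand_bound`).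

These bounds rest on a global estimate (`global_est`): `∇u`, `∇v` and `min u v` are bounded on the
whole space. Given it, `κ U² V² ≤ (L / R) (ΔU + ΔV)`, and the integral of the right-hand Laplacians
is bounded (`mass_bound`). Where `u` and `v` are both bounded, `|∇U|²` and `|∇V|²` are controlled by
testing the equations with `β(U) = U / (1 + R U)` (`beta_bound`). Where one component is large, the
gradient of the other one is controlled by a local mean of its Laplacian (`grad_local`,
`avg_bound`).

The global estimate follows from linear growth measured from each point of `{u = v}`, with a
constant independent of the point (`nodal_growth`), together with a Keller–Osserman bound
(`keller_osserman`) and interior gradient estimates (`grad_est`, `far_est`).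

The uniform growth is the heart of the matter. Balls are replaced by Gaussian averages `E` at scale
`r` around a nodal point `c`. With `H = E (u² + v²)`, an Almgren type frequency `N` is monotone
(`Nf_mono`) and at most `1` by linear growth (`Nf_le_one`), so that `H / r²` is almost decreasing
(`Hf_lin`). It then suffices to bound `H` at the natural scale `a` with `a² H = 1`, where `H` is
comparable to `u(c)²` (`start_scale`). This comes from an almost monotonicity of
Alt–Caffarelli–Friedman type for `log (E u² · E v²) - 4 log r`. Its ingredients are the Gaussian
Poincaré inequality with the gap of the second level (`poincare_gap`), a stability statement for
almost segregated pairs of profiles (`mean_zero_gap`, `static_stability`), the resulting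
differential inequality (`scale_ineq`), and segregation at scales where the growth is controlled
(`good_seg`, based on the non-sharp monotonicity `weak_acf`). The potential `Pot`, corrected by the
frequency and by an error summable over scales, increases at good scales and is recovered by a jump
at the others (`unbounded_of_jump`, `potential_bound`). Comparison with very large scales, where the
linear growth from the origin gives a bound independent of `c` (`Hf_growth_unif`), yields the bound
at the initial scale (`start_bound`).
-/

open MeasureTheory Metric Set
open scoped RealInnerProductSpace ENNReal

/-- Euclidean space `ℝⁿ`. -/
abbrev Euc (n : ℕ) := EuclideanSpace ℝ (Fin n)

/-- The Laplacian `Δu` of a function `u : ℝⁿ → ℝ`. -/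
noncomputable def lap {n : ℕ} (u : Euc n → ℝ) (x : Euc n) : ℝ :=
  ∑ i : Fin n,
    fderiv ℝ (fun y => fderiv ℝ u y (EuclideanSpace.single i 1)) x (EuclideanSpace.single i 1)

/-- The divergence `div Y = Σ_α ∂Y^α/∂x_α` of a vector field `Y`. -/
noncomputable def vdiv {n : ℕ} (Y : Euc n → Euc n) (x : Euc n) : ℝ :=
  ∑ i : Fin n, fderiv ℝ Y x (EuclideanSpace.single i 1) i

/-- `DY(p,q)(x) = Σ_{α,β} (∂Y^α/∂x_β)(x) p_α q_β`. -/
noncomputable def DYbil {n : ℕ} (Y : Euc n → Euc n) (p q x : Euc n) : ℝ :=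
  ∑ α : Fin n, ∑ β : Fin n,
    fderiv ℝ Y x (EuclideanSpace.single β 1) α * p α * q β

/-- The rescaled function `u_κ(x) = R⁻¹ u(x₀ + R x)` (with `κ = R⁴`). -/
noncomputable def resc {n : ℕ} (u : Euc n → ℝ) (x₀ : Euc n) (R : ℝ) (x : Euc n) : ℝ :=
  R⁻¹ * u (x₀ + R • x)

/-! ### Partial derivatives -/

/-- The `i`-th partial derivative of `f`. -/
noncomputable def pd {n : ℕ} (i : Fin n) (f : Euc n → ℝ) (x : Euc n) : ℝ :=
  fderiv ℝ f x (EuclideanSpace.single i 1)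

/-- Smooth real functions on `ℝⁿ`. -/
abbrev Sm {n : ℕ} (f : Euc n → ℝ) : Prop := ContDiff ℝ (⊤ : ℕ∞) f

section basics
variable {n : ℕ} {f g : Euc n → ℝ} {i j : Fin n}

lemma Sm.diff (hf : Sm f) : Differentiable ℝ f := hf.differentiable (by simp)

lemma Sm.pd (hf : Sm f) (i : Fin n) : Sm (pd i f) := by
  have h : ContDiff ℝ (⊤ : ℕ∞) (fderiv ℝ f) := hf.fderiv_right (by simp)
  exact h.clm_apply contDiff_const

lemma lap_eq (f : Euc n → ℝ) (x : Euc n) : lap f x = ∑ i, pd i (pd i f) x := rfl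

lemma pd_add (hf : Differentiable ℝ f) (hg : Differentiable ℝ g) :
    pd i (fun y => f y + g y) = fun y => pd i f y + pd i g y := by
  funext x; simp [pd, fderiv_fun_add (hf x) (hg x)]

lemma pd_sub (hf : Differentiable ℝ f) (hg : Differentiable ℝ g) :
    pd i (fun y => f y - g y) = fun y => pd i f y - pd i g y := by
  funext x; simp [pd, fderiv_fun_sub (hf x) (hg x)]

lemma pd_mul (hf : Differentiable ℝ f) (hg : Differentiable ℝ g) :
    pd i (fun y => f y * g y) = fun y => pd i f y * g y + f y * pd i g y := by
  funext x; simp [pd, fderiv_fun_mul (hf x) (hg x)]; ring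

lemma pd_const_mul (c : ℝ) (hf : Differentiable ℝ f) :
    pd i (fun y => c * f y) = fun y => c * pd i f y := by
  funext x; simp [pd, fderiv_const_mul (hf x)]

lemma pd_const (c : ℝ) : pd i (fun _ : Euc n => c) = fun _ => 0 := by
  funext x; simp [pd]

lemma pd_sq (hf : Differentiable ℝ f) :
    pd i (fun y => f y ^ 2) = fun y => 2 * f y * pd i f y := by
  funext x; simp [pd, fderiv_fun_pow (𝔸 := ℝ) 2 (hf x)]

lemma pd_sum {ι : Type*} (s : Finset ι) {f : ι → Euc n → ℝ} (hf : ∀ k, Differentiable ℝ (f k)) :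
    pd i (fun y => ∑ k ∈ s, f k y) = fun y => ∑ k ∈ s, pd i (f k) y := by
  funext x
  simp [pd, fderiv_fun_sum (fun k _ => hf k x)]

/-- Chain rule for an outer function of one variable. -/
lemma pd_comp {φ φ' : ℝ → ℝ} (hφ : ∀ s, HasDerivAt φ (φ' s) s) (hf : Differentiable ℝ f) :
    pd i (fun y => φ (f y)) = fun y => φ' (f y) * pd i f y := by
  funext x
  have := (hφ (f x)).comp_hasFDerivAt x (hf x).hasFDerivAt
  have h2 : fderiv ℝ (fun y => φ (f y)) x = φ' (f x) • fderiv ℝ f x := this.fderiv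
  simp [pd, h2]

lemma pd_affine (hf : Differentiable ℝ f) (c : Euc n) (r : ℝ) :
    pd i (fun y => f (c + r • y)) = fun y => r * pd i f (c + r • y) := by
  funext x
  have h1 : HasFDerivAt (fun y : Euc n => c + r • y) (r • ContinuousLinearMap.id ℝ (Euc n)) x :=
    ((hasFDerivAt_id x).const_smul r).const_add c
  have h2 := (hf (c + r • x)).hasFDerivAt.comp x h1
  have h3 : fderiv ℝ (fun y => f (c + r • y)) x
    = (fderiv ℝ f (c + r • x)).comp (r • ContinuousLinearMap.id ℝ (Euc n)) := h2.fderiv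
  simp [pd, h3]

lemma pd_coord (i j : Fin n) : pd i (fun y : Euc n => y j) = fun _ => if j = i then 1 else 0 := by
  funext x
  have : HasFDerivAt (fun y : Euc n => y j) (EuclideanSpace.proj (𝕜 := ℝ) j) x :=
    (EuclideanSpace.proj (𝕜 := ℝ) j).hasFDerivAt
  simp only [pd]
  rw [this.fderiv]
  simp

lemma sm_coord (j : Fin n) : Sm (fun y : Euc n => y j) :=
  (EuclideanSpace.proj (𝕜 := ℝ) j).contDiff

lemma sm_affine (hf : Sm f) (c : Euc n) (r : ℝ) : Sm (fun y => f (c + r • y)) := by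
  unfold Sm at *; fun_prop

lemma pd_comm (hf : Sm f) (i j : Fin n) : pd i (pd j f) = pd j (pd i f) := by
  funext x
  have hd : DifferentiableAt ℝ (fderiv ℝ f) x :=
    (ContDiff.differentiable (n := (⊤ : ℕ∞)) (hf.fderiv_right (by simp)) (by simp)) x
  have key : ∀ a b : Fin n, pd a (pd b f) x
      = fderiv ℝ (fderiv ℝ f) x (EuclideanSpace.single a 1) (EuclideanSpace.single b 1) := by
    intro a b
    have : HasFDerivAt (pd b f) ((ContinuousLinearMap.apply ℝ ℝ
        (EuclideanSpace.single b (1 : ℝ) : Euc n)).comp (fderiv ℝ (fderiv ℝ f) x)) x :=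
      (ContinuousLinearMap.apply ℝ ℝ
        (EuclideanSpace.single b (1 : ℝ) : Euc n)).hasFDerivAt.comp x hd.hasFDerivAt
    conv_lhs => unfold pd
    change fderiv ℝ (pd b f) x _ = _
    rw [this.fderiv]; simp
  rw [key, key]
  have hs : IsSymmSndFDerivAt ℝ f x :=
    (hf.contDiffAt).isSymmSndFDerivAt (by
      rw [minSmoothness_of_isRCLikeNormedField]; exact WithTop.coe_le_coe.2 le_top)
  exact hs _ _

lemma euc_sum (h : Euc n) : h = ∑ i, h i • (EuclideanSpace.single i (1 : ℝ)) := by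
  ext j
  simp [Pi.single_apply]

lemma fderiv_eq_sum (f : Euc n → ℝ) (x h : Euc n) : fderiv ℝ f x h = ∑ i, h i * pd i f x := by
  conv_lhs => rw [euc_sum h]
  simp [pd]

lemma norm_sq_sum (x : Euc n) : ‖x‖ ^ 2 = ∑ i, x i ^ 2 := by
  rw [EuclideanSpace.real_norm_sq_eq]

lemma abs_coord_le (x : Euc n) (i : Fin n) : |x i| ≤ ‖x‖ := by
  have := PiLp.norm_apply_le x i
  simpa using this

/-- `t ↦ f (x + t y)` has derivative `y · ∇f`. -/
lemma hasDerivAt_line (hf : Differentiable ℝ f) (x y : Euc n) (t : ℝ) :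
    HasDerivAt (fun t : ℝ => f (x + t • y)) (∑ i, y i * pd i f (x + t • y)) t := by
  have h1 : HasDerivAt (fun t : ℝ => x + t • y) y t := by
    simpa using ((hasDerivAt_id t).smul_const y).const_add x
  have h2 := (hf (x + t • y)).hasFDerivAt.comp_hasDerivAt t h1
  rw [fderiv_eq_sum] at h2
  exact h2

lemma lap_mul (hf : Sm f) (hg : Sm g) (x : Euc n) :
    lap (fun y => f y * g y) x
      = lap f x * g x + f x * lap g x + 2 * ∑ i, pd i f x * pd i g x := by
  simp only [lap_eq]
  rw [Finset.sum_mul, Finset.mul_sum, Finset.mul_sum, ← Finset.sum_add_distrib,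
    ← Finset.sum_add_distrib]
  refine Finset.sum_congr rfl fun i _ => ?_
  rw [pd_mul hf.diff hg.diff, pd_add, pd_mul (hf.pd i).diff hg.diff, pd_mul hf.diff (hg.pd i).diff]
  · ring
  · exact (hf.pd i).diff.mul hg.diff
  · exact hf.diff.mul (hg.pd i).diff

lemma lap_sq (hf : Sm f) (x : Euc n) :
    lap (fun y => f y ^ 2) x = 2 * f x * lap f x + 2 * ∑ i, pd i f x ^ 2 := by
  have := lap_mul hf hf x
  simp only [← pow_two] at this
  rw [this]; ring

lemma lap_pd (hf : Sm f) (i : Fin n) : lap (pd i f) = pd i (lap f) := by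
  have h : lap f = fun x => ∑ j, pd j (pd j f) x := rfl
  rw [h, pd_sum _ (fun k => ((hf.pd k).pd k).diff)]
  funext x
  rw [lap_eq]
  refine Finset.sum_congr rfl fun j _ => ?_
  rw [pd_comm (hf.pd j) i j, pd_comm hf i j]

lemma lap_affine (hf : Sm f) (c : Euc n) (r : ℝ) (y : Euc n) :
    lap (fun y => f (c + r • y)) y = r ^ 2 * lap f (c + r • y) := by
  simp only [lap_eq, Finset.mul_sum]
  refine Finset.sum_congr rfl fun i _ => ?_
  rw [pd_affine hf.diff, pd_const_mul, pd_affine (hf.pd i).diff]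
  · ring
  · exact (sm_affine (hf.pd i) c r).diff

lemma lap_const_mul (hf : Sm f) (c : ℝ) (y : Euc n) :
    lap (fun y => c * f y) y = c * lap f y := by
  simp only [lap_eq, Finset.mul_sum]
  refine Finset.sum_congr rfl fun i _ => ?_
  rw [pd_const_mul _ hf.diff, pd_const_mul _ (hf.pd i).diff]

lemma Sm.lap (hf : Sm f) : Sm (lap f) := by
  have h : _root_.lap f = fun x => ∑ j, _root_.pd j (_root_.pd j f) x := rfl
  rw [h]
  exact ContDiff.sum fun i _ => (hf.pd i).pd i

end basics


/-! ### Mean values against compactly supported kernels -/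

section kernels
variable {n : ℕ}

/-- The radial cutoff `ζ(y) = S(1 - |y|²)`, `S` the smooth transition function. -/
noncomputable def zk (y : Euc n) : ℝ := Real.smoothTransition (1 - ‖y‖ ^ 2)

/-- The radial kernel `η` with `∇ζ = -η y`. -/
noncomputable def ek (y : Euc n) : ℝ := 2 * deriv Real.smoothTransition (1 - ‖y‖ ^ 2)

lemma st_deriv_smooth : ContDiff ℝ (⊤ : ℕ∞) (deriv Real.smoothTransition) :=
  (contDiff_infty_iff_deriv.1 Real.smoothTransition.contDiff).2

lemma st_hasDeriv (s : ℝ) :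
    HasDerivAt Real.smoothTransition (deriv Real.smoothTransition s) s :=
  ((contDiff_infty_iff_deriv.1 Real.smoothTransition.contDiff).1 s).hasDerivAt

lemma sm_one_sub_norm_sq : Sm (fun y : Euc n => 1 - ‖y‖ ^ 2) :=
  contDiff_const.sub (contDiff_norm_sq ℝ)

lemma zk_sm : Sm (zk (n := n)) := Real.smoothTransition.contDiff.comp sm_one_sub_norm_sq
lemma ek_sm : Sm (ek (n := n)) :=
  contDiff_const.mul (st_deriv_smooth.comp sm_one_sub_norm_sq)

lemma zk_nonneg (y : Euc n) : 0 ≤ zk y := Real.smoothTransition.nonneg _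
lemma ek_nonneg (y : Euc n) : 0 ≤ ek y :=
  mul_nonneg (by norm_num) (Real.smoothTransition.monotone.deriv_nonneg)

lemma zk_zero {y : Euc n} (hy : 1 < ‖y‖) : zk y = 0 :=
  Real.smoothTransition.zero_of_nonpos (by nlinarith)

lemma ek_zero {y : Euc n} (hy : 1 < ‖y‖) : ek y = 0 := by
  have h : (1 : ℝ) - ‖y‖ ^ 2 < 0 := by nlinarith
  have : Real.smoothTransition =ᶠ[nhds (1 - ‖y‖ ^ 2)] fun _ => 0 := by
    filter_upwards [Iio_mem_nhds h] with s hs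
    exact Real.smoothTransition.zero_of_nonpos (le_of_lt hs)
  simp [ek, this.deriv_eq]

lemma zk_cs : HasCompactSupport (zk (n := n)) :=
  HasCompactSupport.intro (isCompact_closedBall 0 1) fun y hy => zk_zero (by simpa using hy)
lemma ek_cs : HasCompactSupport (ek (n := n)) :=
  HasCompactSupport.intro (isCompact_closedBall 0 1) fun y hy => ek_zero (by simpa using hy)

lemma pd_cs {f : Euc n → ℝ} (hf : HasCompactSupport f) (i : Fin n) : HasCompactSupport (pd i f) :=
  hf.fderiv_apply (𝕜 := ℝ) _

lemma pd_norm_sq (i : Fin n) : pd i (fun y : Euc n => ‖y‖ ^ 2) = fun y => 2 * y i := by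
  have h : (fun y : Euc n => ‖y‖ ^ 2) = fun y => ∑ j, (y j) ^ 2 := by
    funext y; exact norm_sq_sum y
  rw [h, pd_sum (f := fun j (y : Euc n) => y j ^ 2) _ (fun k => ((sm_coord k).diff).fun_pow 2)]
  funext y
  simp_rw [pd_sq (sm_coord _).diff, pd_coord]
  simp

lemma pd_zk (i : Fin n) : pd i (zk (n := n)) = fun y => - (y i * ek y) := by
  have h := pd_comp (i := i) st_hasDeriv (sm_one_sub_norm_sq (n := n)).diff
  have h2 : pd i (fun y : Euc n => 1 - ‖y‖ ^ 2) = fun y => - (2 * y i) := by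
    rw [pd_sub (by fun_prop) ((contDiff_norm_sq (n := (⊤ : ℕ∞)) ℝ).differentiable (by simp)),
      pd_const, pd_norm_sq]
    simp
  rw [h2] at h
  change pd i (fun y => Real.smoothTransition (1 - ‖y‖ ^ 2)) = _
  rw [h]; funext y; simp only [ek]; ring

lemma ek_pos (hn : 2 ≤ n) : 0 < ∫ y : Euc n, ek y := by
  obtain ⟨s, hs, hs'⟩ := exists_deriv_eq_slope Real.smoothTransition (zero_lt_one)
    Real.smoothTransition.continuous.continuousOn
    (fun s _ => (st_hasDeriv s).differentiableAt.differentiableWithinAt)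
  have i0 : Fin n := ⟨0, by omega⟩
  refine Continuous.integral_pos_of_hasCompactSupport_nonneg_nonzero
    (x := (EuclideanSpace.single i0 (Real.sqrt (1 - s)) : Euc n)) ek_sm.continuous ek_cs
    (fun y => ek_nonneg y) ?_
  simp [ek, Real.sq_sqrt (show (0 : ℝ) ≤ 1 - s by linarith [hs.2]), hs']

/-- Integration by parts against a compactly supported function. -/
lemma cs_ibp {f g : Euc n → ℝ} (hf : ContDiff ℝ 1 f) (hg : ContDiff ℝ 1 g)
    (hc : HasCompactSupport g) (i : Fin n) :
    ∫ y, f y * pd i g y = - ∫ y, pd i f y * g y := by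
  have hdf : Continuous (pd i f) := (hf.continuous_fderiv (by simp)).clm_apply continuous_const
  have hdg : Continuous (pd i g) := (hg.continuous_fderiv (by simp)).clm_apply continuous_const
  refine integral_mul_fderiv_eq_neg_fderiv_mul_of_integrable ?_ ?_ ?_
    (fun x _ => hf.differentiable (by simp) x) (fun x _ => hg.differentiable (by simp) x)
  · exact (hdf.mul hg.continuous).integrable_of_hasCompactSupport hc.mul_left
  · exact (hf.continuous.mul hdg).integrable_of_hasCompactSupport (pd_cs hc i).mul_left
  · exact (hf.continuous.mul hg.continuous).integrable_of_hasCompactSupport hc.mul_left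

/-- Differentiation of `τ ↦ ∫ W(x + τ y) k(y) dy` under the integral, `k` supported in the unit
ball. -/
lemma hasDerivAt_kernel {W k : Euc n → ℝ} (hW : Sm W) (hk : Continuous k)
    (hk0 : ∀ y, 1 < ‖y‖ → k y = 0) (x : Euc n) (t : ℝ) :
    HasDerivAt (fun t : ℝ => ∫ y, W (x + t • y) * k y)
      (∫ y, (∑ i, y i * pd i W (x + t • y)) * k y) t := by
  have hcs : HasCompactSupport k :=
    HasCompactSupport.intro (isCompact_closedBall 0 1) fun y hy => hk0 y (by simpa using hy)
  have hcont : Continuous fun p : ℝ × Euc n => ∑ i, p.2 i * pd i W (x + p.1 • p.2) := by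
    refine continuous_finsetSum _ fun i _ => ?_
    have := (hW.pd i).continuous
    fun_prop
  obtain ⟨C, hC⟩ := ((isCompact_closedBall t 1).prod
    (isCompact_closedBall (0 : Euc n) 1)).exists_bound_of_continuousOn hcont.continuousOn
  have hWc := hW.continuous
  refine (hasDerivAt_integral_of_dominated_loc_of_deriv_le (𝕜 := ℝ) (E := ℝ)
    (F := fun t y => W (x + t • y) * k y)
    (F' := fun t y => (∑ i, y i * pd i W (x + t • y)) * k y) (bound := fun y => C * |k y|)
    (ball_mem_nhds t zero_lt_one) ?_ ?_ ?_ ?_ ?_ ?_).2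
  · exact Filter.Eventually.of_forall fun s => by
      have : Continuous fun y => W (x + s • y) * k y := by fun_prop
      exact this.aestronglyMeasurable
  · have : Continuous fun y => W (x + t • y) * k y := by fun_prop
    exact this.integrable_of_hasCompactSupport hcs.mul_left
  · have : Continuous fun y => (∑ i, y i * pd i W (x + t • y)) * k y :=
      (hcont.comp (by fun_prop : Continuous fun y : Euc n => (t, y))).mul hk
    exact this.aestronglyMeasurable
  · refine Filter.Eventually.of_forall fun y s hs => ?_
    by_cases hy : 1 < ‖y‖
    · simp [hk0 y hy]
    · rw [norm_mul]
      refine mul_le_mul_of_nonneg_right ?_ (abs_nonneg _)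
      exact hC (s, y) ⟨ball_subset_closedBall hs, by simpa using hy⟩
  · exact ((hk.abs).integrable_of_hasCompactSupport hcs.norm).const_mul C
  · exact Filter.Eventually.of_forall fun y s _ => (hasDerivAt_line hW.diff x y s).mul_const _

/-- The derivative of the `η`-mean over balls of radius `τ` is `τ` times a `ζ`-mean of `ΔW`. -/
lemma hasDerivAt_ek {W : Euc n → ℝ} (hW : Sm W) (x : Euc n) (t : ℝ) :
    HasDerivAt (fun t : ℝ => ∫ y, W (x + t • y) * ek y)
      (t * ∫ y, lap W (x + t • y) * zk y) t := by
  have h := hasDerivAt_kernel hW ek_sm.continuous (fun y => ek_zero) x t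
  convert h using 1
  have e1 : ∀ y : Euc n, (∑ i, y i * pd i W (x + t • y)) * ek y
      = ∑ i, - (pd i W (x + t • y) * pd i zk y) := by
    intro y; rw [Finset.sum_mul]
    refine Finset.sum_congr rfl fun i _ => ?_
    rw [pd_zk]; ring
  have hs : ∀ i, Sm (fun y => pd i W (x + t • y)) := fun i => sm_affine (hW.pd i) x t
  simp_rw [e1]
  rw [integral_finsetSum]
  · have e2 : ∀ i : Fin n, ∫ y, - (pd i W (x + t • y) * pd i zk y)
        = ∫ y, t * (pd i (pd i W) (x + t • y) * zk y) := by
      intro i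
      rw [integral_neg, cs_ibp ((hs i).of_le (by simp)) (zk_sm.of_le (by simp)) zk_cs, neg_neg,
        pd_affine (hW.pd i).diff]
      congr 1; funext y; ring
    simp_rw [e2, integral_const_mul]
    rw [← Finset.mul_sum, ← integral_finsetSum]
    · congr 2; funext y; rw [lap_eq, Finset.sum_mul]
    · intro i _
      exact (((sm_affine ((hW.pd i).pd i) x t).continuous).mul
        zk_sm.continuous).integrable_of_hasCompactSupport zk_cs.mul_left
  · intro i _
    exact (((hs i).continuous.mul (zk_sm.pd i).continuous).integrable_of_hasCompactSupport
      (pd_cs zk_cs i).mul_left).neg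

lemma subharm_mean {W : Euc n → ℝ} (hW : Sm W) (hsub : ∀ x, 0 ≤ lap W x) (x : Euc n) {ρ : ℝ}
    (hρ : 0 ≤ ρ) : W x * ∫ y : Euc n, ek y ≤ ∫ y, W (x + ρ • y) * ek y := by
  have hm : MonotoneOn (fun t : ℝ => ∫ y, W (x + t • y) * ek y) (Ici 0) := by
    refine monotoneOn_of_deriv_nonneg (convex_Ici 0)
      (fun t _ => (hasDerivAt_ek hW x t).continuousAt.continuousWithinAt)
      (fun t _ => (hasDerivAt_ek hW x t).differentiableAt.differentiableWithinAt) ?_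
    intro t ht
    rw [(hasDerivAt_ek hW x t).deriv]
    have : 0 < t := by simpa using ht
    exact mul_nonneg this.le (integral_nonneg fun y => mul_nonneg (hsub _) (zk_nonneg y))
  have := hm (a := 0) (by simp) (b := ρ) hρ hρ
  simpa [integral_const_mul] using this

lemma abs_integral_le_of_kernel {f k : Euc n → ℝ} (hk : Continuous k) (hc : HasCompactSupport k)
    {A : ℝ} (hA : ∀ y, k y ≠ 0 → |f y| ≤ A) : |∫ y, f y * k y| ≤ A * ∫ y, |k y| := by
  rw [← integral_const_mul, ← Real.norm_eq_abs]
  refine norm_integral_le_of_norm_le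
    (((hk.abs).integrable_of_hasCompactSupport hc.norm).const_mul A)
    (Filter.Eventually.of_forall fun y => ?_)
  rw [norm_mul]
  by_cases h : k y = 0
  · simp [h]
  · exact mul_le_mul_of_nonneg_right (hA y h) (abs_nonneg _)

lemma norm_le_one_of_ne {k : Euc n → ℝ} (hk0 : ∀ y, 1 < ‖y‖ → k y = 0) {y : Euc n}
    (h : pd i k y ≠ 0) : ‖y‖ ≤ 1 := by
  by_contra hy
  push Not at hy
  have : k =ᶠ[nhds y] fun _ => 0 := by
    filter_upwards [(isOpen_lt continuous_const continuous_norm).mem_nhds hy] with z hz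
    exact hk0 z hz
  exact h (by simp [pd, this.fderiv_eq])

/-- Interior gradient estimate, with a constant depending on the dimension only. -/
lemma grad_est (hn : 2 ≤ n) : ∃ K > 0, ∀ w : Euc n → ℝ, Sm w → ∀ (x : Euc n) (ρ A F : ℝ), 0 < ρ →
    (∀ z ∈ closedBall x ρ, |w z| ≤ A) → (∀ z ∈ closedBall x ρ, |lap w z| ≤ F) →
    ∀ i, |pd i w x| ≤ K * (A / ρ + F * ρ) := by
  set I := ∫ y : Euc n, ek y with hI
  have hIpos : 0 < I := ek_pos hn
  set K1 := ∑ i : Fin n, ∫ y : Euc n, |pd i ek y| with hK1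
  set K2 := ∑ i : Fin n, ∫ y : Euc n, |pd i zk y| with hK2
  have hK1n : ∀ i : Fin n, 0 ≤ ∫ y : Euc n, |pd i ek y| := fun i =>
    integral_nonneg fun y => abs_nonneg _
  have hK2n : ∀ i : Fin n, 0 ≤ ∫ y : Euc n, |pd i zk y| := fun i =>
    integral_nonneg fun y => abs_nonneg _
  have hK1' : 0 ≤ K1 := Finset.sum_nonneg fun i _ => hK1n i
  have hK2' : 0 ≤ K2 := Finset.sum_nonneg fun i _ => hK2n i
  refine ⟨(K1 + K2 + 1) / I, by positivity, ?_⟩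
  intro w hw x ρ A F hρ hA hF i
  have hA0 : 0 ≤ A := (abs_nonneg _).trans (hA x (mem_closedBall_self hρ.le))
  have hF0 : 0 ≤ F := (abs_nonneg _).trans (hF x (mem_closedBall_self hρ.le))
  have hmem : ∀ t ∈ Icc 0 ρ, ∀ y : Euc n, ‖y‖ ≤ 1 → x + t • y ∈ closedBall x ρ := by
    intro t ht y hy
    simp only [mem_closedBall, dist_eq_norm, add_sub_cancel_left, norm_smul, Real.norm_eq_abs,
      abs_of_nonneg ht.1]
    nlinarith [ht.1, ht.2, norm_nonneg y]
  have hd := fun t => hasDerivAt_ek (hw.pd i) x t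
  have hd' : ∀ t : ℝ, t * ∫ y, lap (pd i w) (x + t • y) * zk y
      = - ∫ y, lap w (x + t • y) * pd i zk y := by
    intro t
    rw [cs_ibp ((sm_affine hw.lap x t).of_le (by simp)) (zk_sm.of_le (by simp)) zk_cs,
      pd_affine hw.lap.diff, neg_neg, lap_pd hw, ← integral_const_mul]
    congr 1; funext y; ring
  have hb : ∀ t ∈ Icc 0 ρ, |t * ∫ y, lap (pd i w) (x + t • y) * zk y| ≤ F * K2 := by
    intro t ht
    rw [hd', abs_neg]
    refine (abs_integral_le_of_kernel (zk_sm.pd i).continuous (pd_cs zk_cs i) (A := F) ?_).trans ?_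
    · intro y hy
      exact hF _ (hmem t ht y (norm_le_one_of_ne (fun y => zk_zero) hy))
    · exact mul_le_mul_of_nonneg_left
        (Finset.single_le_sum (fun i _ => hK2n i) (Finset.mem_univ i)) hF0
  have h1 := norm_image_sub_le_of_norm_deriv_le_segment' (a := 0) (b := ρ)
    (fun t _ => (hd t).hasDerivWithinAt) (fun t ht => hb t ⟨ht.1, ht.2.le⟩) ρ ⟨hρ.le, le_rfl⟩
  have h2 : |∫ y, pd i w (x + ρ • y) * ek y| ≤ A / ρ * K1 := by
    have e : ∫ y, pd i w (x + ρ • y) * ek y = - ∫ y, (w (x + ρ • y) / ρ) * pd i ek y := by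
      rw [cs_ibp (f := fun y => w (x + ρ • y) / ρ)
        (((sm_affine hw x ρ).div_const ρ).of_le (by simp)) (ek_sm.of_le (by simp)) ek_cs, neg_neg]
      congr 1; funext y
      have : pd i (fun y => w (x + ρ • y) / ρ) y = pd i w (x + ρ • y) := by
        have h := pd_const_mul (i := i) ρ⁻¹ (sm_affine hw x ρ).diff
        rw [pd_affine hw.diff] at h
        have h' : (fun y => w (x + ρ • y) / ρ) = fun y => ρ⁻¹ * w (x + ρ • y) := by
          funext y; rw [div_eq_inv_mul]
        rw [h', h]; field_simp
      rw [this]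
    rw [e, abs_neg]
    refine (abs_integral_le_of_kernel (ek_sm.pd i).continuous (pd_cs ek_cs i)
      (A := A / ρ) ?_).trans ?_
    · intro y hy
      rw [abs_div, abs_of_pos hρ]
      exact div_le_div_of_nonneg_right
        (hA _ (hmem ρ ⟨hρ.le, le_rfl⟩ y (norm_le_one_of_ne (fun y => ek_zero) hy))) hρ.le
    · exact mul_le_mul_of_nonneg_left
        (Finset.single_le_sum (fun i _ => hK1n i) (Finset.mem_univ i)) (by positivity)
  simp only [zero_smul, add_zero, integral_const_mul, ← hI, Real.norm_eq_abs, sub_zero] at h1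
  have h3 : |pd i w x| * I ≤ (K1 + K2 + 1) * (A / ρ + F * ρ) := by
    rw [← abs_of_pos hIpos, ← abs_mul]
    have hAρ : 0 ≤ A / ρ := by positivity
    have := abs_sub_abs_le_abs_sub (pd i w x * I) (∫ y, pd i w (x + ρ • y) * ek y)
    rw [abs_sub_comm] at this
    have hx1 : 0 ≤ A / ρ * K2 := by positivity
    have hx2 : 0 ≤ F * ρ * K1 := by positivity
    have hx3 : 0 ≤ F * ρ := by positivity
    nlinarith
  rw [div_mul_eq_mul_div, le_div_iff₀ hIpos]
  exact h3

end kernels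


/-! ### Slowly increasing functions -/

section tame
variable {n : ℕ} {f g : Euc n → ℝ}

/-- Continuous functions of at most polynomial growth. -/
structure Tame (f : Euc n → ℝ) : Prop where
  cont : Continuous f
  bd : ∃ (C : ℝ) (k : ℕ), ∀ x, |f x| ≤ C * (1 + ‖x‖) ^ k

lemma Tame.of_le (hg : Tame g) (hf : Continuous f) (h : ∀ x, |f x| ≤ |g x|) : Tame f := by
  obtain ⟨C, k, hC⟩ := hg.bd
  exact ⟨hf, C, k, fun x => (h x).trans (hC x)⟩

lemma tame_const (c : ℝ) : Tame (fun _ : Euc n => c) :=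
  ⟨continuous_const, |c|, 0, fun x => by simp⟩

lemma tame_norm : Tame (fun x : Euc n => ‖x‖) :=
  ⟨continuous_norm, 1, 1, fun x => by simp⟩

lemma tame_coord (i : Fin n) : Tame (fun x : Euc n => x i) :=
  tame_norm.of_le (sm_coord i).continuous fun x => by simpa using abs_coord_le x i

lemma Tame.abs (hf : Tame f) : Tame (fun x => |f x|) :=
  hf.of_le hf.cont.abs fun x => by simp

lemma Tame.neg (hf : Tame f) : Tame (fun x => - f x) :=
  hf.of_le hf.cont.neg fun x => by simp

lemma Tame.add (hf : Tame f) (hg : Tame g) : Tame (fun x => f x + g x) := by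
  obtain ⟨C, k, hC⟩ := hf.bd
  obtain ⟨D, l, hD⟩ := hg.bd
  refine ⟨hf.cont.add hg.cont, C + D, k + l, fun x => ?_⟩
  have hx : 1 ≤ 1 + ‖x‖ := by linarith [norm_nonneg x]
  have hC0 : 0 ≤ C := by simpa using (abs_nonneg _).trans (hC 0)
  have hD0 : 0 ≤ D := by simpa using (abs_nonneg _).trans (hD 0)
  calc |f x + g x| ≤ |f x| + |g x| := abs_add_le _ _
    _ ≤ C * (1 + ‖x‖) ^ k + D * (1 + ‖x‖) ^ l := add_le_add (hC x) (hD x)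
    _ ≤ C * (1 + ‖x‖) ^ (k + l) + D * (1 + ‖x‖) ^ (k + l) := by
        gcongr <;> first | exact hx | omega
    _ = _ := by ring

lemma Tame.mul (hf : Tame f) (hg : Tame g) : Tame (fun x => f x * g x) := by
  obtain ⟨C, k, hC⟩ := hf.bd
  obtain ⟨D, l, hD⟩ := hg.bd
  refine ⟨hf.cont.mul hg.cont, C * D, k + l, fun x => ?_⟩
  have hC0 : 0 ≤ C := by simpa using (abs_nonneg _).trans (hC 0)
  calc |f x * g x| = |f x| * |g x| := abs_mul _ _
    _ ≤ (C * (1 + ‖x‖) ^ k) * (D * (1 + ‖x‖) ^ l) :=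
        mul_le_mul (hC x) (hD x) (abs_nonneg _) (by positivity)
    _ = _ := by ring

lemma Tame.sub (hf : Tame f) (hg : Tame g) : Tame (fun x => f x - g x) := by
  simpa [sub_eq_add_neg] using hf.add hg.neg

lemma Tame.const_mul (hf : Tame f) (c : ℝ) : Tame (fun x => c * f x) := (tame_const c).mul hf

lemma Tame.pow (hf : Tame f) (m : ℕ) : Tame (fun x => f x ^ m) := by
  induction m with
  | zero => simpa using tame_const 1
  | succ k ih => simpa [pow_succ] using ih.mul hf

lemma Tame.sum {ι : Type*} (s : Finset ι) {f : ι → Euc n → ℝ} (hf : ∀ k, Tame (f k)) :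
    Tame (fun x => ∑ k ∈ s, f k x) := by
  classical
  induction s using Finset.induction_on with
  | empty => simpa using tame_const 0
  | insert a s ha ih => simpa [Finset.sum_insert ha] using (hf a).add ih

lemma Tame.affine (hf : Tame f) (c : Euc n) (r : ℝ) : Tame (fun x => f (c + r • x)) := by
  obtain ⟨C, k, hC⟩ := hf.bd
  have hC0 : 0 ≤ C := by simpa using (abs_nonneg _).trans (hC 0)
  have h : Tame (fun x : Euc n => C * (1 + ‖c‖ + |r| * ‖x‖) ^ k) :=
    (((tame_const (1 + ‖c‖)).add (tame_norm.const_mul |r|)).pow k).const_mul C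
  refine h.of_le (hf.cont.comp (by fun_prop)) fun x => ?_
  rw [abs_of_nonneg (by positivity : 0 ≤ C * (1 + ‖c‖ + |r| * ‖x‖) ^ k)]
  refine (hC _).trans (mul_le_mul_of_nonneg_left (pow_le_pow_left₀ (by positivity) ?_ k) hC0)
  have := norm_add_le c (r • x)
  rw [norm_smul, Real.norm_eq_abs] at this
  linarith

/-- `f` and its partial derivatives of order at most `k` have polynomial growth. -/
def TT : ℕ → (Euc n → ℝ) → Prop
  | 0, f => Tame f
  | k + 1, f => Tame f ∧ ∀ i, TT k (pd i f)

lemma TT.tame {k : ℕ} (h : TT k f) : Tame f := by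
  cases k with
  | zero => exact h
  | succ k => exact h.1

lemma TT.mono {k : ℕ} : ∀ {f : Euc n → ℝ}, TT (k + 1) f → TT k f := by
  induction k with
  | zero => intro f h; exact h.1
  | succ k ih => intro f h; exact ⟨h.1, fun i => ih (h.2 i)⟩

lemma tt_zero (k : ℕ) : TT k (fun _ : Euc n => (0 : ℝ)) := by
  induction k with
  | zero => exact tame_const _
  | succ k ih => exact ⟨tame_const _, fun i => by rw [pd_const]; exact ih⟩

lemma tt_const (k : ℕ) (c : ℝ) : TT k (fun _ : Euc n => c) := by
  cases k with
  | zero => exact tame_const _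
  | succ k => exact ⟨tame_const _, fun i => by rw [pd_const]; exact tt_zero k⟩

lemma TT.add {k : ℕ} : ∀ {f g : Euc n → ℝ}, Sm f → Sm g → TT k f → TT k g →
    TT k (fun x => f x + g x) := by
  induction k with
  | zero => intro f g _ _ h1 h2; exact Tame.add h1 h2
  | succ k ih =>
    intro f g hf hg h1 h2
    refine ⟨h1.1.add h2.1, fun i => ?_⟩
    rw [pd_add hf.diff hg.diff]
    exact ih (hf.pd i) (hg.pd i) (h1.2 i) (h2.2 i)

lemma TT.mul {k : ℕ} : ∀ {f g : Euc n → ℝ}, Sm f → Sm g → TT k f → TT k g →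
    TT k (fun x => f x * g x) := by
  induction k with
  | zero => intro f g _ _ h1 h2; exact Tame.mul h1 h2
  | succ k ih =>
    intro f g hf hg h1 h2
    refine ⟨h1.1.mul h2.1, fun i => ?_⟩
    rw [pd_mul hf.diff hg.diff]
    exact TT.add ((hf.pd i).mul hg) (hf.mul (hg.pd i)) (ih (hf.pd i) hg (h1.2 i) h2.mono)
      (ih hf (hg.pd i) h1.mono (h2.2 i))

lemma TT.affine {k : ℕ} (c : Euc n) (r : ℝ) : ∀ {f : Euc n → ℝ}, Sm f → TT k f →
    TT k (fun x => f (c + r • x)) := by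
  induction k with
  | zero => intro f _ h1; exact Tame.affine h1 c r
  | succ k ih =>
    intro f hf h1
    refine ⟨h1.1.affine c r, fun i => ?_⟩
    rw [pd_affine hf.diff]
    exact TT.mul contDiff_const (sm_affine (hf.pd i) c r) (tt_const k r) (ih (hf.pd i) (h1.2 i))

/-- Slowly increasing smooth functions: all partial derivatives have polynomial growth. -/
structure Sl (f : Euc n → ℝ) : Prop where
  sm : Sm f
  tt : ∀ k, TT k f

lemma Sl.tame (hf : Sl f) : Tame f := hf.tt 0
lemma Sl.diff (hf : Sl f) : Differentiable ℝ f := hf.sm.diff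
lemma Sl.cont (hf : Sl f) : Continuous f := hf.sm.continuous
lemma Sl.pd (hf : Sl f) (i : Fin n) : Sl (pd i f) := ⟨hf.sm.pd i, fun k => (hf.tt (k + 1)).2 i⟩
lemma sl_const (c : ℝ) : Sl (fun _ : Euc n => c) := ⟨contDiff_const, fun k => tt_const k c⟩
lemma Sl.add (hf : Sl f) (hg : Sl g) : Sl (fun x => f x + g x) :=
  ⟨hf.sm.add hg.sm, fun k => TT.add hf.sm hg.sm (hf.tt k) (hg.tt k)⟩
lemma Sl.mul (hf : Sl f) (hg : Sl g) : Sl (fun x => f x * g x) :=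
  ⟨hf.sm.mul hg.sm, fun k => TT.mul hf.sm hg.sm (hf.tt k) (hg.tt k)⟩
lemma Sl.affine (hf : Sl f) (c : Euc n) (r : ℝ) : Sl (fun x => f (c + r • x)) :=
  ⟨sm_affine hf.sm c r, fun k => TT.affine c r hf.sm (hf.tt k)⟩
lemma Sl.const_mul (hf : Sl f) (c : ℝ) : Sl (fun x => c * f x) := (sl_const c).mul hf
lemma Sl.neg (hf : Sl f) : Sl (fun x => - f x) := by simpa using hf.const_mul (-1)
lemma Sl.sub (hf : Sl f) (hg : Sl g) : Sl (fun x => f x - g x) := by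
  simpa [sub_eq_add_neg] using hf.add hg.neg
lemma Sl.div_const (hf : Sl f) (c : ℝ) : Sl (fun x => f x / c) := by
  simpa [div_eq_inv_mul] using hf.const_mul c⁻¹
lemma Sl.pow (hf : Sl f) (m : ℕ) : Sl (fun x => f x ^ m) := by
  induction m with
  | zero => simpa using sl_const 1
  | succ k ih => simpa [pow_succ] using ih.mul hf
lemma Sl.sum {ι : Type*} (s : Finset ι) {f : ι → Euc n → ℝ} (hf : ∀ k, Sl (f k)) :
    Sl (fun x => ∑ k ∈ s, f k x) := by
  classical
  induction s using Finset.induction_on with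
  | empty => simpa using sl_const 0
  | insert a s ha ih => simpa [Finset.sum_insert ha] using (hf a).add ih
lemma Sl.lap (hf : Sl f) : Sl (lap f) := Sl.sum _ fun i => (hf.pd i).pd i
lemma sl_coord (i : Fin n) : Sl (fun x : Euc n => x i) := by
  refine ⟨sm_coord i, fun k => ?_⟩
  cases k with
  | zero => exact tame_coord i
  | succ k => exact ⟨tame_coord i, fun j => by rw [pd_coord]; exact tt_const k _⟩
lemma sl_norm_sq : Sl (fun x : Euc n => ‖x‖ ^ 2) := by
  simp_rw [norm_sq_sum]
  exact Sl.sum _ fun i => (sl_coord i).pow 2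

/-- If `f` and `Δf` are tame to order `k` then `f` is tame to order `k + 1`. -/
lemma TT.step (hn : 2 ≤ n) {k : ℕ} : ∀ {f : Euc n → ℝ}, Sm f → TT k f → TT k (lap f) →
    TT (k + 1) f := by
  induction k with
  | zero =>
    intro f hf h1 h2
    refine ⟨h1, fun i => ⟨(hf.pd i).continuous, ?_⟩⟩
    obtain ⟨C, k, hC⟩ := (show Tame f from h1).bd
    obtain ⟨D, l, hD⟩ := (show Tame (lap f) from h2).bd
    have hC0 : 0 ≤ C := by simpa using (abs_nonneg _).trans (hC 0)
    have hD0 : 0 ≤ D := by simpa using (abs_nonneg _).trans (hD 0)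
    obtain ⟨K, hK, hest⟩ := grad_est hn
    have hz : ∀ x z : Euc n, z ∈ closedBall x 1 → 1 + ‖z‖ ≤ 2 * (1 + ‖x‖) := by
      intro x z hz
      have := norm_le_norm_add_norm_sub' z x
      rw [mem_closedBall, dist_eq_norm] at hz
      linarith [norm_nonneg x]
    have htame : Tame (fun x : Euc n => K * (C * (2 * (1 + ‖x‖)) ^ k + D * (2 * (1 + ‖x‖)) ^ l)) := by
      have hb := ((tame_const (n := n) 1).add tame_norm).const_mul 2
      exact (((hb.pow k).const_mul C).add ((hb.pow l).const_mul D)).const_mul K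
    refine (htame.of_le (hf.pd i).continuous fun x => ?_).bd
    refine le_trans ?_ (le_abs_self _)
    have := hest f hf x 1 (C * (2 * (1 + ‖x‖)) ^ k) (D * (2 * (1 + ‖x‖)) ^ l) one_pos
      (fun z hz' => (hC z).trans (by gcongr; exact hz x z hz'))
      (fun z hz' => (hD z).trans (by gcongr; exact hz x z hz')) i
    simpa using this
  | succ k ih =>
    intro f hf h1 h2
    refine ⟨h1.1, fun i => ih (hf.pd i) (h1.2 i) ?_⟩
    rw [lap_pd hf]
    exact h2.2 i

end tame

/-! ### Solutions of the system -/

/-- A positive slowly increasing solution of `Δu = uv²`, `Δv = vu²`. -/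
structure Sol {n : ℕ} (u v : Euc n → ℝ) : Prop where
  su : Sl u
  sv : Sl v
  pu : ∀ x, 0 < u x
  pv : ∀ x, 0 < v x
  eu : ∀ x, lap u x = u x * v x ^ 2
  ev : ∀ x, lap v x = v x * u x ^ 2

section sol
variable {n : ℕ} {u v : Euc n → ℝ}

lemma Sol.swap (h : Sol u v) : Sol v u := ⟨h.sv, h.su, h.pv, h.pu, h.ev, h.eu⟩

lemma Sol.resc (h : Sol u v) (c : Euc n) {r : ℝ} (hr : 0 < r) :
    Sol (fun y => r * u (c + r • y)) (fun y => r * v (c + r • y)) := by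
  refine ⟨(h.su.affine c r).const_mul r, (h.sv.affine c r).const_mul r,
    fun x => mul_pos hr (h.pu _), fun x => mul_pos hr (h.pv _), fun x => ?_, fun x => ?_⟩
  · rw [lap_const_mul (h.su.affine c r).sm, lap_affine h.su.sm, h.eu]; ring
  · rw [lap_const_mul (h.sv.affine c r).sm, lap_affine h.sv.sm, h.ev]; ring

/-- A positive smooth solution of linear growth is slowly increasing. -/
lemma Sol.of_growth (hn : 2 ≤ n) (hu : Sm u) (hv : Sm v) (pu : ∀ x, 0 < u x) (pv : ∀ x, 0 < v x)
    (eu : ∀ x, lap u x = u x * v x ^ 2) (ev : ∀ x, lap v x = v x * u x ^ 2) {C : ℝ}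
    (hC : ∀ x, u x + v x ≤ C * (1 + ‖x‖)) : Sol u v := by
  have key : ∀ k, TT k u ∧ TT k v := by
    intro k
    induction k with
    | zero =>
      refine ⟨⟨hu.continuous, C, 1, fun x => ?_⟩, ⟨hv.continuous, C, 1, fun x => ?_⟩⟩
      · rw [abs_of_pos (pu x), pow_one]; linarith [hC x, pv x]
      · rw [abs_of_pos (pv x), pow_one]; linarith [hC x, pu x]
    | succ k ih =>
      refine ⟨TT.step hn hu ih.1 ?_, TT.step hn hv ih.2 ?_⟩
      · rw [show lap u = fun x => u x * (v x * v x) from funext fun x => by rw [eu]; ring]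
        exact TT.mul hu (hv.mul hv) ih.1 (TT.mul hv hv ih.2 ih.2)
      · rw [show lap v = fun x => v x * (u x * u x) from funext fun x => by rw [ev]; ring]
        exact TT.mul hv (hu.mul hu) ih.2 (TT.mul hu hu ih.1 ih.1)
  exact ⟨⟨hu, fun k => (key k).1⟩, ⟨hv, fun k => (key k).2⟩, pu, pv, eu, ev⟩

end sol


/-! ### The standard Gaussian measure -/

section gaussian
variable {n : ℕ} {f g : Euc n → ℝ}

lemma integrable_gauss {b : ℝ} (hb : 0 < b) :
    Integrable (fun y : Euc n => Real.exp (-b * ‖y‖ ^ 2)) := by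
  have h := (GaussianFourier.integrable_cexp_neg_mul_sq_norm_add (V := Euc n) (b := (b : ℂ))
    (by simpa using hb) 0 0).re
  refine h.congr (Filter.Eventually.of_forall fun y => ?_)
  have : (-(b : ℂ) * (‖y‖ : ℂ) ^ 2 + 0 * ((inner ℝ (0 : Euc n) y : ℝ) : ℂ))
      = ((-b * ‖y‖ ^ 2 : ℝ) : ℂ) := by
    push_cast; ring
  simp only [this, ← Complex.ofReal_exp]
  exact Complex.ofReal_re _

/-- The density of the standard Gaussian measure. -/
noncomputable def gd (y : Euc n) : ℝ :=
  (∫ z : Euc n, Real.exp (-(1 / 2) * ‖z‖ ^ 2))⁻¹ * Real.exp (-(1 / 2) * ‖y‖ ^ 2)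

lemma gz_pos : 0 < ∫ z : Euc n, Real.exp (-(1 / 2) * ‖z‖ ^ 2) :=
  integral_exp_pos (integrable_gauss (by norm_num))

lemma gd_pos (y : Euc n) : 0 < gd y := mul_pos (inv_pos.2 gz_pos) (Real.exp_pos _)

lemma gd_sm : Sm (gd (n := n)) :=
  contDiff_const.mul (Real.contDiff_exp.comp (contDiff_const.mul (contDiff_norm_sq ℝ)))

lemma gd_integrable : Integrable (gd (n := n)) :=
  (integrable_gauss (by norm_num : (0 : ℝ) < 1 / 2)).const_mul _

lemma gd_integral : ∫ y : Euc n, gd y = 1 := by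
  unfold gd; rw [integral_const_mul]; exact inv_mul_cancel₀ gz_pos.ne'

/-- The standard Gaussian measure on `ℝⁿ`. -/
noncomputable def gam (n : ℕ) : Measure (Euc n) :=
  volume.withDensity fun y => ENNReal.ofReal (gd y)

instance : IsProbabilityMeasure (gam n) := by
  constructor
  rw [gam, withDensity_apply _ MeasurableSet.univ, Measure.restrict_univ,
    ← ofReal_integral_eq_lintegral_ofReal gd_integrable
      (Filter.Eventually.of_forall fun y => (gd_pos y).le), gd_integral]
  simp

lemma gam_integral (f : Euc n → ℝ) : ∫ y, f y ∂(gam n) = ∫ y, gd y * f y := by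
  rw [gam, integral_withDensity_eq_integral_toReal_smul
    gd_sm.continuous.measurable.ennreal_ofReal (Filter.Eventually.of_forall fun y => by simp)]
  simp [ENNReal.toReal_ofReal (gd_pos _).le]

lemma gam_integrable : Integrable f (gam n) ↔ Integrable (fun y => gd y * f y) := by
  rw [gam, integrable_withDensity_iff_integrable_smul'
    gd_sm.continuous.measurable.ennreal_ofReal (Filter.Eventually.of_forall fun y => by simp)]
  simp [ENNReal.toReal_ofReal (gd_pos _).le]

lemma gam_exp {b : ℝ} (hb : b < 1 / 2) :
    Integrable (fun y : Euc n => Real.exp (b * ‖y‖ ^ 2)) (gam n) := by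
  rw [gam_integrable]
  refine ((integrable_gauss (n := n) (b := 1 / 2 - b) (by linarith)).const_mul
    (∫ z : Euc n, Real.exp (-(1 / 2) * ‖z‖ ^ 2))⁻¹).congr (Filter.Eventually.of_forall fun y => ?_)
  simp only [gd]
  rw [mul_assoc, ← Real.exp_add]
  congr 2; ring

lemma Tame.int (hf : Tame f) : Integrable f (gam n) := by
  obtain ⟨C, k, hC⟩ := hf.bd
  have hC0 : 0 ≤ C := by simpa using (abs_nonneg _).trans (hC 0)
  refine ((gam_exp (n := n) (b := 1 / 4) (by norm_num)).const_mul
    (C * (k.factorial * Real.exp 2))).mono' hf.cont.aestronglyMeasurable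
    (Filter.Eventually.of_forall fun y => ?_)
  have h1 := Real.pow_div_factorial_le_exp (x := 1 + ‖y‖) (by positivity) k
  rw [div_le_iff₀ (by positivity)] at h1
  have h2 : Real.exp (1 + ‖y‖) ≤ Real.exp 2 * Real.exp (1 / 4 * ‖y‖ ^ 2) := by
    rw [← Real.exp_add]
    exact Real.exp_le_exp.2 (by nlinarith [sq_nonneg (‖y‖ - 2)])
  calc ‖f y‖ ≤ C * (1 + ‖y‖) ^ k := hC y
    _ ≤ C * (Real.exp 2 * Real.exp (1 / 4 * ‖y‖ ^ 2) * k.factorial) :=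
        mul_le_mul_of_nonneg_left (h1.trans (by gcongr)) hC0
    _ = _ := by ring

lemma Sl.int (hf : Sl f) : Integrable f (gam n) := hf.tame.int

lemma pd_gd (i : Fin n) (y : Euc n) : pd i gd y = - (y i * gd y) := by
  have h1 : pd i (fun y : Euc n => -(1 / 2) * ‖y‖ ^ 2) = fun y => - y i := by
    rw [pd_const_mul _ sl_norm_sq.diff, pd_norm_sq]; funext y; ring
  have h2 := pd_comp (i := i) Real.hasDerivAt_exp (sl_norm_sq (n := n)|>.const_mul (-(1 / 2))).diff
  rw [h1] at h2
  have h3 := pd_const_mul (i := i) (∫ z : Euc n, Real.exp (-(1 / 2) * ‖z‖ ^ 2))⁻¹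
    (Real.differentiable_exp.comp (sl_norm_sq (n := n)|>.const_mul (-(1 / 2))).diff)
  have h4 : pd i gd y = (∫ z : Euc n, Real.exp (-(1 / 2) * ‖z‖ ^ 2))⁻¹ *
      pd i (fun y => Real.exp (-(1 / 2) * ‖y‖ ^ 2)) y := congrFun h3 y
  rw [h4, h2, gd]; ring

/-- Gaussian integration by parts. -/
lemma gam_ibp (hf : Sl f) (i : Fin n) :
    ∫ y, pd i f y ∂(gam n) = ∫ y, y i * f y ∂(gam n) := by
  have h := integral_mul_fderiv_eq_neg_fderiv_mul_of_integrable (μ := volume) (f := f)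
    (g := gd (n := n)) (v := EuclideanSpace.single i (1 : ℝ)) ?_ ?_ ?_
    (fun x _ => hf.diff x) (fun x _ => gd_sm.diff x)
  · change ∫ y, f y * pd i gd y = - ∫ y, pd i f y * gd y at h
    rw [gam_integral, gam_integral]
    simp_rw [pd_gd] at h
    rw [← neg_eq_iff_eq_neg, ← integral_neg] at h
    calc ∫ y, gd y * pd i f y = ∫ y, pd i f y * gd y := by congr 1; funext y; ring
      _ = _ := by rw [← h]; congr 1; funext y; ring
  · refine (gam_integrable.1 (hf.pd i).int).congr (Filter.Eventually.of_forall fun y => ?_)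
    simp only [pd]; ring
  · refine (gam_integrable.1 ((sl_coord i).mul hf).int).neg.congr
      (Filter.Eventually.of_forall fun y => ?_)
    change - (gd y * (y i * f y)) = f y * pd i gd y
    rw [pd_gd]; ring
  · refine (gam_integrable.1 hf.int).congr (Filter.Eventually.of_forall fun y => ?_)
    simp only; ring

/-- A polynomial bound for `z ↦ y · ∇f(z)`, uniform along `z = c + s y`, `|s| ≤ ρ`. -/
lemma line_bound (hf : ∀ i, Tame (pd i f)) (c : Euc n) (ρ : ℝ) : ∃ b : Euc n → ℝ, Tame b ∧
    ∀ y s, |s| ≤ ρ → |∑ i, y i * pd i f (c + s • y)| ≤ b y := by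
  choose C k hC using fun i => (hf i).bd
  refine ⟨fun y => ∑ i, ‖y‖ * (C i * (1 + ‖c‖ + ρ * ‖y‖) ^ k i), Tame.sum _ fun i =>
    tame_norm.mul ((((tame_const (1 + ‖c‖)).add (tame_norm.const_mul ρ)).pow (k i)).const_mul
      (C i)), fun y s hs => ?_⟩
  refine (Finset.abs_sum_le_sum_abs _ _).trans (Finset.sum_le_sum fun i _ => ?_)
  have hC0 : 0 ≤ C i := by simpa using (abs_nonneg _).trans (hC i 0)
  rw [abs_mul]
  refine mul_le_mul (abs_coord_le y i) ((hC i _).trans ?_) (abs_nonneg _) (norm_nonneg _)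
  refine mul_le_mul_of_nonneg_left (pow_le_pow_left₀ (by positivity) ?_ _) hC0
  have := norm_add_le c (s • y)
  rw [norm_smul, Real.norm_eq_abs] at this
  nlinarith [norm_nonneg y]

lemma hasDerivAt_gam (hf : Sl f) (c : Euc n) (r : ℝ) :
    HasDerivAt (fun r : ℝ => ∫ y, f (c + r • y) ∂(gam n))
      (∫ y, ∑ i, y i * pd i f (c + r • y) ∂(gam n)) r := by
  obtain ⟨b, hb, hb'⟩ := line_bound (fun i => (hf.pd i).tame) c (|r| + 1)
  refine (hasDerivAt_integral_of_dominated_loc_of_deriv_le (𝕜 := ℝ) (E := ℝ)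
    (F := fun r y => f (c + r • y))
    (F' := fun r y => ∑ i, y i * pd i f (c + r • y)) (bound := b)
    (ball_mem_nhds r zero_lt_one) ?_ ?_ ?_ ?_ hb.int ?_).2
  · exact Filter.Eventually.of_forall fun s => (hf.affine c s).cont.aestronglyMeasurable
  · exact (hf.affine c r).int
  · exact (Sl.sum _ fun i => (sl_coord i).mul ((hf.pd i).affine c r)).cont.aestronglyMeasurable
  · refine Filter.Eventually.of_forall fun y s hs => hb' y s ?_
    rw [mem_ball, Real.dist_eq] at hs
    have := abs_sub_abs_le_abs_sub s r
    linarith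
  · exact Filter.Eventually.of_forall fun y s _ => hasDerivAt_line hf.diff c y s

lemma gam_coord_ibp (hf : Sl f) (c : Euc n) (r : ℝ) (i : Fin n) :
    ∫ y, y i * f (c + r • y) ∂(gam n) = r * ∫ y, pd i f (c + r • y) ∂(gam n) := by
  rw [← gam_ibp (hf.affine c r), pd_affine hf.diff, integral_const_mul]

lemma hasDerivAt_gam_lap (hf : Sl f) (c : Euc n) (r : ℝ) :
    HasDerivAt (fun r : ℝ => ∫ y, f (c + r • y) ∂(gam n))
      (r * ∫ y, lap f (c + r • y) ∂(gam n)) r := by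
  convert hasDerivAt_gam hf c r using 1
  rw [integral_finsetSum _ fun i _ => ((sl_coord i).mul ((hf.pd i).affine c r)).int]
  simp_rw [gam_coord_ibp (hf.pd _)]
  rw [← Finset.mul_sum, ← integral_finsetSum _ fun i _ => (((hf.pd i).pd i).affine c r).int]
  rfl

lemma gam_neg (f : Euc n → ℝ) : ∫ y, f (-y) ∂(gam n) = ∫ y, f y ∂(gam n) := by
  rw [gam_integral, gam_integral, ← integral_neg_eq_self (fun y => gd y * f y)]
  congr 1; funext y; simp [gd]

/-- Cauchy–Schwarz. -/
lemma gam_cs {f g : Euc n → ℝ} (hf : Tame f) (hg : Tame g) :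
    (∫ y, f y * g y ∂(gam n)) ^ 2 ≤ (∫ y, f y ^ 2 ∂(gam n)) * ∫ y, g y ^ 2 ∂(gam n) := by
  have key : ∀ t : ℝ, 0 ≤ (∫ y, g y ^ 2 ∂(gam n)) * (t * t) + (2 * ∫ y, f y * g y ∂(gam n)) * t
      + ∫ y, f y ^ 2 ∂(gam n) := by
    intro t
    have h : ∫ y, (f y + t * g y) ^ 2 ∂(gam n) = (∫ y, g y ^ 2 ∂(gam n)) * (t * t) +
        (2 * ∫ y, f y * g y ∂(gam n)) * t + ∫ y, f y ^ 2 ∂(gam n) := by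
      have e : ∀ y, (f y + t * g y) ^ 2 = (t * t) * g y ^ 2 + (2 * t) * (f y * g y) + f y ^ 2 := by
        intro y; ring
      simp_rw [e]
      rw [integral_add, integral_add, integral_const_mul, integral_const_mul]
      · ring
      · exact ((hg.pow 2).const_mul _).int
      · exact ((hf.mul hg).const_mul _).int
      · exact (((hg.pow 2).const_mul _).add ((hf.mul hg).const_mul _)).int
      · exact (hf.pow 2).int
    rw [← h]
    exact integral_nonneg fun y => sq_nonneg _
  have := discrim_le_zero key
  rw [discrim] at this
  nlinarith

lemma gam_jensen (hf : Tame f) : (∫ y, f y ∂(gam n)) ^ 2 ≤ ∫ y, f y ^ 2 ∂(gam n) := by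
  simpa using gam_cs hf (tame_const 1)

end gaussian


/-! ### The Gaussian Poincaré inequality with the gap of the second level -/

section poincare
variable {n : ℕ} {f g : Euc n → ℝ}

/-- The average of `w ↦ f (s z + c w)` in a Gaussian variable `w`. -/
noncomputable def Av (f : Euc n → ℝ) (s c : ℝ) (z : Euc n) : ℝ := ∫ w, f (s • z + c • w) ∂(gam n)

lemma av_bound (hf : Tame f) : ∃ (C : ℝ) (k : ℕ), 0 ≤ C ∧ ∀ s c : ℝ, |s| ≤ 1 → |c| ≤ 1 →
    ∀ z w : Euc n, |f (s • z + c • w)| ≤ C * (1 + ‖z‖) ^ k * (1 + ‖w‖) ^ k := by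
  obtain ⟨C, k, hC⟩ := hf.bd
  have hC0 : 0 ≤ C := by simpa using (abs_nonneg _).trans (hC 0)
  refine ⟨C, k, hC0, fun s c hs hc z w => (hC _).trans ?_⟩
  rw [mul_assoc, ← mul_pow]
  refine mul_le_mul_of_nonneg_left (pow_le_pow_left₀ (by positivity) ?_ k) hC0
  have h1 := norm_add_le (s • z) (c • w)
  rw [norm_smul, norm_smul, Real.norm_eq_abs, Real.norm_eq_abs] at h1
  nlinarith [norm_nonneg z, norm_nonneg w, mul_nonneg (norm_nonneg z) (norm_nonneg w)]

lemma tame_one_add (k : ℕ) : Tame (fun y : Euc n => (1 + ‖y‖) ^ k) :=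
  ((tame_const 1).add tame_norm).pow k

lemma av_tame (hf : Tame f) : ∃ b : Euc n → ℝ, Tame b ∧ (∀ z, 0 ≤ b z) ∧ ∀ s c : ℝ, |s| ≤ 1 →
    |c| ≤ 1 → ∀ z, |Av f s c z| ≤ b z := by
  obtain ⟨C, k, hC0, hC⟩ := av_bound hf
  refine ⟨fun z => (C * ∫ w, (1 + ‖w‖) ^ k ∂(gam n)) * (1 + ‖z‖) ^ k,
    (tame_one_add k).const_mul _, fun z => ?_, fun s c hs hc z => ?_⟩
  · have : 0 ≤ ∫ w : Euc n, (1 + ‖w‖) ^ k ∂(gam n) := integral_nonneg fun w => by positivity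
    positivity
  · have h1 : ‖Av f s c z‖ ≤ ∫ w, C * (1 + ‖z‖) ^ k * (1 + ‖w‖) ^ k ∂(gam n) :=
      norm_integral_le_of_norm_le ((tame_one_add k).const_mul _).int
        (Filter.Eventually.of_forall fun w => hC s c hs hc z w)
    rw [integral_const_mul, Real.norm_eq_abs] at h1
    linarith

lemma av_cont (hf : Tame f) {s c : ℝ} (hs : |s| ≤ 1) (hc : |c| ≤ 1) : Continuous (Av f s c) := by
  obtain ⟨C, k, hC0, hC⟩ := av_bound hf
  have hfc := hf.cont
  refine continuous_iff_continuousAt.2 fun z => ?_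
  refine continuousAt_of_dominated (bound := fun w => C * (2 + ‖z‖) ^ k * (1 + ‖w‖) ^ k)
    (Filter.Eventually.of_forall fun z => (hf.affine (s • z) c).cont.aestronglyMeasurable) ?_
    ((tame_one_add k).const_mul _).int ?_
  · filter_upwards [ball_mem_nhds z one_pos] with z' hz'
    refine Filter.Eventually.of_forall fun w => (hC s c hs hc z' w).trans ?_
    have : 1 + ‖z'‖ ≤ 2 + ‖z‖ := by
      have := norm_le_norm_add_norm_sub' z' z
      rw [mem_ball, dist_eq_norm] at hz'
      linarith
    gcongr
  · exact Filter.Eventually.of_forall fun w => by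
      have : Continuous fun z => f (s • z + c • w) := by fun_prop
      exact this.continuousAt

lemma av_tame' (hf : Tame f) {s c : ℝ} (hs : |s| ≤ 1) (hc : |c| ≤ 1) : Tame (Av f s c) := by
  obtain ⟨b, hb, hb0, h⟩ := av_tame hf
  exact hb.of_le (av_cont hf hs hc) fun z => (h s c hs hc z).trans (le_abs_self _)

lemma av_line (hf : Sl f) {s c : ℝ} (hs : |s| ≤ 1) (hc : |c| ≤ 1) (i : Fin n) (z : Euc n) :
    HasLineDerivAt ℝ (Av f s c) (s * Av (pd i f) s c z) z (EuclideanSpace.single i 1) := by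
  obtain ⟨C, k, hC0, hC⟩ := av_bound (hf.pd i).tame
  have h := (hasDerivAt_integral_of_dominated_loc_of_deriv_le (𝕜 := ℝ) (E := ℝ) (μ := gam n)
    (F := fun t w => f (s • (z + t • EuclideanSpace.single i 1) + c • w))
    (F' := fun t w => s * pd i f (s • (z + t • EuclideanSpace.single i 1) + c • w))
    (bound := fun w => C * (2 + ‖z‖) ^ k * (1 + ‖w‖) ^ k) (x₀ := 0)
    (ball_mem_nhds 0 zero_lt_one) ?_ ?_ ?_ ?_ ((tame_one_add k).const_mul _).int ?_).2
  · simpa [HasLineDerivAt, Av, integral_const_mul] using h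
  · exact Filter.Eventually.of_forall fun t => (hf.affine _ c).cont.aestronglyMeasurable
  · exact (hf.affine _ c).int
  · exact (((hf.pd i).affine _ c).const_mul s).cont.aestronglyMeasurable
  · refine Filter.Eventually.of_forall fun w t ht => ?_
    rw [norm_mul, Real.norm_eq_abs, Real.norm_eq_abs]
    have h1 : 1 + ‖z + t • (EuclideanSpace.single i (1 : ℝ) : Euc n)‖ ≤ 2 + ‖z‖ := by
      have := norm_add_le z (t • (EuclideanSpace.single i (1 : ℝ) : Euc n))
      rw [norm_smul] at this
      simp at this ht
      linarith
    have h2 := hC s c hs hc (z + t • (EuclideanSpace.single i (1 : ℝ) : Euc n)) w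
    have h3 : C * (1 + ‖z + t • (EuclideanSpace.single i (1 : ℝ) : Euc n)‖) ^ k * (1 + ‖w‖) ^ k
        ≤ C * (2 + ‖z‖) ^ k * (1 + ‖w‖) ^ k := by gcongr
    have h4 := mul_le_mul_of_nonneg_right hs (abs_nonneg
      (pd i f (s • (z + t • (EuclideanSpace.single i (1 : ℝ) : Euc n)) + c • w)))
    linarith
  · refine Filter.Eventually.of_forall fun w t _ => ?_
    have h1 := hasDerivAt_line hf.diff (s • z + c • w)
      (s • (EuclideanSpace.single i (1 : ℝ) : Euc n)) t
    have e : ∀ t : ℝ, s • (z + t • (EuclideanSpace.single i (1 : ℝ) : Euc n)) + c • w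
        = s • z + c • w + t • (s • (EuclideanSpace.single i (1 : ℝ) : Euc n)) := by
      intro t; rw [smul_add, smul_comm]; abel
    simp_rw [e]
    refine HasDerivAt.congr_deriv h1 ?_
    rw [Finset.sum_eq_single i]
    · simp
    · intro j _ hj; simp [hj]
    · simp

/-- Gaussian integration by parts for functions that are differentiable along one direction. -/
lemma gam_ibp_line {f f' : Euc n → ℝ} (i : Fin n) (hf : Tame f) (hf' : Tame f')
    (h : ∀ z, HasLineDerivAt ℝ f (f' z) z (EuclideanSpace.single i 1)) :
    ∫ z, z i * f z ∂(gam n) = ∫ z, f' z ∂(gam n) := by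
  have hg : ∀ z : Euc n, HasLineDerivAt ℝ gd (- (z i * gd z)) z (EuclideanSpace.single i 1) := by
    intro z
    rw [← pd_gd]
    exact (gd_sm.diff z).hasFDerivAt.hasLineDerivAt _
  have key := integral_bilinear_hasLineDerivAt_right_eq_neg_left_of_integrable (μ := volume)
    (B := ContinuousLinearMap.mul ℝ ℝ) (f := f) (f' := f') (g := gd)
    (g' := fun z => - (z i * gd z)) ?_ ?_ ?_ (fun z _ => h z) (fun z _ => hg z)
  · simp only [ContinuousLinearMap.mul_apply'] at key
    rw [gam_integral, gam_integral]
    rw [← neg_eq_iff_eq_neg, ← integral_neg] at key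
    calc _ = ∫ z, -(f z * -(z i * gd z)) := by congr 1; funext z; ring
      _ = ∫ z, f' z * gd z := key
      _ = _ := by congr 1; funext z; ring
  · refine (gam_integrable.1 hf'.int).congr (Filter.Eventually.of_forall fun y => ?_)
    simp only [ContinuousLinearMap.mul_apply']; ring
  · refine (gam_integrable.1 ((tame_coord i).mul hf).int).neg.congr
      (Filter.Eventually.of_forall fun y => ?_)
    simp only [ContinuousLinearMap.mul_apply', Pi.neg_apply]; ring
  · refine (gam_integrable.1 hf.int).congr (Filter.Eventually.of_forall fun y => ?_)
    simp only [ContinuousLinearMap.mul_apply']; ring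

lemma av_deriv (hf : Sl f) (ω : ℝ) (z : Euc n) :
    HasDerivAt (fun ω : ℝ => Av f (Real.sin ω) (Real.cos ω) z)
      (∑ i, (Real.cos ω * (z i * Av (pd i f) (Real.sin ω) (Real.cos ω) z)
        - Real.sin ω * Real.cos ω * Av (pd i (pd i f)) (Real.sin ω) (Real.cos ω) z)) ω := by
  choose C k hC0 hC using fun i => av_bound (hf.pd i).tame
  have hb : Tame (fun w : Euc n => ∑ i, (‖z‖ + ‖w‖) * (C i * (1 + ‖z‖) ^ k i * (1 + ‖w‖) ^ k i)) :=
    Tame.sum _ fun i => ((tame_const ‖z‖).add tame_norm).mul ((tame_one_add (k i)).const_mul _)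
  have h := (hasDerivAt_integral_of_dominated_loc_of_deriv_le (𝕜 := ℝ) (E := ℝ) (μ := gam n)
    (F := fun ω w => f (Real.sin ω • z + Real.cos ω • w))
    (F' := fun ω w => ∑ i, (Real.cos ω * z i - Real.sin ω * w i) *
      pd i f (Real.sin ω • z + Real.cos ω • w))
    (x₀ := ω) Filter.univ_mem ?_ ?_ ?_ ?_ hb.int ?_).2
  · refine HasDerivAt.congr_deriv h ?_
    rw [integral_finsetSum]
    · refine Finset.sum_congr rfl fun i _ => ?_
      have e : ∀ w : Euc n, (Real.cos ω * z i - Real.sin ω * w i) *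
          pd i f (Real.sin ω • z + Real.cos ω • w) = Real.cos ω * z i *
          pd i f (Real.sin ω • z + Real.cos ω • w)
          - Real.sin ω * (w i * pd i f (Real.sin ω • z + Real.cos ω • w)) := by intro w; ring
      simp_rw [e]
      rw [integral_sub (((hf.pd i).affine _ _).const_mul _).int
        (((sl_coord i).mul ((hf.pd i).affine _ _)).const_mul _).int, integral_const_mul,
        integral_const_mul, gam_coord_ibp (hf.pd i)]
      simp only [Av]; ring
    · intro i _
      exact (((sl_const _).sub ((sl_coord i).const_mul _)).mul ((hf.pd i).affine _ _)).int
  · exact Filter.Eventually.of_forall fun t => (hf.affine _ _).cont.aestronglyMeasurable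
  · exact (hf.affine _ _).int
  · exact (Sl.sum _ fun i => ((sl_const _).sub ((sl_coord i).const_mul _)).mul
      ((hf.pd i).affine _ _)).cont.aestronglyMeasurable
  · refine Filter.Eventually.of_forall fun w t _ => ?_
    refine (Finset.abs_sum_le_sum_abs _ _).trans (Finset.sum_le_sum fun i _ => ?_)
    rw [abs_mul]
    refine mul_le_mul ?_ (hC i _ _ (Real.abs_sin_le_one _) (Real.abs_cos_le_one _) z w)
      (abs_nonneg _) (by positivity)
    refine (abs_sub _ _).trans ?_
    rw [abs_mul, abs_mul]
    have h1 := mul_le_mul (Real.abs_cos_le_one t) (abs_coord_le z i) (abs_nonneg _) zero_le_one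
    have h2 := mul_le_mul (Real.abs_sin_le_one t) (abs_coord_le w i) (abs_nonneg _) zero_le_one
    linarith
  · refine Filter.Eventually.of_forall fun w t _ => ?_
    have h1 : HasDerivAt (fun t : ℝ => Real.sin t • z + Real.cos t • w)
        (Real.cos t • z + (-Real.sin t) • w) t :=
      ((Real.hasDerivAt_sin t).smul_const z).add ((Real.hasDerivAt_cos t).smul_const w)
    have h2 := (hf.diff _).hasFDerivAt.comp_hasDerivAt t h1
    rw [fderiv_eq_sum] at h2
    refine HasDerivAt.congr_deriv h2 ?_
    refine Finset.sum_congr rfl fun i _ => ?_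
    simp; left; ring

/-- The squared norm `∫ |E f(sin ω z + cos ω w)|² dγ(z)`. -/
noncomputable def Aq (f : Euc n → ℝ) (ω : ℝ) : ℝ :=
  ∫ z, Av f (Real.sin ω) (Real.cos ω) z ^ 2 ∂(gam n)

lemma aq_nonneg (f : Euc n → ℝ) (ω : ℝ) : 0 ≤ Aq f ω := integral_nonneg fun _ => sq_nonneg _

lemma aq_deriv (hf : Sl f) (ω : ℝ) :
    HasDerivAt (Aq f) (2 * Real.sin ω * Real.cos ω * ∑ i, Aq (pd i f) ω) ω := by
  have hs := Real.abs_sin_le_one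
  have hc := Real.abs_cos_le_one
  have ht : ∀ {g : Euc n → ℝ}, Sl g → ∀ ω, Tame (Av g (Real.sin ω) (Real.cos ω)) :=
    fun hg ω => av_tame' hg.tame (hs ω) (hc ω)
  obtain ⟨b0, hb0, hp0, h0⟩ := av_tame hf.tame
  choose b1 hb1 hp1 h1 using fun i => av_tame (hf.pd i).tame
  choose b2 hb2 hp2 h2 using fun i => av_tame ((hf.pd i).pd i).tame
  have hb : Tame (fun z : Euc n => 2 * b0 z * ∑ i, (‖z‖ * b1 i z + b2 i z)) :=
    (hb0.const_mul 2).mul (Tame.sum _ fun i => (tame_norm.mul (hb1 i)).add (hb2 i))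
  have h := (hasDerivAt_integral_of_dominated_loc_of_deriv_le (𝕜 := ℝ) (E := ℝ) (μ := gam n)
    (F := fun ω z => Av f (Real.sin ω) (Real.cos ω) z ^ 2)
    (F' := fun ω z => 2 * Av f (Real.sin ω) (Real.cos ω) z *
      ∑ i, (Real.cos ω * (z i * Av (pd i f) (Real.sin ω) (Real.cos ω) z)
        - Real.sin ω * Real.cos ω * Av (pd i (pd i f)) (Real.sin ω) (Real.cos ω) z))
    (x₀ := ω) Filter.univ_mem ?_ ?_ ?_ ?_ hb.int ?_).2
  · refine HasDerivAt.congr_deriv h ?_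
    have e : ∀ z : Euc n, 2 * Av f (Real.sin ω) (Real.cos ω) z *
      ∑ i, (Real.cos ω * (z i * Av (pd i f) (Real.sin ω) (Real.cos ω) z)
        - Real.sin ω * Real.cos ω * Av (pd i (pd i f)) (Real.sin ω) (Real.cos ω) z)
      = ∑ i, (2 * Real.cos ω * (z i * (Av f (Real.sin ω) (Real.cos ω) z *
          Av (pd i f) (Real.sin ω) (Real.cos ω) z)) - 2 * Real.sin ω * Real.cos ω *
          (Av f (Real.sin ω) (Real.cos ω) z * Av (pd i (pd i f)) (Real.sin ω) (Real.cos ω) z)) := by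
      intro z; rw [Finset.mul_sum]
      exact Finset.sum_congr rfl fun i _ => by ring
    simp_rw [e]
    rw [integral_finsetSum, Finset.mul_sum]
    · refine Finset.sum_congr rfl fun i _ => ?_
      rw [integral_sub, integral_const_mul, integral_const_mul]
      · have hib := gam_ibp_line (f := fun z => Av f (Real.sin ω) (Real.cos ω) z *
            Av (pd i f) (Real.sin ω) (Real.cos ω) z)
          (f' := fun z => Real.sin ω * Av (pd i f) (Real.sin ω) (Real.cos ω) z *
            Av (pd i f) (Real.sin ω) (Real.cos ω) z + Av f (Real.sin ω) (Real.cos ω) z *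
            (Real.sin ω * Av (pd i (pd i f)) (Real.sin ω) (Real.cos ω) z)) i
          ((ht hf ω).mul (ht (hf.pd i) ω))
          ((((ht (hf.pd i) ω).const_mul _).mul (ht (hf.pd i) ω)).add
            ((ht hf ω).mul ((ht ((hf.pd i).pd i) ω).const_mul _))) ?_
        · rw [hib, integral_add]
          · have e1 : ∀ z : Euc n, Real.sin ω * Av (pd i f) (Real.sin ω) (Real.cos ω) z *
              Av (pd i f) (Real.sin ω) (Real.cos ω) z
              = Real.sin ω * Av (pd i f) (Real.sin ω) (Real.cos ω) z ^ 2 := fun z => by ring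
            have e2 : ∀ z : Euc n, Av f (Real.sin ω) (Real.cos ω) z *
              (Real.sin ω * Av (pd i (pd i f)) (Real.sin ω) (Real.cos ω) z)
              = Real.sin ω * (Av f (Real.sin ω) (Real.cos ω) z *
                Av (pd i (pd i f)) (Real.sin ω) (Real.cos ω) z) := fun z => by ring
            simp_rw [e1, e2, integral_const_mul]
            rw [Aq]; ring
          · exact (((ht (hf.pd i) ω).const_mul _).mul (ht (hf.pd i) ω)).int
          · exact ((ht hf ω).mul ((ht ((hf.pd i).pd i) ω).const_mul _)).int
        · intro z
          have a1 := av_line hf (hs ω) (hc ω) i z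
          have a2 := av_line (hf.pd i) (hs ω) (hc ω) i z
          have a3 := HasDerivAt.fun_mul a1 a2
          simpa [HasLineDerivAt] using a3
      · exact (((tame_coord i).mul ((ht hf ω).mul (ht (hf.pd i) ω))).const_mul _).int
      · exact (((ht hf ω).mul (ht ((hf.pd i).pd i) ω)).const_mul _).int
    · intro i _
      exact ((((tame_coord i).mul ((ht hf ω).mul (ht (hf.pd i) ω))).const_mul _).sub
        (((ht hf ω).mul (ht ((hf.pd i).pd i) ω)).const_mul _)).int
  · exact Filter.Eventually.of_forall fun t => ((ht hf t).pow 2).cont.aestronglyMeasurable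
  · exact ((ht hf ω).pow 2).int
  · exact (((ht hf ω).const_mul 2).mul (Tame.sum _ fun i =>
      (((tame_coord i).mul (ht (hf.pd i) ω)).const_mul _).sub
        ((ht ((hf.pd i).pd i) ω).const_mul _))).cont.aestronglyMeasurable
  · refine Filter.Eventually.of_forall fun z t _ => ?_
    rw [Real.norm_eq_abs, abs_mul, abs_mul, abs_two]
    refine mul_le_mul (mul_le_mul_of_nonneg_left (h0 _ _ (hs t) (hc t) z) zero_le_two) ?_
      (abs_nonneg _) (mul_nonneg zero_le_two (hp0 z))
    refine (Finset.abs_sum_le_sum_abs _ _).trans (Finset.sum_le_sum fun i _ => ?_)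
    refine (abs_sub _ _).trans (add_le_add ?_ ?_)
    · rw [abs_mul, abs_mul]
      calc _ ≤ 1 * (‖z‖ * b1 i z) := mul_le_mul (hc t) (mul_le_mul (abs_coord_le z i)
            (h1 i _ _ (hs t) (hc t) z) (abs_nonneg _) (norm_nonneg _)) (by positivity) zero_le_one
        _ = _ := one_mul _
    · rw [abs_mul, abs_mul]
      calc _ ≤ (1 * 1) * b2 i z := mul_le_mul (mul_le_mul (hs t) (hc t) (abs_nonneg _) zero_le_one)
            (h2 i _ _ (hs t) (hc t) z) (abs_nonneg _) (by norm_num)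
        _ = _ := by ring
  · refine Filter.Eventually.of_forall fun z t _ => ?_
    have := (av_deriv hf t z).fun_pow 2
    simpa using this

/-- `2 Var f ≤ ∫ |∇f|² + |∫ ∇f|²`: the Poincaré inequality with the spectral gap between the
first and the second level of the Ornstein–Uhlenbeck operator. -/
lemma poincare_gap (hf : Sl f) :
    2 * ((∫ y, f y ^ 2 ∂(gam n)) - (∫ y, f y ∂(gam n)) ^ 2)
      ≤ ∑ i, (∫ y, pd i f y ^ 2 ∂(gam n)) + ∑ i, (∫ y, pd i f y ∂(gam n)) ^ 2 := by
  set B : ℝ → ℝ := fun ω => ∑ i, Aq (pd i f) ω with hB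
  set C : ℝ → ℝ := fun ω => ∑ i, ∑ j, Aq (pd j (pd i f)) ω with hC
  set D : ℝ → ℝ := fun ω => ∑ i, ∑ j, ∑ k, Aq (pd k (pd j (pd i f))) ω with hD
  have hD0 : ∀ ω, 0 ≤ D ω := fun ω => Finset.sum_nonneg fun i _ => Finset.sum_nonneg fun j _ =>
    Finset.sum_nonneg fun k _ => aq_nonneg _ _
  have dA : ∀ ω, HasDerivAt (Aq f) (2 * Real.sin ω * Real.cos ω * B ω) ω := aq_deriv hf
  have dB : ∀ ω, HasDerivAt B (2 * Real.sin ω * Real.cos ω * C ω) ω := by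
    intro ω; simp only [hC, Finset.mul_sum]
    refine HasDerivAt.fun_sum fun i _ => ?_
    rw [← Finset.mul_sum]; exact aq_deriv (hf.pd i) ω
  have dC : ∀ ω, HasDerivAt C (2 * Real.sin ω * Real.cos ω * D ω) ω := by
    intro ω; simp only [hD, Finset.mul_sum]
    refine HasDerivAt.fun_sum fun i _ => HasDerivAt.fun_sum fun j _ => ?_
    rw [← Finset.mul_sum]; exact aq_deriv ((hf.pd i).pd j) ω
  have dS : ∀ ω, HasDerivAt (fun ω => Real.sin ω ^ 2) (2 * Real.sin ω * Real.cos ω) ω := by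
    intro ω; simpa using (Real.hasDerivAt_sin ω).fun_pow 2
  have mono : ∀ (G G' : ℝ → ℝ), (∀ ω, HasDerivAt G (G' ω) ω) →
      (∀ ω ∈ Icc 0 (Real.pi / 2), 0 ≤ G' ω) → ∀ ω ∈ Icc 0 (Real.pi / 2), G 0 ≤ G ω := by
    intro G G' hG hG' ω hω
    refine monotoneOn_of_deriv_nonneg (convex_Icc 0 (Real.pi / 2))
      (fun t _ => (hG t).continuousAt.continuousWithinAt)
      (fun t _ => (hG t).differentiableAt.differentiableWithinAt) ?_
      ⟨le_rfl, by positivity⟩ hω hω.1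
    intro t ht
    rw [(hG t).deriv]; exact hG' t (interior_subset ht)
  have hsc : ∀ ω ∈ Icc 0 (Real.pi / 2), 0 ≤ Real.sin ω * Real.cos ω := by
    intro ω hω
    exact mul_nonneg (Real.sin_nonneg_of_nonneg_of_le_pi hω.1 (by linarith [hω.2, Real.pi_pos]))
      (Real.cos_nonneg_of_mem_Icc ⟨by linarith [hω.1, Real.pi_pos], hω.2⟩)
  have hR : ∀ ω ∈ Icc 0 (Real.pi / 2), 0 ≤ B 0 - B ω + Real.sin ω ^ 2 * C ω := by
    have := mono (fun ω => B 0 - B ω + Real.sin ω ^ 2 * C ω)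
      (fun ω => 0 - 2 * Real.sin ω * Real.cos ω * C ω + (2 * Real.sin ω * Real.cos ω * C ω +
        Real.sin ω ^ 2 * (2 * Real.sin ω * Real.cos ω * D ω)))
      (fun ω => ((hasDerivAt_const ω (B 0)).sub (dB ω)).add ((dS ω).mul (dC ω))) ?_
    · intro ω hω; simpa using this ω hω
    · intro ω hω
      have := mul_nonneg (mul_nonneg (sq_nonneg (Real.sin ω)) (hsc ω hω)) (hD0 ω)
      nlinarith
  have hQ := mono (fun ω => 1 / 2 * (Real.sin ω ^ 2 * (B 0 + B ω)) - (Aq f ω - Aq f 0))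
      (fun ω => 1 / 2 * (2 * Real.sin ω * Real.cos ω * (B 0 + B ω) +
        Real.sin ω ^ 2 * (0 + 2 * Real.sin ω * Real.cos ω * C ω))
        - (2 * Real.sin ω * Real.cos ω * B ω - 0))
      (fun ω => (((dS ω).mul ((hasDerivAt_const ω (B 0)).add (dB ω))).const_mul (1 / 2)).sub
        ((dA ω).sub (hasDerivAt_const ω (Aq f 0)))) ?_ (Real.pi / 2) ⟨by positivity, le_rfl⟩
  · have hav0 : ∀ g : Euc n → ℝ, Aq g 0 = (∫ y, g y ∂(gam n)) ^ 2 := by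
      intro g; simp [Aq, Av]
    have hav1 : ∀ g : Euc n → ℝ, Aq g (Real.pi / 2) = ∫ y, g y ^ 2 ∂(gam n) := by
      intro g; simp [Aq, Av]
    simp only [Real.sin_zero, Real.sin_pi_div_two, hB, hav0, hav1] at hQ
    linarith
  · intro ω hω
    have := mul_nonneg (hsc ω hω) (hR ω hω)
    nlinarith

lemma poincare (hf : Sl f) :
    (∫ y, f y ^ 2 ∂(gam n)) - (∫ y, f y ∂(gam n)) ^ 2 ≤ ∑ i, (∫ y, pd i f y ^ 2 ∂(gam n)) := by
  have h := poincare_gap hf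
  have h2 : ∑ i, (∫ y, pd i f y ∂(gam n)) ^ 2 ≤ ∑ i, ∫ y, pd i f y ^ 2 ∂(gam n) :=
    Finset.sum_le_sum fun i _ => gam_jensen (hf.pd i).tame
  linarith

end poincare


/-! ### Gaussian averages of a solution and their evolution in the radius -/

section dynamics
variable {n : ℕ} {u v : Euc n → ℝ} {c : Euc n} {r : ℝ}

/-- `E u²` at scale `r` around `c`. -/
noncomputable def Uf (u : Euc n → ℝ) (c : Euc n) (r : ℝ) : ℝ := ∫ y, u (c + r • y) ^ 2 ∂(gam n)
/-- `E |∇u|²` at scale `r` around `c`. -/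
noncomputable def Gf (u : Euc n → ℝ) (c : Euc n) (r : ℝ) : ℝ :=
  ∫ y, ∑ i, pd i u (c + r • y) ^ 2 ∂(gam n)
/-- `E u²v²` at scale `r` around `c`. -/
noncomputable def Wf (u v : Euc n → ℝ) (c : Euc n) (r : ℝ) : ℝ :=
  ∫ y, (u (c + r • y) * v (c + r • y)) ^ 2 ∂(gam n)
/-- `E (y·∇u)²` at scale `r` around `c`. -/
noncomputable def Pf (u : Euc n → ℝ) (c : Euc n) (r : ℝ) : ℝ :=
  ∫ y, (∑ i, y i * pd i u (c + r • y)) ^ 2 ∂(gam n)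

lemma Wf_comm : Wf u v c r = Wf v u c r := by simp only [Wf, mul_comm]
lemma Uf_nonneg : 0 ≤ Uf u c r := integral_nonneg fun _ => sq_nonneg _
lemma Gf_nonneg : 0 ≤ Gf u c r := integral_nonneg fun _ => Finset.sum_nonneg fun _ _ => sq_nonneg _
lemma Wf_nonneg : 0 ≤ Wf u v c r := integral_nonneg fun _ => sq_nonneg _
lemma Pf_nonneg : 0 ≤ Pf u c r := integral_nonneg fun _ => sq_nonneg _

lemma lap_sq_sol (h : Sol u v) (x : Euc n) :
    lap (fun y => u y ^ 2) x = 2 * (∑ i, pd i u x ^ 2 + (u x * v x) ^ 2) := by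
  rw [lap_sq h.su.sm, h.eu]; ring

lemma Uf_deriv (h : Sol u v) : HasDerivAt (Uf u c) (2 * r * (Gf u c r + Wf u v c r)) r := by
  refine HasDerivAt.congr_deriv (hasDerivAt_gam_lap (h.su.pow 2) c r) ?_
  simp_rw [lap_sq_sol h]
  rw [integral_const_mul, integral_add, Gf, Wf]
  · ring
  · exact (Sl.sum _ fun i => ((h.su.pd i).pow 2).affine c r).int
  · exact (((h.su.mul h.sv).pow 2).affine c r).int

lemma Uf_cauchy (h : Sol u v) : (r * (Gf u c r + Wf u v c r)) ^ 2 ≤ Uf u c r * Pf u c r := by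
  have h1 := (Uf_deriv (r := r) (c := c) h).unique (hasDerivAt_gam (h.su.pow 2) c r)
  have h2 := gam_cs (h.su.affine c r).tame
    (Sl.sum Finset.univ fun i => (sl_coord i).mul ((h.su.pd i).affine c r)).tame
  have e : ∀ y : Euc n, ∑ i, y i * pd i (fun z => u z ^ 2) (c + r • y)
      = 2 * (u (c + r • y) * ∑ i, y i * pd i u (c + r • y)) := by
    intro y
    simp_rw [pd_sq h.su.diff, Finset.mul_sum]
    exact Finset.sum_congr rfl fun i _ => by ring
  simp_rw [e] at h1
  rw [integral_const_mul] at h1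
  rw [Uf, Pf]
  convert h2 using 2
  linarith

/-- Radial integration by parts against a symmetric rank one tensor. -/
lemma radial_ibp {f g : Euc n → ℝ} (hf : Sl f) (hg : Sl g) (i k : Fin n) :
    r * ∫ y, y k * pd i (fun z => f z * g z) (c + r • y) ∂(gam n)
      = ∫ y, (y i * f (c + r • y)) * (y k * g (c + r • y)) ∂(gam n)
        - if i = k then ∫ y, f (c + r • y) * g (c + r • y) ∂(gam n) else 0 := by
  have h1 := gam_ibp ((sl_coord k).mul ((hf.mul hg).affine c r)) i
  rw [pd_mul (sl_coord k).diff ((hf.mul hg).affine c r).diff, pd_coord,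
    pd_affine (hf.mul hg).diff, integral_add] at h1
  · have e1 : ∀ y : Euc n, y k * (r * pd i (fun z => f z * g z) (c + r • y))
        = r * (y k * pd i (fun z => f z * g z) (c + r • y)) := fun y => by ring
    have e2 : ∀ y : Euc n, (y i * f (c + r • y)) * (y k * g (c + r • y))
        = y i * (y k * (f (c + r • y) * g (c + r • y))) := fun y => by ring
    simp_rw [e1] at h1
    simp_rw [e2]
    rw [integral_const_mul, integral_const_mul] at h1
    rw [← h1]
    by_cases hik : i = k
    · simp [hik]
    · simp [hik, Ne.symm hik]
  · exact (((hf.mul hg).affine c r).const_mul _).int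
  · exact ((sl_coord k).mul ((((hf.mul hg).pd i).affine c r).const_mul r)).int

lemma radial_sum (hu : Sl u) :
    r * ∑ k, ∑ i, ∫ y, y k * pd i (fun z => pd i u z * pd k u z) (c + r • y) ∂(gam n)
      = Pf u c r - Gf u c r := by
  have hd := fun i => (hu.pd i).affine c r
  have hy := fun i => (sl_coord i).mul (hd i)
  have e : ∀ y : Euc n, (∑ i, y i * pd i u (c + r • y)) ^ 2 =
      ∑ k, ∑ i, (y i * pd i u (c + r • y)) * (y k * pd k u (c + r • y)) := by
    intro y; rw [sq, Finset.mul_sum]; simp_rw [Finset.sum_mul]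
  rw [Pf, Gf]
  simp_rw [e, Finset.mul_sum, radial_ibp (hu.pd _) (hu.pd _), Finset.sum_sub_distrib]
  congr 1
  · rw [integral_finsetSum _ fun k _ => (Sl.sum _ fun i => (hy i).mul (hy k)).int]
    refine Finset.sum_congr rfl fun k _ => ?_
    rw [integral_finsetSum _ fun i _ => ((hy i).mul (hy k)).int]
  · rw [integral_finsetSum _ fun k _ => ((hd k).pow 2).int]
    refine Finset.sum_congr rfl fun k _ => ?_
    simp [sq]

lemma energy_deriv (h : Sol u v) :
    HasDerivAt (fun r => r ^ 2 * (Gf u c r + Gf v c r + Wf u v c r))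
      (2 * r * (Pf u c r + Pf v c r + Wf u v c r)) r := by
  set e : Euc n → ℝ := fun z => ∑ i, pd i u z ^ 2 + ∑ i, pd i v z ^ 2 + (u z * v z) ^ 2 with he
  have s1 : Sl fun z => ∑ i, pd i u z ^ 2 := Sl.sum _ fun i => (h.su.pd i).pow 2
  have s2 : Sl fun z => ∑ i, pd i v z ^ 2 := Sl.sum _ fun i => (h.sv.pd i).pow 2
  have s3 : Sl fun z => (u z * v z) ^ 2 := (h.su.mul h.sv).pow 2
  have hsl : Sl e := (s1.add s2).add s3
  have hE : ∀ r, ∫ y, e (c + r • y) ∂(gam n) = Gf u c r + Gf v c r + Wf u v c r := by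
    intro r
    simp only [he]
    rw [integral_add ((s1.affine c r).add (s2.affine c r)).int (s3.affine c r).int,
      integral_add (s1.affine c r).int (s2.affine c r).int]; rfl
  have hu2 : ∀ k, Sl fun z => ∑ i, pd i (fun z => pd i u z * pd k u z) z :=
    fun k => Sl.sum _ fun i => ((h.su.pd i).mul (h.su.pd k)).pd i
  have hv2 : ∀ k, Sl fun z => ∑ i, pd i (fun z => pd i v z * pd k v z) z :=
    fun k => Sl.sum _ fun i => ((h.sv.pd i).mul (h.sv.pd k)).pd i
  have aux : ∀ {w : Euc n → ℝ}, Sl w → ∀ k z, ∑ i, pd i (fun z => pd i w z * pd k w z) z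
      = lap w z * pd k w z + ∑ i, pd i w z * pd k (pd i w) z := by
    intro w hw k z
    rw [lap_eq, Finset.sum_mul, ← Finset.sum_add_distrib]
    refine Finset.sum_congr rfl fun i _ => ?_
    rw [pd_mul (hw.pd i).diff (hw.pd k).diff, pd_comm hw.sm k i]
  have hpd : ∀ k z, pd k e z = 2 * ((∑ i, pd i (fun z => pd i u z * pd k u z) z)
      + ∑ i, pd i (fun z => pd i v z * pd k v z) z) := by
    intro k z
    rw [aux h.su, aux h.sv, h.eu, h.ev, he, pd_add (s1.add s2).diff s3.diff,
      pd_add s1.diff s2.diff, pd_sq (h.su.mul h.sv).diff, pd_mul h.su.diff h.sv.diff,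
      pd_sum (f := fun i z => pd i u z ^ 2) _ fun i => ((h.su.pd i).pow 2).diff,
      pd_sum (f := fun i z => pd i v z ^ 2) _ fun i => ((h.sv.pd i).pow 2).diff]
    simp_rw [pd_sq (h.su.pd _).diff, pd_sq (h.sv.pd _).diff, mul_assoc, ← Finset.mul_sum]
    ring
  have h1 := hasDerivAt_gam hsl c r
  simp only [hE] at h1
  have h2 : r * ∫ y, ∑ k, y k * pd k e (c + r • y) ∂(gam n)
      = 2 * ((Pf u c r - Gf u c r) + (Pf v c r - Gf v c r)) := by
    rw [← radial_sum h.su, ← radial_sum h.sv]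
    simp_rw [hpd]
    rw [integral_finsetSum _ fun k _ => ((sl_coord k).mul
      ((((hu2 k).add (hv2 k)).const_mul 2).affine c r)).int]
    have e1 : ∀ k, ∫ y : Euc n, y k * (2 * ((∑ i, pd i (fun z => pd i u z * pd k u z) (c + r • y))
      + ∑ i, pd i (fun z => pd i v z * pd k v z) (c + r • y))) ∂(gam n)
      = 2 * ((∑ i, ∫ y, y k * pd i (fun z => pd i u z * pd k u z) (c + r • y) ∂(gam n))
       + ∑ i, ∫ y, y k * pd i (fun z => pd i v z * pd k v z) (c + r • y) ∂(gam n)) := by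
      intro k
      rw [← integral_finsetSum _ fun i _ => ((sl_coord k).mul
          ((((h.su.pd i).mul (h.su.pd k)).pd i).affine c r)).int,
        ← integral_finsetSum _ fun i _ => ((sl_coord k).mul
          ((((h.sv.pd i).mul (h.sv.pd k)).pd i).affine c r)).int, ← integral_add, ←
        integral_const_mul]
      · congr 1; funext y; simp_rw [← Finset.mul_sum]; ring
      · exact (Sl.sum _ fun i => (sl_coord k).mul
          ((((h.su.pd i).mul (h.su.pd k)).pd i).affine c r)).int
      · exact (Sl.sum _ fun i => (sl_coord k).mul
          ((((h.sv.pd i).mul (h.sv.pd k)).pd i).affine c r)).int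
    simp_rw [e1]
    rw [← Finset.mul_sum, Finset.sum_add_distrib]; ring
  have h3 := ((hasDerivAt_id r).fun_pow 2).fun_mul h1
  refine HasDerivAt.congr_deriv h3 ?_
  simp only [id]
  norm_num
  linear_combination r * h2

end dynamics


/-! ### The frequency function -/

lemma mono_Ici {f f' : ℝ → ℝ} {a r s : ℝ} (hd : ∀ r ≥ a, HasDerivAt f (f' r) r)
    (h0 : ∀ r ≥ a, 0 ≤ f' r) (har : a ≤ r) (hrs : r ≤ s) : f r ≤ f s := by
  refine monotoneOn_of_deriv_nonneg (convex_Ici a)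
    (fun t ht => (hd t ht).continuousAt.continuousWithinAt)
    (fun t ht => (hd t (interior_subset ht)).differentiableAt.differentiableWithinAt) ?_
    har (har.trans hrs) hrs
  intro t ht
  rw [(hd t (interior_subset ht)).deriv]; exact h0 t (interior_subset ht)

section frequency
variable {n : ℕ} {u v : Euc n → ℝ} {c : Euc n} {r s : ℝ}

/-- `E (u² + v²)`. -/
noncomputable def Hf (u v : Euc n → ℝ) (c : Euc n) (r : ℝ) : ℝ := Uf u c r + Uf v c r
/-- The Almgren type frequency `r² E(|∇u|² + |∇v|² + u²v²) / E(u² + v²)`. -/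
noncomputable def Nf (u v : Euc n → ℝ) (c : Euc n) (r : ℝ) : ℝ :=
  r ^ 2 * (Gf u c r + Gf v c r + Wf u v c r) / Hf u v c r
/-- The relative interaction energy `r² E(u²v²) / E(u² + v²)`. -/
noncomputable def tf (u v : Euc n → ℝ) (c : Euc n) (r : ℝ) : ℝ := r ^ 2 * Wf u v c r / Hf u v c r
/-- The excess over `2` of the logarithmic derivative of `E u²`, divided by two. -/
noncomputable def xf (u v : Euc n → ℝ) (c : Euc n) (r : ℝ) : ℝ :=
  r ^ 2 * (Gf u c r + Wf u v c r) / Uf u c r - 1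
/-- Half of `r` times the derivative of the frequency. -/
noncomputable def nuf (u v : Euc n → ℝ) (c : Euc n) (r : ℝ) : ℝ :=
  r ^ 2 * (Pf u c r + Pf v c r + Wf u v c r) / Hf u v c r
    - Nf u v c r * (r ^ 2 * (Gf u c r + Gf v c r + 2 * Wf u v c r) / Hf u v c r)

lemma Uf_zero : Uf u c 0 = u c ^ 2 := by simp [Uf]

lemma Uf_mono (h : Sol u v) (hr : 0 ≤ r) (hrs : r ≤ s) : Uf u c r ≤ Uf u c s :=
  mono_Ici (a := 0) (fun t _ => Uf_deriv h) (fun t ht =>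
    mul_nonneg (by linarith) (add_nonneg Gf_nonneg Wf_nonneg)) hr hrs

lemma Uf_ge (h : Sol u v) (hr : 0 ≤ r) : u c ^ 2 ≤ Uf u c r := by
  rw [← Uf_zero]; exact Uf_mono h le_rfl hr

lemma Uf_pos (h : Sol u v) (hr : 0 ≤ r) : 0 < Uf u c r :=
  (pow_pos (h.pu c) 2).trans_le (Uf_ge h hr)

lemma Hf_pos (h : Sol u v) (hr : 0 ≤ r) : 0 < Hf u v c r :=
  add_pos (Uf_pos h hr) (Uf_pos h.swap hr)

lemma Hf_mono (h : Sol u v) (hr : 0 ≤ r) (hrs : r ≤ s) : Hf u v c r ≤ Hf u v c s :=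
  add_le_add (Uf_mono h hr hrs) (Uf_mono h.swap hr hrs)

lemma Hf_deriv (h : Sol u v) :
    HasDerivAt (Hf u v c) (2 * r * (Gf u c r + Gf v c r + 2 * Wf u v c r)) r := by
  refine ((Uf_deriv h).fun_add (Uf_deriv h.swap)).congr_deriv ?_
  rw [Wf_comm (u := v)]; ring

lemma Nf_nonneg (h : Sol u v) (hr : 0 ≤ r) : 0 ≤ Nf u v c r :=
  div_nonneg (mul_nonneg (sq_nonneg _) (add_nonneg (add_nonneg Gf_nonneg Gf_nonneg) Wf_nonneg))
    (Hf_pos h hr).le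

lemma tf_nonneg (h : Sol u v) (hr : 0 ≤ r) : 0 ≤ tf u v c r :=
  div_nonneg (mul_nonneg (sq_nonneg _) Wf_nonneg) (Hf_pos h hr).le

lemma tf_le_Nf (h : Sol u v) (hr : 0 ≤ r) : tf u v c r ≤ Nf u v c r :=
  div_le_div_of_nonneg_right (mul_le_mul_of_nonneg_left
    (by linarith [Gf_nonneg (u := u) (c := c) (r := r), Gf_nonneg (u := v) (c := c) (r := r)])
    (sq_nonneg _)) (Hf_pos h hr).le

lemma xf_ge (h : Sol u v) (hr : 0 ≤ r) : -1 ≤ xf u v c r := by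
  have : 0 ≤ r ^ 2 * (Gf u c r + Wf u v c r) / Uf u c r :=
    div_nonneg (mul_nonneg (sq_nonneg _) (add_nonneg Gf_nonneg Wf_nonneg)) (Uf_pos h hr).le
  rw [xf]; linarith

lemma Hf_deriv' (h : Sol u v) (hr : 0 < r) :
    HasDerivAt (Hf u v c) (2 / r * (Nf u v c r + tf u v c r) * Hf u v c r) r := by
  refine (Hf_deriv h).congr_deriv ?_
  have := (Hf_pos h hr.le (c := c)).ne'
  rw [Nf, tf]; field_simp; ring

lemma Uf_deriv' (h : Sol u v) (hr : 0 < r) :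
    HasDerivAt (Uf u c) (2 / r * (1 + xf u v c r) * Uf u c r) r := by
  refine (Uf_deriv h).congr_deriv ?_
  have := (Uf_pos h hr.le (c := c)).ne'
  rw [xf]; field_simp; ring

lemma Nf_deriv (h : Sol u v) (hr : 0 < r) :
    HasDerivAt (Nf u v c) (2 / r * nuf u v c r) r := by
  have hH := (Hf_pos h hr.le (c := c)).ne'
  refine ((energy_deriv h).fun_div (Hf_deriv h) hH).congr_deriv ?_
  rw [nuf, Nf]; field_simp

lemma px_add_qy (h : Sol u v) (hr : 0 ≤ r) :
    Uf u c r / Hf u v c r * xf u v c r + Uf v c r / Hf u v c r * xf v u c r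
      = Nf u v c r - 1 + tf u v c r := by
  have h1 := (Uf_pos h hr (c := c)).ne'
  have h2 := (Uf_pos h.swap hr (c := c)).ne'
  have h3 := (Hf_pos h hr (c := c)).ne'
  rw [xf, xf, Nf, tf, Wf_comm (u := v)]
  field_simp
  rw [Hf]; ring

lemma nuf_ge (h : Sol u v) (hr : 0 ≤ r) :
    tf u v c r + Uf u c r / Hf u v c r * (Uf v c r / Hf u v c r) *
      (xf u v c r - xf v u c r) ^ 2 ≤ nuf u v c r := by
  have h1 := Uf_pos h hr (c := c)
  have h2 := Uf_pos h.swap hr (c := c)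
  have h3 := Hf_pos h hr (c := c)
  have c1 := Uf_cauchy h (c := c) (r := r)
  have c2 := Uf_cauchy h.swap (c := c) (r := r)
  rw [Wf_comm (u := v)] at c2
  rw [xf, xf, nuf, Nf, tf, Wf_comm (u := v)]
  rw [Hf] at h3 ⊢
  have hG1 : 0 ≤ Gf u c r := Gf_nonneg
  have hG2 : 0 ≤ Gf v c r := Gf_nonneg
  have hW : 0 ≤ Wf u v c r := Wf_nonneg
  generalize Uf u c r = U at *
  generalize Uf v c r = V at *
  generalize Gf u c r = G at *
  generalize Gf v c r = K at *
  generalize Pf u c r = P at *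
  generalize Pf v c r = Q at *
  generalize Wf u v c r = W at *
  have d1 : (r * (G + W)) ^ 2 / U ≤ P := by rw [div_le_iff₀ h1]; linarith
  have d2 : (r * (K + W)) ^ 2 / V ≤ Q := by rw [div_le_iff₀ h2]; linarith
  have d3 : r ^ 2 * ((r * (G + W)) ^ 2 / U + (r * (K + W)) ^ 2 / V + W) / (U + V)
      ≤ r ^ 2 * (P + Q + W) / (U + V) := by gcongr
  have d4 : 0 ≤ r ^ 2 * W * (r ^ 2 * (G + K + 2 * W)) / (U + V) ^ 2 := by positivity
  have e : r ^ 2 * ((r * (G + W)) ^ 2 / U + (r * (K + W)) ^ 2 / V + W) / (U + V)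
      - r ^ 2 * (G + K + W) / (U + V) * (r ^ 2 * (G + K + 2 * W) / (U + V))
      = r ^ 2 * W / (U + V) + U / (U + V) * (V / (U + V)) *
      (r ^ 2 * (G + W) / U - 1 - (r ^ 2 * (K + W) / V - 1)) ^ 2
      + r ^ 2 * W * (r ^ 2 * (G + K + 2 * W)) / (U + V) ^ 2 := by
    field_simp; ring
  linarith

lemma nuf_ge_tf (h : Sol u v) (hr : 0 ≤ r) : tf u v c r ≤ nuf u v c r := by
  have h1 := Uf_pos h hr (c := c)
  have h2 := Uf_pos h.swap hr (c := c)
  have h3 := Hf_pos h hr (c := c)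
  have : 0 ≤ Uf u c r / Hf u v c r * (Uf v c r / Hf u v c r) *
      (xf u v c r - xf v u c r) ^ 2 := by positivity
  linarith [nuf_ge h hr (c := c)]

lemma nuf_nonneg (h : Sol u v) (hr : 0 ≤ r) : 0 ≤ nuf u v c r :=
  (tf_nonneg h hr).trans (nuf_ge_tf h hr)

lemma Nf_mono (h : Sol u v) (hr : 0 < r) (hrs : r ≤ s) : Nf u v c r ≤ Nf u v c s :=
  mono_Ici (a := r) (fun _ ht => Nf_deriv h (hr.trans_le ht)) (fun _ ht =>
    mul_nonneg (div_nonneg zero_le_two (hr.le.trans ht)) (nuf_nonneg h (hr.le.trans ht))) le_rfl hrs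

lemma Hf_growth (h : Sol u v) {C : ℝ} (hC : ∀ x, u x + v x ≤ C * (1 + ‖x‖)) (c : Euc n) :
    ∃ K > 0, ∀ r ≥ 1, Hf u v c r ≤ K * r ^ 2 := by
  have hC0 : 0 ≤ C := by
    have := hC 0; simp at this; linarith [h.pu 0, h.pv 0]
  have ht : Tame (fun y : Euc n => (C * (1 + ‖c‖ + ‖y‖)) ^ 2) :=
    (((tame_const (1 + ‖c‖)).add tame_norm).const_mul C).pow 2
  have hK : 0 ≤ ∫ y : Euc n, (C * (1 + ‖c‖ + ‖y‖)) ^ 2 ∂(gam n) :=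
    integral_nonneg fun y => sq_nonneg _
  refine ⟨(∫ y : Euc n, (C * (1 + ‖c‖ + ‖y‖)) ^ 2 ∂(gam n)) + 1, by linarith, fun r hr => ?_⟩
  have h1 : Hf u v c r ≤ ∫ y : Euc n, (C * (1 + ‖c‖ + ‖y‖)) ^ 2 * r ^ 2 ∂(gam n) := by
    rw [Hf, Uf, Uf, ← integral_add ((h.su.affine c r).pow 2).int ((h.sv.affine c r).pow 2).int]
    refine integral_mono (((h.su.affine c r).pow 2).add ((h.sv.affine c r).pow 2)).int
      (ht.int.mul_const _) fun y => ?_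
    have hb : u (c + r • y) + v (c + r • y) ≤ C * (1 + ‖c‖ + ‖y‖) * r := by
      refine (hC _).trans ?_
      rw [mul_assoc]
      refine mul_le_mul_of_nonneg_left ?_ hC0
      have := norm_add_le c (r • y)
      rw [norm_smul, Real.norm_eq_abs, abs_of_pos (by linarith)] at this
      nlinarith [norm_nonneg c, norm_nonneg y]
    have := h.pu (c + r • y)
    have := h.pv (c + r • y)
    simp only
    rw [← mul_pow]
    nlinarith
  rw [integral_mul_const] at h1
  nlinarith [sq_nonneg r]

/-- A linear growth condition forces the frequency to be at most one. -/
lemma Nf_le_one (h : Sol u v) {C : ℝ} (hC : ∀ x, u x + v x ≤ C * (1 + ‖x‖)) (hr : 0 < r) :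
    Nf u v c r ≤ 1 := by
  by_contra hN
  push Not at hN
  obtain ⟨K, hK, hKH⟩ := Hf_growth h hC c
  set N := Nf u v c r with hNdef
  have hpos : ∀ t ≥ r, 0 < t := fun _ ht => hr.trans_le ht
  have hmono : ∀ t ≥ r, Real.log (Hf u v c r) - 2 * N * Real.log r
      ≤ Real.log (Hf u v c t) - 2 * N * Real.log t := by
    intro t ht
    refine mono_Ici (a := r) (f := fun t => Real.log (Hf u v c t) - 2 * N * Real.log t)
      (f' := fun t => 2 / t * (Nf u v c t + tf u v c t) - 2 * N * t⁻¹) ?_ ?_ le_rfl ht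
    · intro t ht
      have hH := (Hf_pos h (hpos t ht).le (c := c)).ne'
      refine (((Hf_deriv' h (hpos t ht)).log hH).fun_sub
        ((Real.hasDerivAt_log (hpos t ht).ne').const_mul (2 * N))).congr_deriv ?_
      field_simp
    · intro t ht
      have h1 := Nf_mono h hr ht (c := c)
      have h2 := tf_nonneg h (hpos t ht).le (c := c)
      have : 2 / t * (Nf u v c t + tf u v c t) - 2 * N * t⁻¹
        = 2 / t * (Nf u v c t + tf u v c t - N) := by field_simp
      rw [this]
      exact mul_nonneg (div_nonneg zero_le_two (hpos t ht).le) (by linarith)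
  have hlog := Real.tendsto_log_atTop
  obtain ⟨t, ht1, ht2, ht3⟩ := ((hlog.eventually_gt_atTop
    ((Real.log K - (Real.log (Hf u v c r) - 2 * N * Real.log r)) / (2 * N - 2))).and
    ((Filter.eventually_ge_atTop r).and (Filter.eventually_ge_atTop 1))).exists
  rw [div_lt_iff₀ (by linarith)] at ht1
  have h1 := hmono t ht2
  have h2 := Real.log_le_log (Hf_pos h (hpos t ht2).le) (hKH t ht3)
  rw [Real.log_mul hK.ne' (by positivity), Real.log_pow] at h2
  push_cast at h2
  linarith

lemma Hf_quad (h : Sol u v) {C : ℝ} (hC : ∀ x, u x + v x ≤ C * (1 + ‖x‖)) (hr : 0 < r)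
    (hrs : r ≤ s) : Hf u v c s / s ^ 4 ≤ Hf u v c r / r ^ 4 := by
  rw [← neg_le_neg_iff]
  refine mono_Ici (a := r) (f := fun t => -(Hf u v c t / t ^ 4))
    (f' := fun t => 2 / t ^ 5 * (2 - Nf u v c t - tf u v c t) * Hf u v c t) ?_ ?_ le_rfl hrs
  · intro t ht
    have ht0 : 0 < t := hr.trans_le ht
    refine (((Hf_deriv' h ht0).fun_div (hasDerivAt_pow 4 t) (by positivity)).fun_neg).congr_deriv ?_
    field_simp; ring
  · intro t ht
    have ht0 : 0 < t := hr.trans_le ht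
    have := Nf_le_one h hC ht0 (c := c)
    have := tf_le_Nf h ht0.le (c := c)
    have := Hf_pos h ht0.le (c := c)
    exact mul_nonneg (mul_nonneg (by positivity) (by linarith)) this.le

/-- `H / r²` is monotone up to the factor `exp N ≤ e`. -/
lemma Hf_lin (h : Sol u v) {C : ℝ} (hC : ∀ x, u x + v x ≤ C * (1 + ‖x‖)) (hr : 0 < r)
    (hrs : r ≤ s) : Hf u v c s / s ^ 2 ≤ Real.exp 1 * (Hf u v c r / r ^ 2) := by
  have key : Nf u v c r - (Real.log (Hf u v c r) - 2 * Real.log r)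
      ≤ Nf u v c s - (Real.log (Hf u v c s) - 2 * Real.log s) := by
    refine mono_Ici (a := r) (f := fun t => Nf u v c t - (Real.log (Hf u v c t) - 2 * Real.log t))
      (f' := fun t => 2 / t * (nuf u v c t - (Nf u v c t + tf u v c t - 1))) ?_ ?_ le_rfl hrs
    · intro t ht
      have ht0 : 0 < t := hr.trans_le ht
      have hH := (Hf_pos h ht0.le (c := c)).ne'
      refine ((Nf_deriv h ht0).fun_sub (((Hf_deriv' h ht0).log hH).fun_sub
        ((Real.hasDerivAt_log ht0.ne').const_mul 2))).congr_deriv ?_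
      field_simp
    · intro t ht
      have ht0 : 0 < t := hr.trans_le ht
      have := Nf_le_one h hC ht0 (c := c)
      have := nuf_ge_tf h ht0.le (c := c)
      exact mul_nonneg (by positivity) (by linarith)
  have hs : 0 < s := hr.trans_le hrs
  have hHr := Hf_pos h hr.le (c := c)
  have hHs := Hf_pos h hs.le (c := c)
  have h1 := Nf_le_one h hC hs (c := c)
  have h2 := Nf_nonneg h hr.le (c := c)
  rw [← Real.log_le_log_iff (by positivity) (by positivity), Real.log_mul (by positivity)
    (by positivity), Real.log_exp, Real.log_div (by positivity) (by positivity),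
    Real.log_div (by positivity) (by positivity), Real.log_pow, Real.log_pow]
  push_cast
  linarith

end frequency


/-! ### Comparison of Gaussian averages and a weak monotonicity formula -/

section compare
variable {n : ℕ} {u v : Euc n → ℝ} {c x : Euc n} {r s : ℝ}

/-- `E u` at scale `r` around `c`. -/
noncomputable def af (u : Euc n → ℝ) (c : Euc n) (r : ℝ) : ℝ := ∫ y, u (c + r • y) ∂(gam n)

lemma gd_le (a z : Euc n) :
    gd z ≤ Real.exp (2 / 3 * ‖a‖ ^ 2) * gd (a + (1 / 2 : ℝ) • z) := by
  rw [gd, gd, mul_left_comm, ← Real.exp_add]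
  refine mul_le_mul_of_nonneg_left (Real.exp_le_exp.2 ?_) (inv_nonneg.2 gz_pos.le)
  have h1 : ‖a + (1 / 2 : ℝ) • z‖ ^ 2 ≤ 4 / 3 * ‖a‖ ^ 2 + ‖z‖ ^ 2 := by
    have h := norm_add_le a ((1 / 2 : ℝ) • z)
    rw [norm_smul, Real.norm_eq_abs, abs_of_pos (by norm_num)] at h
    have h2 := pow_le_pow_left₀ (norm_nonneg _) h 2
    nlinarith [sq_nonneg (2 * ‖a‖ - 3 * ‖z‖)]
  linarith

lemma compare {F : Euc n → ℝ} (hF : Tame F) (h0 : ∀ x, 0 ≤ F x) (hr : 0 < r) :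
    ∫ y, F (x + r • y) ∂(gam n)
      ≤ 2 ^ n * Real.exp (‖x - c‖ ^ 2 / (6 * r ^ 2)) * ∫ y, F (c + (2 * r) • y) ∂(gam n) := by
  set a : Euc n := (1 / (2 * r)) • (x - c) with ha
  have hint : Integrable (fun y => gd y * F (c + (2 * r) • y)) :=
    gam_integrable.1 (hF.affine c (2 * r)).int
  have e1 : ∀ z : Euc n, c + (2 * r) • (a + (1 / 2 : ℝ) • z) = x + r • z := by
    intro z
    rw [ha, smul_add, smul_smul, smul_smul, mul_one_div_cancel (by positivity), one_smul,
      show 2 * r * (1 / 2) = r by ring]; abel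
  have hint2 : Integrable (fun z : Euc n => gd (a + (1 / 2 : ℝ) • z) * F (x + r • z)) := by
    have := (hint.comp_add_left a).comp_smul (R := (1 / 2 : ℝ)) (by norm_num)
    simpa only [e1] using this
  have hval : ∫ y, gd y * F (c + (2 * r) • y)
      = (2 ^ n)⁻¹ * ∫ z : Euc n, gd (a + (1 / 2 : ℝ) • z) * F (x + r • z) := by
    rw [← integral_add_left_eq_self (fun y => gd y * F (c + (2 * r) • y)) a]
    have h2 := Measure.integral_comp_smul (volume : Measure (Euc n))
      (fun z => gd (a + z) * F (c + (2 * r) • (a + z))) (1 / 2 : ℝ)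
    simp only [e1, finrank_euclideanSpace, Fintype.card_fin, smul_eq_mul] at h2
    rw [h2, abs_of_pos (by positivity)]
    simp
  rw [gam_integral, gam_integral, hval, ← integral_const_mul, ← integral_const_mul]
  refine integral_mono (gam_integrable.1 (hF.affine x r).int) ((hint2.const_mul _).const_mul _)
    fun z => ?_
  have h3 := gd_le a z
  have h4 : 2 / 3 * ‖a‖ ^ 2 = ‖x - c‖ ^ 2 / (6 * r ^ 2) := by
    rw [ha, norm_smul, Real.norm_eq_abs, abs_of_pos (by positivity)]
    field_simp; ring
  rw [h4] at h3
  have h5 : (2 : ℝ) ^ n * Real.exp (‖x - c‖ ^ 2 / (6 * r ^ 2)) *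
      ((2 ^ n)⁻¹ * (gd (a + (1 / 2 : ℝ) • z) * F (x + r • z)))
      = Real.exp (‖x - c‖ ^ 2 / (6 * r ^ 2)) * gd (a + (1 / 2 : ℝ) • z) * F (x + r • z) := by
    field_simp
  simp only [h5]
  exact mul_le_mul_of_nonneg_right h3 (h0 _)

lemma af_zero : af u c 0 = u c := by simp [af]

lemma af_deriv (h : Sol u v) :
    HasDerivAt (af u c) (r * ∫ y, u (c + r • y) * v (c + r • y) ^ 2 ∂(gam n)) r := by
  have := hasDerivAt_gam_lap h.su c r
  simp only [h.eu] at this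
  exact this

lemma af_mono (h : Sol u v) (hr : 0 ≤ r) (hrs : r ≤ s) : af u c r ≤ af u c s :=
  mono_Ici (a := 0) (fun _ _ => af_deriv h) (fun _ ht => mul_nonneg ht (integral_nonneg fun _ =>
    mul_nonneg (h.pu _).le (sq_nonneg _))) hr hrs

lemma af_ge (h : Sol u v) (hr : 0 ≤ r) : u c ≤ af u c r := by
  rw [← af_zero (u := u)]; exact af_mono h le_rfl hr

lemma af_pos (h : Sol u v) (hr : 0 ≤ r) : 0 < af u c r := (h.pu c).trans_le (af_ge h hr)

lemma af_sq_le (h : Sol u v) : af u c r ^ 2 ≤ Uf u c r := gam_jensen (h.su.affine c r).tame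

lemma sub_point (h : Sol u v) (hr : 0 < r) :
    u x ≤ 2 ^ n * Real.exp (‖x - c‖ ^ 2 / (6 * r ^ 2)) * af u c (2 * r) :=
  (af_ge h hr.le).trans (compare h.su.tame (fun y => (h.pu y).le) hr)

lemma Uf_poincare (h : Sol u v) : Uf u c r - af u c r ^ 2 ≤ r ^ 2 * Gf u c r := by
  have h1 := poincare (h.su.affine c r)
  refine h1.trans (le_of_eq ?_)
  rw [Gf, integral_finsetSum _ fun i _ => (((h.su.pd i).affine c r).pow 2).int, Finset.mul_sum]
  refine Finset.sum_congr rfl fun i _ => ?_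
  rw [pd_affine h.su.diff, ← integral_const_mul]
  congr 1; funext y; ring

/-- Once `r² E u E v ≥ 1`, the product `E u² E v²` grows at a definite rate. -/
lemma weak_growth (h : Sol u v) (hr : 0 ≤ r) (hab : 1 ≤ r ^ 2 * (af u c r * af v c r)) :
    1 / 4 ≤ (1 + xf u v c r) + (1 + xf v u c r) := by
  have hU := Uf_pos h hr (c := c)
  have hV := Uf_pos h.swap hr (c := c)
  have ha := af_pos h hr (c := c)
  have hb := af_pos h.swap hr (c := c)
  have p1 := Uf_poincare h (c := c) (r := r)
  have p2 := Uf_poincare h.swap (c := c) (r := r)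
  have hG1 : 0 ≤ Gf u c r := Gf_nonneg
  have hG2 : 0 ≤ Gf v c r := Gf_nonneg
  have hW : 0 ≤ Wf u v c r := Wf_nonneg
  have su := h.su.affine c r
  have sv := h.sv.affine c r
  -- the covariance is controlled by the two variances
  have hcov : (∫ y, (u (c + r • y) - af u c r) * (v (c + r • y) - af v c r) ∂(gam n)) ^ 2
      ≤ (Uf u c r - af u c r ^ 2) * (Uf v c r - af v c r ^ 2) := by
    have hvar : ∀ {w : Euc n → ℝ}, Sl w → ∫ y, (w (c + r • y) - af w c r) ^ 2 ∂(gam n)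
        = Uf w c r - af w c r ^ 2 := by
      intro w hw
      have s := hw.affine c r
      have e : ∀ y : Euc n, (w (c + r • y) - af w c r) ^ 2
          = w (c + r • y) ^ 2 - 2 * af w c r * w (c + r • y) + af w c r ^ 2 := fun y => by ring
      simp_rw [e]
      rw [integral_add ((s.pow 2).sub (s.const_mul _)).int (integrable_const _),
        integral_sub (s.pow 2).int (s.const_mul _).int, integral_const_mul]
      simp only [integral_const, probReal_univ, one_smul]
      rw [show ∫ y, w (c + r • y) ∂(gam n) = af w c r from rfl, Uf]; ring
    rw [← hvar h.su, ← hvar h.sv]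
    exact gam_cs (su.sub (sl_const _)).tame (sv.sub (sl_const _)).tame
  have hcov' : ∫ y, (u (c + r • y) - af u c r) * (v (c + r • y) - af v c r) ∂(gam n)
      = (∫ y, u (c + r • y) * v (c + r • y) ∂(gam n)) - af u c r * af v c r := by
    have e : ∀ y : Euc n, (u (c + r • y) - af u c r) * (v (c + r • y) - af v c r)
        = u (c + r • y) * v (c + r • y) - (af v c r * u (c + r • y)) - (af u c r * v (c + r • y))
          + af u c r * af v c r := fun y => by ring
    simp_rw [e]
    rw [integral_add (((su.mul sv).sub (su.const_mul _)).sub (sv.const_mul _)).int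
      (integrable_const _), integral_sub ((su.mul sv).sub (su.const_mul _)).int
      (sv.const_mul _).int, integral_sub (su.mul sv).int (su.const_mul _).int, integral_const_mul,
      integral_const_mul]
    simp only [integral_const, probReal_univ, one_smul]
    rw [show ∫ y, u (c + r • y) ∂(gam n) = af u c r from rfl,
      show ∫ y, v (c + r • y) ∂(gam n) = af v c r from rfl]; ring
  have hWm : (∫ y, u (c + r • y) * v (c + r • y) ∂(gam n)) ^ 2 ≤ Wf u v c r :=
    gam_jensen (su.mul sv).tame
  rw [hcov'] at hcov
  rw [xf, xf, Wf_comm (u := v)]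
  have e1 : 0 ≤ r ^ 2 * (Gf u c r + Wf u v c r) / Uf u c r := by positivity
  have e2 : 0 ≤ r ^ 2 * (Gf v c r + Wf u v c r) / Uf v c r := by positivity
  by_cases h1 : Uf u c r / 4 ≤ Uf u c r - af u c r ^ 2
  · have : 1 / 4 ≤ r ^ 2 * (Gf u c r + Wf u v c r) / Uf u c r := by
      rw [le_div_iff₀ hU]; nlinarith [mul_nonneg (sq_nonneg r) hW]
    linarith
  by_cases h2 : Uf v c r / 4 ≤ Uf v c r - af v c r ^ 2
  · have : 1 / 4 ≤ r ^ 2 * (Gf v c r + Wf u v c r) / Uf v c r := by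
      rw [le_div_iff₀ hV]; nlinarith [mul_nonneg (sq_nonneg r) hW]
    linarith
  push Not at h1 h2
  have j1 := af_sq_le h (c := c) (r := r)
  have j2 := af_sq_le h.swap (c := c) (r := r)
  generalize Uf u c r = U at *
  generalize Uf v c r = V at *
  generalize Gf u c r = G at *
  generalize Gf v c r = K at *
  generalize Wf u v c r = W at *
  generalize af u c r = a at *
  generalize af v c r = b at *
  generalize (∫ y, u (c + r • y) * v (c + r • y) ∂(gam n)) = m at *
  have v1 : U - a ^ 2 ≤ a ^ 2 / 3 := by linarith
  have v2 : V - b ^ 2 ≤ b ^ 2 / 3 := by linarith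
  have hm : (m - a * b) ^ 2 ≤ (a * b / 3) ^ 2 :=
    hcov.trans ((mul_le_mul v1 v2 (by linarith) (by positivity)).trans (le_of_eq (by ring)))
  have hm2 := abs_le_of_sq_le_sq hm (by positivity)
  have hm3 : 2 / 3 * (a * b) ≤ m := by linarith [(abs_le.1 hm2).1]
  have hm4 : (2 / 3 * (a * b)) ^ 2 ≤ W := (pow_le_pow_left₀ (by positivity) hm3 2).trans hWm
  have f1 : r ^ 2 * b ^ 2 / 3 ≤ r ^ 2 * (G + W) / U := by
    rw [le_div_iff₀ hU]
    have : b ^ 2 / 3 * U ≤ G + W := by nlinarith [sq_nonneg b]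
    nlinarith [mul_le_mul_of_nonneg_left this (sq_nonneg r)]
  have f2 : r ^ 2 * a ^ 2 / 3 ≤ r ^ 2 * (K + W) / V := by
    rw [le_div_iff₀ hV]
    have : a ^ 2 / 3 * V ≤ K + W := by nlinarith [sq_nonneg a]
    nlinarith [mul_le_mul_of_nonneg_left this (sq_nonneg r)]
  nlinarith [mul_nonneg (sq_nonneg r) (sq_nonneg (a - b))]

/-- A lower bound for `E u² E v²` at a point where `u v` is not small. -/
lemma weak_acf (h : Sol u v) (hr : 0 < r) (hz : 1 ≤ r ^ 2 * (u c * v c)) :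
    (u c * v c) ^ 9 * r ^ 2 ≤ (Uf u c r * Uf v c r) ^ 4 := by
  set z := u c * v c with hzd
  have hz0 : 0 < z := mul_pos (h.pu c) (h.pv c)
  set r1 := (Real.sqrt z)⁻¹ with hr1
  have hr1p : 0 < r1 := inv_pos.2 (Real.sqrt_pos.2 hz0)
  have hr1z : r1 ^ 2 * z = 1 := by
    rw [hr1, inv_pow, Real.sq_sqrt hz0.le, inv_mul_cancel₀ hz0.ne']
  have hle : r1 ≤ r := by
    have : r1 ^ 2 ≤ r ^ 2 := by
      by_contra hc; push Not at hc
      nlinarith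
    exact le_of_sq_le_sq this hr.le
  have key : (Uf u c r1 * Uf v c r1) ^ 4 / r1 ^ 2 ≤ (Uf u c r * Uf v c r) ^ 4 / r ^ 2 := by
    refine mono_Ici (a := r1) (f := fun t => (Uf u c t * Uf v c t) ^ 4 / t ^ 2)
      (f' := fun t => 8 / t ^ 3 * ((1 + xf u v c t) + (1 + xf v u c t) - 1 / 4) *
        (Uf u c t * Uf v c t) ^ 4) ?_ ?_ le_rfl hle
    · intro t ht
      have ht0 : 0 < t := hr1p.trans_le ht
      refine ((((Uf_deriv' h ht0).fun_mul (Uf_deriv' h.swap ht0)).fun_pow 4).fun_div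
        (hasDerivAt_pow 2 t) (by positivity)).congr_deriv ?_
      push_cast; field_simp; ring
    · intro t ht
      have ht0 : 0 < t := hr1p.trans_le ht
      refine mul_nonneg (mul_nonneg (by positivity) (sub_nonneg.2 (weak_growth h ht0.le ?_)))
        (by have := Uf_pos h ht0.le (c := c); have := Uf_pos h.swap ht0.le (c := c); positivity)
      rw [← hr1z]
      refine mul_le_mul (pow_le_pow_left₀ hr1p.le ht 2) (mul_le_mul (af_ge h ht0.le)
        (af_ge h.swap ht0.le) (h.pv c).le (af_pos h ht0.le).le) hz0.le (by positivity)
  have h0 : z ^ 2 ≤ Uf u c r1 * Uf v c r1 := by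
    rw [hzd, mul_pow]
    exact mul_le_mul (Uf_ge h hr1p.le) (Uf_ge h.swap hr1p.le) (by positivity) Uf_nonneg
  have h1 : z ^ 9 ≤ (Uf u c r1 * Uf v c r1) ^ 4 / r1 ^ 2 := by
    rw [le_div_iff₀ (by positivity)]
    calc z ^ 9 * r1 ^ 2 = z ^ 8 * (r1 ^ 2 * z) := by ring
      _ = (z ^ 2) ^ 4 := by rw [hr1z]; ring
      _ ≤ _ := pow_le_pow_left₀ (by positivity) h0 4
  have h2 := h1.trans key
  rwa [le_div_iff₀ (by positivity)] at h2

end compare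


/-! ### The natural initial scale at a point of `{u = v}` -/

lemma mono_Icc {f f' : ℝ → ℝ} {a b : ℝ} (hab : a ≤ b) (hd : ∀ r ∈ Icc a b, HasDerivAt f (f' r) r)
    (h0 : ∀ r ∈ Icc a b, 0 ≤ f' r) : f a ≤ f b := by
  refine monotoneOn_of_deriv_nonneg (convex_Icc a b)
    (fun t ht => (hd t ht).continuousAt.continuousWithinAt)
    (fun t ht => (hd t (interior_subset ht)).differentiableAt.differentiableWithinAt) ?_
    ⟨le_rfl, hab⟩ ⟨hab, le_rfl⟩ hab
  intro t ht
  rw [(hd t (interior_subset ht)).deriv]; exact h0 t (interior_subset ht)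

section start
variable {n : ℕ} {u v : Euc n → ℝ} {c : Euc n} {r s : ℝ}

/-- The exponential moment `E exp(|y|²/8)`. -/
noncomputable def Lam (n : ℕ) : ℝ := ∫ y : Euc n, Real.exp (1 / 8 * ‖y‖ ^ 2) ∂(gam n)

lemma lam_int : Integrable (fun y : Euc n => Real.exp (1 / 8 * ‖y‖ ^ 2)) (gam n) :=
  gam_exp (by norm_num)

lemma one_le_lam : 1 ≤ Lam n := by
  have h : ∫ _y : Euc n, (1 : ℝ) ∂(gam n) ≤ Lam n :=
    integral_mono (integrable_const _) lam_int fun y => Real.one_le_exp (by positivity)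
  simpa using h

lemma sub_point' (h : Sol u v) (hr : 0 < r) (y : Euc n) :
    u (c + r • y) ≤ 2 ^ n * Real.exp (1 / 24 * ‖y‖ ^ 2) * af u c (4 * r) := by
  have h1 := sub_point h (x := c + r • y) (c := c) (r := 2 * r) (by positivity)
  convert h1 using 3
  · rw [add_sub_cancel_left, norm_smul, Real.norm_eq_abs, abs_of_pos hr]
    congr 1; field_simp; ring
  · ring

lemma Uf_le_af (h : Sol u v) (hr : 0 < r) :
    Uf u c r ≤ 4 ^ n * Lam n * af u c (4 * r) ^ 2 := by
  have h1 : Uf u c r ≤ ∫ y : Euc n, Real.exp (1 / 8 * ‖y‖ ^ 2) * (4 ^ n * af u c (4 * r) ^ 2)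
      ∂(gam n) := by
    refine integral_mono ((h.su.affine c r).pow 2).int (lam_int.mul_const _) fun y => ?_
    have h2 := pow_le_pow_left₀ (h.pu _).le (sub_point' h hr y (c := c)) 2
    refine h2.trans ?_
    rw [mul_pow, mul_pow, ← pow_mul, mul_comm n 2, pow_mul, ← Real.exp_nat_mul]
    have : Real.exp ((2 : ℕ) * (1 / 24 * ‖y‖ ^ 2)) ≤ Real.exp (1 / 8 * ‖y‖ ^ 2) := by
      apply Real.exp_le_exp.2; push_cast; nlinarith [sq_nonneg ‖y‖]
    have h3 : (0 : ℝ) ≤ 4 ^ n * af u c (4 * r) ^ 2 := by positivity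
    rw [show (2 : ℝ) ^ 2 = 4 by norm_num]
    nlinarith
  rw [integral_mul_const] at h1
  refine h1.trans (le_of_eq ?_)
  rw [Lam]; ring

lemma trip_le (h : Sol u v) (hr : 0 < r) :
    ∫ y, u (c + r • y) * v (c + r • y) ^ 2 ∂(gam n)
      ≤ 8 ^ n * Lam n * (af u c (4 * r) * af v c (4 * r) ^ 2) := by
  have h1 : ∫ y, u (c + r • y) * v (c + r • y) ^ 2 ∂(gam n)
      ≤ ∫ y : Euc n, Real.exp (1 / 8 * ‖y‖ ^ 2) *
        (8 ^ n * (af u c (4 * r) * af v c (4 * r) ^ 2)) ∂(gam n) := by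
    refine integral_mono ((h.su.affine c r).mul ((h.sv.affine c r).pow 2)).int
      (lam_int.mul_const _) fun y => ?_
    have h2 := mul_le_mul (sub_point' h hr y (c := c))
      (pow_le_pow_left₀ (h.pv _).le (sub_point' h.swap hr y (c := c)) 2) (sq_nonneg _)
      (by have := af_pos h (r := 4 * r) (c := c) (by positivity); positivity)
    refine h2.trans (le_of_eq ?_)
    have e1 : Real.exp (1 / 8 * ‖y‖ ^ 2) = Real.exp (1 / 24 * ‖y‖ ^ 2) ^ 3 := by
      rw [← Real.exp_nat_mul]; congr 1; push_cast; ring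
    have e2 : (8 : ℝ) ^ n = (2 ^ n) ^ 3 := by rw [← pow_mul, mul_comm n 3, pow_mul]; norm_num
    rw [e1, e2]; ring
  rw [integral_mul_const] at h1
  refine h1.trans (le_of_eq ?_)
  rw [Lam]; ring

/-- At a point of `{u = v}` there is a scale `r` at which `r² H = 1` and `H` is comparable with the
common value squared, with a constant depending on the dimension only. -/
lemma start_scale (n : ℕ) : ∃ K > 0, ∀ u v : Euc n → ℝ, Sol u v →
    ∀ C : ℝ, (∀ x, u x + v x ≤ C * (1 + ‖x‖)) → ∀ c, u c = v c →
    ∃ r > 0, r ^ 2 * Hf u v c r = 1 ∧ Hf u v c r ≤ K * u c ^ 2 := by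
  set D : ℝ := 256 * (4 ^ n * Lam n) with hD
  have hL : 1 ≤ Lam n := one_le_lam
  have hp4 : (1 : ℝ) ≤ 4 ^ n := one_le_pow₀ (by norm_num)
  have hD1 : 1 ≤ D := by nlinarith
  set C' : ℝ := 8 ^ n * Lam n * (128 * (512 * D)) with hC'
  have hC'0 : 0 < C' := by positivity
  refine ⟨D * (4 * Real.exp C'), by positivity, fun u v h C hC c hc => ?_⟩
  have hm := h.pu c
  -- the scale is found by continuity
  obtain ⟨r0, hr0, hr0H⟩ : ∃ r0 > 0, r0 ^ 2 * Hf u v c r0 = 1 := by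
    have hcont : Continuous fun r : ℝ => r ^ 2 * Hf u v c r :=
      (continuous_pow 2).mul (continuous_iff_continuousAt.2 fun r => (Hf_deriv h).continuousAt)
    have hle : (0 : ℝ) ≤ (u c)⁻¹ := by positivity
    have hiv := intermediate_value_Icc hle hcont.continuousOn
    have : (1 : ℝ) ∈ Icc ((0 : ℝ) ^ 2 * Hf u v c 0) ((u c)⁻¹ ^ 2 * Hf u v c (u c)⁻¹) := by
      refine ⟨by norm_num, ?_⟩
      have h1 := Uf_ge h hle (c := c)
      have h2 := Uf_nonneg (u := v) (c := c) (r := (u c)⁻¹)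
      have h3 : u c ^ 2 ≤ Hf u v c (u c)⁻¹ := by rw [Hf]; linarith
      calc (1 : ℝ) = (u c)⁻¹ ^ 2 * u c ^ 2 := by field_simp
        _ ≤ _ := mul_le_mul_of_nonneg_left h3 (by positivity)
    obtain ⟨r0, hr0, e⟩ := hiv this
    refine ⟨r0, lt_of_le_of_ne hr0.1 ?_, e⟩
    rintro rfl
    norm_num at e
  have hdoub : ∀ t > 0, Hf u v c (4 * t) ≤ 256 * Hf u v c t := by
    intro t ht
    have := Hf_quad h hC ht (by linarith : t ≤ 4 * t) (c := c)
    rw [div_le_div_iff₀ (by positivity) (by positivity)] at this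
    have ht4 : 0 < t ^ 4 := by positivity
    nlinarith
  have hHa : ∀ t > 0, Hf u v c t ≤ D * (af u c t + af v c t) ^ 2 := by
    intro t ht
    have h1 := Uf_le_af h (r := t / 4) (c := c) (by positivity)
    have h2 := Uf_le_af h.swap (r := t / 4) (c := c) (by positivity)
    have h3 := hdoub (t / 4) (by positivity)
    rw [show 4 * (t / 4) = t by ring] at h1 h2 h3
    have a0 := af_pos h ht.le (c := c)
    have b0 := af_pos h.swap ht.le (c := c)
    have h4 : Hf u v c (t / 4) ≤ 4 ^ n * Lam n * (af u c t + af v c t) ^ 2 := by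
      rw [Hf]
      have : 0 ≤ 4 ^ n * Lam n * (2 * (af u c t * af v c t)) := by positivity
      nlinarith
    rw [hD]; linarith
  have hab4 : ∀ t > 0, af u c (4 * t) + af v c (4 * t) ≤ 512 * D * (af u c t + af v c t) := by
    intro t ht
    have a0 := af_pos h ht.le (c := c)
    have b0 := af_pos h.swap ht.le (c := c)
    have j1 := af_sq_le h (c := c) (r := 4 * t)
    have j2 := af_sq_le h.swap (c := c) (r := 4 * t)
    have h1 := hdoub t ht
    have h2 := hHa t ht
    refine le_of_sq_le_sq ?_ (by positivity)
    have h3 : (af u c (4 * t) + af v c (4 * t)) ^ 2 ≤ 2 * Hf u v c (4 * t) := by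
      rw [Hf]; nlinarith [sq_nonneg (af u c (4 * t) - af v c (4 * t))]
    have h4 : 512 * D * (af u c t + af v c t) ^ 2 ≤ (512 * D * (af u c t + af v c t)) ^ 2 := by
      rw [mul_pow, sq (512 * D)]
      have : 512 * D * 1 ≤ 512 * D * (512 * D) := by
        apply mul_le_mul_of_nonneg_left <;> linarith
      nlinarith [sq_nonneg (af u c t + af v c t)]
    linarith
  have hgr : ∀ t > 0, (∫ y, u (c + t • y) * v (c + t • y) ^ 2 ∂(gam n)) +
      (∫ y, v (c + t • y) * u (c + t • y) ^ 2 ∂(gam n))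
      ≤ C' * Hf u v c t * (af u c t + af v c t) := by
    intro t ht
    have t1 := trip_le h ht (c := c)
    have t2 := trip_le h.swap ht (c := c)
    have a4 := af_pos h (r := 4 * t) (c := c) (by positivity)
    have b4 := af_pos h.swap (r := 4 * t) (c := c) (by positivity)
    have j1 := af_sq_le h (c := c) (r := 4 * t)
    have j2 := af_sq_le h.swap (c := c) (r := 4 * t)
    have h3 : af u c (4 * t) * af v c (4 * t) ≤ 128 * Hf u v c t := by
      have := hdoub t ht
      rw [Hf] at this
      nlinarith [sq_nonneg (af u c (4 * t) - af v c (4 * t))]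
    have h4 := mul_le_mul h3 (hab4 t ht) (by positivity)
      (by have := Hf_pos h ht.le (c := c); positivity)
    have h5 := mul_le_mul_of_nonneg_left h4 (by positivity : 0 ≤ 8 ^ n * Lam n)
    rw [hC']
    linarith
  have key := mono_Icc (f := fun t => C' * Hf u v c r0 * (t ^ 2 / 2) -
      Real.log (af u c t + af v c t)) (f' := fun t => C' * Hf u v c r0 * t -
      t * ((∫ y, u (c + t • y) * v (c + t • y) ^ 2 ∂(gam n)) +
      (∫ y, v (c + t • y) * u (c + t • y) ^ 2 ∂(gam n))) / (af u c t + af v c t)) hr0.le ?_ ?_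
  · simp only [af_zero, ← hc] at key
    norm_num at key
    have a0 := af_pos h hr0.le (c := c)
    have b0 := af_pos h.swap hr0.le (c := c)
    have h1 : Real.log (af u c r0 + af v c r0) ≤ Real.log (u c + u c) + C' / 2 := by
      have : C' * Hf u v c r0 * (r0 ^ 2 / 2) = C' / 2 := by
        rw [show C' * Hf u v c r0 * (r0 ^ 2 / 2) = C' / 2 * (r0 ^ 2 * Hf u v c r0) by ring, hr0H,
          mul_one]
      linarith
    have h2 : af u c r0 + af v c r0 ≤ (u c + u c) * Real.exp (C' / 2) := by
      rw [← Real.log_le_log_iff (by positivity) (by positivity), Real.log_mul (by positivity)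
        (by positivity), Real.log_exp]
      exact h1
    refine ⟨r0, hr0, hr0H, (hHa r0 hr0).trans ?_⟩
    have h3 := pow_le_pow_left₀ (by positivity) h2 2
    rw [mul_pow, ← Real.exp_nat_mul] at h3
    have : ((2 : ℕ) : ℝ) * (C' / 2) = C' := by push_cast; ring
    rw [this] at h3
    calc _ ≤ D * ((u c + u c) ^ 2 * Real.exp C') := mul_le_mul_of_nonneg_left h3 (by positivity)
      _ = _ := by ring
  · intro t ht
    have a0 := af_pos h ht.1 (c := c)
    have b0 := af_pos h.swap ht.1 (c := c)
    refine ((((hasDerivAt_pow 2 t).div_const 2).const_mul (C' * Hf u v c r0)).fun_sub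
      (((af_deriv h).fun_add (af_deriv h.swap)).log (by positivity))).congr_deriv ?_
    push_cast; field_simp
  · intro t ht
    rcases ht.1.eq_or_lt with h0 | h0
    · simp [← h0]
    have a0 := af_pos h ht.1 (c := c)
    have b0 := af_pos h.swap ht.1 (c := c)
    rw [sub_nonneg, div_le_iff₀ (by positivity)]
    have h1 := mul_le_mul_of_nonneg_left (hgr t h0) h0.le
    have h2 := mul_le_mul_of_nonneg_left (Hf_mono h ht.1 ht.2 (c := c))
      (by positivity : 0 ≤ t * C' * (af u c t + af v c t))
    nlinarith

end start


/-! ### Mean zero functions close to linear ones -/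

section meanzero
variable {n : ℕ} {f g : Euc n → ℝ}

lemma gam_coord_mul (i j : Fin n) : ∫ y : Euc n, y i * y j ∂(gam n) = if i = j then 1 else 0 := by
  rw [← gam_ibp (sl_coord j) i, pd_coord]
  by_cases h : i = j
  · simp [h]
  · simp [h, Ne.symm h]

/-- A mean zero function whose Poincaré deficit is small is close to an odd (linear) function;
in particular its positive and negative parts have almost equal `L²` norms. -/
lemma mean_zero_gap (hf : Sl f) (h0 : ∫ y, f y ∂(gam n) = 0) : ∃ ρ ≥ 0,
    ρ ^ 2 ≤ ∑ i, (∫ y, pd i f y ^ 2 ∂(gam n)) - ∫ y, f y ^ 2 ∂(gam n) ∧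
    (∫ y, f y * |f y| ∂(gam n)) ^ 2 ≤ 4 * ρ ^ 2 * ∫ y, f y ^ 2 ∂(gam n) := by
  set c : Fin n → ℝ := fun i => ∫ y, y i * f y ∂(gam n) with hc
  set l : Euc n → ℝ := fun y => ∑ i, c i * y i with hl
  have hlS : Sl l := Sl.sum _ fun i => (sl_coord i).const_mul _
  have hfl : ∫ y, f y * l y ∂(gam n) = ∑ i, c i ^ 2 := by
    have e : ∀ y, f y * l y = ∑ i, c i * (y i * f y) := by
      intro y; rw [hl]; simp only; rw [Finset.mul_sum]
      exact Finset.sum_congr rfl fun i _ => by ring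
    simp_rw [e]
    rw [integral_finsetSum _ fun i _ => (((sl_coord i).mul hf).const_mul _).int]
    refine Finset.sum_congr rfl fun i _ => ?_
    rw [integral_const_mul, sq]
  have hll : ∫ y, l y ^ 2 ∂(gam n) = ∑ i, c i ^ 2 := by
    have e : ∀ y, l y ^ 2 = ∑ i, ∑ j, c i * c j * (y i * y j) := by
      intro y; rw [hl]; simp only; rw [sq, Finset.sum_mul]
      refine Finset.sum_congr rfl fun i _ => ?_
      rw [Finset.mul_sum]
      exact Finset.sum_congr rfl fun i _ => by ring
    simp_rw [e]
    rw [integral_finsetSum _ fun i _ => (Sl.sum _ fun j =>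
      ((sl_coord i).mul (sl_coord j)).const_mul _).int]
    refine Finset.sum_congr rfl fun i _ => ?_
    rw [integral_finsetSum _ fun j _ => (((sl_coord i).mul (sl_coord j)).const_mul _).int]
    simp_rw [integral_const_mul, gam_coord_mul]
    simp [sq]
  have hdiff : ∫ y, |f y - l y| ^ 2 ∂(gam n) = (∫ y, f y ^ 2 ∂(gam n)) - ∑ i, c i ^ 2 := by
    have e : ∀ y, |f y - l y| ^ 2 = f y ^ 2 - 2 * (f y * l y) + l y ^ 2 := by
      intro y; rw [sq_abs]; ring
    simp_rw [e]
    rw [integral_add ((hf.pow 2).sub ((hf.mul hlS).const_mul 2)).int (hlS.pow 2).int,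
      integral_sub (hf.pow 2).int ((hf.mul hlS).const_mul 2).int, integral_const_mul, hfl, hll]
    ring
  have hnn : 0 ≤ (∫ y, f y ^ 2 ∂(gam n)) - ∑ i, c i ^ 2 := by
    rw [← hdiff]; exact integral_nonneg fun y => sq_nonneg _
  have hc2 : 0 ≤ ∑ i, c i ^ 2 := Finset.sum_nonneg fun i _ => sq_nonneg _
  refine ⟨Real.sqrt ((∫ y, f y ^ 2 ∂(gam n)) - ∑ i, c i ^ 2), Real.sqrt_nonneg _, ?_, ?_⟩
  · rw [Real.sq_sqrt hnn]
    have := poincare_gap hf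
    rw [h0] at this
    simp_rw [gam_ibp hf] at this
    linarith
  · rw [Real.sq_sqrt hnn, ← hdiff]
    have hodd : ∫ y, l y * |l y| ∂(gam n) = 0 := by
      have h1 := gam_neg (fun y => l y * |l y|)
      have e : ∀ y, l (-y) = - l y := by intro y; simp [hl]
      simp_rw [e, abs_neg, neg_mul, integral_neg] at h1
      linarith
    have hT : Tame (fun y => |f y| + |l y|) := hf.tame.abs.add hlS.tame.abs
    have hT2 : Tame (fun y => |f y - l y|) := (hf.sub hlS).tame.abs
    have h1 : |∫ y, f y * |f y| ∂(gam n)| ≤ ∫ y, |f y - l y| * (|f y| + |l y|) ∂(gam n) := by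
      have : ∫ y, f y * |f y| ∂(gam n) = ∫ y, (f y * |f y| - l y * |l y|) ∂(gam n) := by
        rw [integral_sub (hf.tame.mul hf.tame.abs).int (hlS.tame.mul hlS.tame.abs).int, hodd,
          sub_zero]
      rw [this, ← Real.norm_eq_abs]
      refine norm_integral_le_of_norm_le (hT2.mul hT).int (Filter.Eventually.of_forall fun y => ?_)
      rw [Real.norm_eq_abs]
      have e : f y * |f y| - l y * |l y| = (f y - l y) * |f y| + l y * (|f y| - |l y|) := by ring
      rw [e]
      refine (abs_add_le _ _).trans ?_
      rw [abs_mul, abs_mul, abs_abs]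
      nlinarith [abs_abs_sub_abs_le_abs_sub (f y) (l y), abs_nonneg (l y)]
    have h2 := gam_cs hT2 hT
    have h3 : ∫ y, (|f y| + |l y|) ^ 2 ∂(gam n) ≤ 4 * ∫ y, f y ^ 2 ∂(gam n) := by
      have : ∫ y, (|f y| + |l y|) ^ 2 ∂(gam n) ≤ ∫ y, (2 * f y ^ 2 + 2 * l y ^ 2) ∂(gam n) := by
        refine integral_mono (hT.pow 2).int
          (((hf.pow 2).const_mul 2).add ((hlS.pow 2).const_mul 2)).int fun y => ?_
        simp only
        rw [← sq_abs (f y), ← sq_abs (l y)]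
        nlinarith [sq_nonneg (|f y| - |l y|)]
      rw [integral_add ((hf.pow 2).const_mul 2).int ((hlS.pow 2).const_mul 2).int,
        integral_const_mul, integral_const_mul, hll] at this
      linarith
    have h4 := pow_le_pow_left₀ (abs_nonneg _) h1 2
    rw [sq_abs] at h4
    have h5 : 0 ≤ ∫ y, |f y - l y| ^ 2 ∂(gam n) := integral_nonneg fun y => sq_nonneg _
    nlinarith [mul_le_mul_of_nonneg_left h3 h5]

end meanzero

/-! ### A smooth truncation -/

section truncation
variable {n : ℕ} {f g : Euc n → ℝ}

/-- A smooth convex function vanishing on `(-∞, 1]` with slope one on `[2, ∞)`. -/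
noncomputable def ph (s : ℝ) : ℝ := ∫ t in (0 : ℝ)..s, Real.smoothTransition (t - 1)

lemma st_shift_cont : Continuous fun t : ℝ => Real.smoothTransition (t - 1) :=
  Real.smoothTransition.continuous.comp (by fun_prop)

lemma ph_deriv (s : ℝ) : HasDerivAt ph (Real.smoothTransition (s - 1)) s :=
  intervalIntegral.integral_hasDerivAt_right (st_shift_cont.intervalIntegrable _ _)
    (st_shift_cont.stronglyMeasurableAtFilter _ _) st_shift_cont.continuousAt

lemma ph_zero {s : ℝ} (hs : s ≤ 1) : ph s = 0 := by
  rw [ph, intervalIntegral.integral_congr (g := fun _ => 0)]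
  · simp
  · intro t ht
    have : t ≤ 1 := ht.2.trans (by simp [hs])
    exact Real.smoothTransition.zero_of_nonpos (by linarith)

lemma ph_nonneg (s : ℝ) : 0 ≤ ph s := by
  rcases le_total s 1 with h | h
  · rw [ph_zero h]
  · exact intervalIntegral.integral_nonneg (by linarith) fun t _ => Real.smoothTransition.nonneg _

lemma ph_le {s : ℝ} (hs : 0 ≤ s) : ph s ≤ s * Real.smoothTransition (s - 1) := by
  have h : ph s ≤ ∫ _t in (0 : ℝ)..s, Real.smoothTransition (s - 1) :=
    intervalIntegral.integral_mono_on hs (st_shift_cont.intervalIntegrable _ _)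
      (continuous_const.intervalIntegrable _ _) fun t ht =>
      Real.smoothTransition.monotone (by linarith [ht.2])
  simpa using h

lemma ph_le_self {s : ℝ} (hs : 0 ≤ s) : ph s ≤ s :=
  (ph_le hs).trans (mul_le_of_le_one_right hs (Real.smoothTransition.le_one _))

lemma ph_ge (s : ℝ) : s - 2 ≤ ph s := by
  rcases le_total s 2 with h | h
  · linarith [ph_nonneg s]
  · have h1 := mono_Icc (f := fun t => ph t - t) (f' := fun t => Real.smoothTransition (t - 1) - 1)
      h (fun t _ => (ph_deriv t).fun_sub (hasDerivAt_id t)) (fun t ht => by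
        rw [Real.smoothTransition.one_of_one_le (by linarith [ht.1])]; simp)
    linarith [ph_nonneg 2]

lemma ph_sm : ContDiff ℝ (⊤ : ℕ∞) ph := by
  rw [contDiff_infty_iff_deriv]
  refine ⟨fun s => (ph_deriv s).differentiableAt, ?_⟩
  rw [funext fun s => (ph_deriv s).deriv]
  exact Real.smoothTransition.contDiff.comp (by fun_prop)

lemma tt_comp {k : ℕ} (hg : Sl g) : ∀ {ψ : ℝ → ℝ}, ContDiff ℝ (⊤ : ℕ∞) ψ →
    HasCompactSupport (deriv ψ) → (∃ C, ∀ s, |ψ s| ≤ C) → TT k (fun x => ψ (g x)) := by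
  have htame : ∀ {ψ : ℝ → ℝ}, ContDiff ℝ (⊤ : ℕ∞) ψ → (∃ C, ∀ s, |ψ s| ≤ C) →
      Tame (fun x => ψ (g x)) := by
    rintro ψ hψ ⟨C, hC⟩
    exact ⟨hψ.continuous.comp hg.cont, C, 0, fun x => by simpa using hC (g x)⟩
  induction k with
  | zero => intro ψ hψ _ hb; exact htame hψ hb
  | succ k ih =>
    intro ψ hψ hcs hb
    refine ⟨htame hψ hb, fun i => ?_⟩
    have hd := contDiff_infty_iff_deriv.1 hψ
    rw [pd_comp (fun s => (hd.1 s).hasDerivAt) hg.diff]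
    refine TT.mul (hd.2.comp hg.sm) (hg.pd i).sm (ih hd.2 hcs.deriv ?_) ((hg.pd i).tt k)
    obtain ⟨C, hC⟩ := hd.2.continuous.bounded_above_of_compact_support hcs
    exact ⟨C, hC⟩

lemma sl_ph (hg : Sl g) : Sl (fun x => ph (g x)) := by
  refine ⟨ph_sm.comp hg.sm, fun k => ?_⟩
  have ht : Tame (fun x => ph (g x)) := by
    refine hg.tame.of_le (ph_sm.continuous.comp hg.cont) fun x => ?_
    rw [abs_of_nonneg (ph_nonneg _)]
    rcases le_total (g x) 0 with h | h
    · rw [ph_zero (by linarith)]; exact abs_nonneg _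
    · exact (ph_le_self h).trans (le_abs_self _)
  have hst : ContDiff ℝ (⊤ : ℕ∞) fun s => Real.smoothTransition (s - 1) :=
    Real.smoothTransition.contDiff.comp (by fun_prop)
  cases k with
  | zero => exact ht
  | succ k =>
    refine ⟨ht, fun i => ?_⟩
    rw [pd_comp ph_deriv hg.diff]
    refine TT.mul (hst.comp hg.sm) (hg.pd i).sm (tt_comp (ψ := fun s =>
      Real.smoothTransition (s - 1)) hg hst ?_ ⟨1, fun s => ?_⟩) ((hg.pd i).tt k)
    · refine HasCompactSupport.intro (isCompact_Icc (a := (1 : ℝ)) (b := 2)) fun s hs => ?_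
      rw [mem_Icc, not_and_or, not_le, not_le] at hs
      rcases hs with hs | hs
      · have : (fun s => Real.smoothTransition (s - 1)) =ᶠ[nhds s] fun _ => 0 := by
          filter_upwards [Iio_mem_nhds hs] with t ht
          exact Real.smoothTransition.zero_of_nonpos (by linarith [mem_Iio.1 ht])
        rw [this.deriv_eq]; simp
      · have : (fun s => Real.smoothTransition (s - 1)) =ᶠ[nhds s] fun _ => 1 := by
          filter_upwards [Ioi_mem_nhds hs] with t ht
          exact Real.smoothTransition.one_of_one_le (by linarith [mem_Ioi.1 ht])
        rw [this.deriv_eq]; simp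
    · rw [abs_of_nonneg (Real.smoothTransition.nonneg _)]
      exact Real.smoothTransition.le_one _

lemma sl_weight : Sl (fun x : Euc n => 1 + ‖x‖ ^ 2) := (sl_const 1).add sl_norm_sq

lemma weight_pos (x : Euc n) : 0 < 1 + ‖x‖ ^ 2 := by positivity

lemma pd_weight_inv (i : Fin n) : pd i (fun x : Euc n => (1 + ‖x‖ ^ 2)⁻¹)
    = fun x => (-2) * x i * ((1 + ‖x‖ ^ 2)⁻¹ * (1 + ‖x‖ ^ 2)⁻¹) := by
  funext x
  have h1 : pd i (fun x : Euc n => 1 + ‖x‖ ^ 2) x = 2 * x i := by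
    rw [pd_add (by fun_prop) sl_norm_sq.diff, pd_const, pd_norm_sq]; simp
  have h2 := (hasDerivAt_inv (weight_pos x).ne').comp_hasFDerivAt x
    ((sl_weight (n := n)).diff x).hasFDerivAt
  have h3 : fderiv ℝ (fun x : Euc n => (1 + ‖x‖ ^ 2)⁻¹) x = _ := h2.fderiv
  rw [pd] at h1 ⊢
  rw [h3]
  simp only [smul_apply, smul_eq_mul]
  rw [h1, sq (1 + ‖x‖ ^ 2), mul_inv]
  ring

lemma sl_weight_inv : Sl (fun x : Euc n => (1 + ‖x‖ ^ 2)⁻¹) := by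
  have hsm : Sm (fun x : Euc n => (1 + ‖x‖ ^ 2)⁻¹) :=
    sl_weight.sm.inv fun x => (weight_pos x).ne'
  have ht : Tame (fun x : Euc n => (1 + ‖x‖ ^ 2)⁻¹) := by
    refine ⟨hsm.continuous, 1, 0, fun x => ?_⟩
    rw [abs_of_pos (inv_pos.2 (weight_pos x)), pow_zero, mul_one]
    exact inv_le_one_of_one_le₀ (by nlinarith [norm_nonneg x])
  refine ⟨hsm, fun k => ?_⟩
  induction k with
  | zero => exact ht
  | succ k ih =>
    refine ⟨ht, fun i => ?_⟩
    rw [pd_weight_inv]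
    have hs := (sl_coord i).const_mul (-2)
    exact TT.mul hs.sm (hsm.mul hsm) (hs.tt k) (TT.mul hsm hsm ih ih)

end truncation


/-! ### Two almost segregated Gaussian profiles -/

section static
variable {n : ℕ}

/-- Truncation of a profile at the level `θ (1 + |ξ|²)`: the truncated profiles of two almost
segregated functions have disjoint supports. -/
lemma trunc_profile (n : ℕ) : ∃ K ≥ (1 : ℝ), ∀ w : Euc n → ℝ, Sl w → (∀ x, 0 ≤ w x) →
    ∫ y, w y ^ 2 ∂(gam n) = 1 → ∑ i, ∫ y, pd i w y ^ 2 ∂(gam n) ≤ 4 → ∀ θ : ℝ, 0 < θ → θ ≤ 1 →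
    ∃ f : Euc n → ℝ, Sl f ∧ (∀ x, 0 ≤ f x) ∧ (∀ x, f x ≠ 0 → θ * (1 + ‖x‖ ^ 2) < w x) ∧
      (∀ x, f x = 0 → ∀ i, pd i f x = 0) ∧ ∫ y, f y ^ 2 ∂(gam n) ≤ 1 ∧
      1 - K * θ ≤ ∫ y, f y ^ 2 ∂(gam n) ∧
      ∑ i, ∫ y, pd i f y ^ 2 ∂(gam n) ≤ ∑ i, ∫ y, pd i w y ^ 2 ∂(gam n) + K * θ := by
  set m : ℝ := ∫ y : Euc n, (1 + ‖y‖ ^ 2) ^ 2 ∂(gam n) with hm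
  have hm0 : 0 ≤ m := integral_nonneg fun y => sq_nonneg _
  have hn0 : (0 : ℝ) ≤ n := Nat.cast_nonneg n
  refine ⟨16 + 20 * n + 2 * (m + 1), by linarith, fun w hw hw0 hw1 hD θ hθ hθ1 => ?_⟩
  set g : Euc n → ℝ := fun x => θ⁻¹ * (w x * (1 + ‖x‖ ^ 2)⁻¹) with hg
  have hgS : Sl g := (hw.mul sl_weight_inv).const_mul _
  have hg0 : ∀ x, 0 ≤ g x := fun x =>
    mul_nonneg (inv_nonneg.2 hθ.le) (mul_nonneg (hw0 x) (inv_nonneg.2 (weight_pos x).le))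
  set k : Euc n → ℝ := fun x => θ * (1 + ‖x‖ ^ 2) with hk
  have hkS : Sl k := sl_weight.const_mul _
  have hk0 : ∀ x, 0 < k x := fun x => mul_pos hθ (weight_pos x)
  have hwkg : w = fun x => k x * g x := by
    funext x
    simp only [hk, hg]
    have := (weight_pos x).ne'
    field_simp
  have hkd : ∀ i, pd i k = fun x => 2 * θ * x i := by
    intro i
    rw [hk, pd_const_mul _ sl_weight.diff, pd_add (by fun_prop) sl_norm_sq.diff, pd_const,
      pd_norm_sq]
    funext x; ring
  set f : Euc n → ℝ := fun x => k x * ph (g x) with hf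
  have hfS : Sl f := hkS.mul (sl_ph hgS)
  have hf0 : ∀ x, 0 ≤ f x := fun x => mul_nonneg (hk0 x).le (ph_nonneg _)
  have hfw : ∀ x, f x ≤ w x := fun x => by
    rw [hwkg]; exact mul_le_mul_of_nonneg_left (ph_le_self (hg0 x)) (hk0 x).le
  have hfw2 : ∀ x, w x - 2 * k x ≤ f x := fun x => by
    have := mul_le_mul_of_nonneg_left (ph_ge (g x)) (hk0 x).le
    have e : w x = k x * g x := congrFun hwkg x
    rw [e]; simp only [hf]; linarith
  have hgrad : ∀ i x, |pd i f x| ≤ |pd i w x| + 4 * θ * |x i| := by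
    intro i x
    have e1 : pd i f x = 2 * θ * x i * ph (g x) + k x * (Real.smoothTransition (g x - 1) *
        pd i g x) := by
      rw [hf, pd_mul hkS.diff (sl_ph hgS).diff, pd_comp ph_deriv hgS.diff, hkd]
    have e2 : pd i w x = 2 * θ * x i * g x + k x * pd i g x := by
      conv_lhs => rw [hwkg]
      rw [pd_mul hkS.diff hgS.diff, hkd]
    set s := Real.smoothTransition (g x - 1)
    have hs0 : 0 ≤ s := Real.smoothTransition.nonneg _
    have hs1 : s ≤ 1 := Real.smoothTransition.le_one _
    have e3 : pd i f x = s * pd i w x + (ph (g x) - g x * s) * (2 * θ * x i) := by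
      rw [e1, e2]; ring
    have h1 : |ph (g x) - g x * s| ≤ 2 := by
      have := ph_le (hg0 x)
      have := ph_ge (g x)
      rw [abs_le]; constructor
      · nlinarith [hg0 x]
      · change ph (g x) ≤ g x * s at *
        linarith
    rw [e3]
    refine (abs_add_le _ _).trans ?_
    rw [abs_mul, abs_mul, abs_mul, abs_of_nonneg hs0, abs_of_pos (by linarith : 0 < 2 * θ)]
    have h2 : 0 ≤ 2 * θ * |x i| := by positivity
    nlinarith [abs_nonneg (pd i w x), mul_le_mul_of_nonneg_right h1 h2]
  refine ⟨f, hfS, hf0, fun x hx => ?_, fun x hx i => ?_, ?_, ?_, ?_⟩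
  · by_contra hcon
    push Not at hcon
    apply hx
    have e : w x = k x * g x := congrFun hwkg x
    have : g x ≤ 1 := by
      by_contra h; push Not at h
      have : k x * 1 < k x * g x := mul_lt_mul_of_pos_left h (hk0 x)
      rw [← e, mul_one] at this
      exact absurd hcon (not_le.2 this)
    simp only [hf, ph_zero this, mul_zero]
  · have hmin : IsLocalMin f x := Filter.Eventually.of_forall fun y => by rw [hx]; exact hf0 y
    rw [pd, hmin.fderiv_eq_zero]; rfl
  · rw [← hw1]
    exact integral_mono (hfS.pow 2).int (hw.pow 2).int fun y =>
      pow_le_pow_left₀ (hf0 y) (hfw y) 2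
  · have h1 : ∫ y, (w y ^ 2 - (2 * θ * (1 + ‖y‖ ^ 2) ^ 2 + 2 * θ * w y ^ 2)) ∂(gam n)
        ≤ ∫ y, f y ^ 2 ∂(gam n) := by
      refine integral_mono ((hw.pow 2).sub (((sl_weight.pow 2).const_mul _).add
        ((hw.pow 2).const_mul _))).int (hfS.pow 2).int fun y => ?_
      simp only
      have h2 : 4 * k y * w y ≤ 2 * θ * (1 + ‖y‖ ^ 2) ^ 2 + 2 * θ * w y ^ 2 := by
        simp only [hk]
        nlinarith [mul_nonneg hθ.le (sq_nonneg (1 + ‖y‖ ^ 2 - w y))]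
      have h3 : w y ^ 2 - 4 * k y * w y ≤ f y ^ 2 := by
        rcases le_total (2 * k y) (w y) with h | h
        · have := pow_le_pow_left₀ (by linarith) (hfw2 y) 2
          nlinarith [sq_nonneg (k y)]
        · nlinarith [hw0 y, hk0 y, sq_nonneg (f y)]
      linarith
    rw [integral_sub (hw.pow 2).int (((sl_weight.pow 2).const_mul _).add
        ((hw.pow 2).const_mul _)).int, integral_add ((sl_weight.pow 2).const_mul _).int
        ((hw.pow 2).const_mul _).int, integral_const_mul, integral_const_mul, hw1, ← hm] at h1
    have h4 : 0 ≤ (n : ℝ) * θ := mul_nonneg hn0 hθ.le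
    nlinarith
  · have h1 : ∀ i, ∫ y, pd i f y ^ 2 ∂(gam n) ≤ (∫ y, pd i w y ^ 2 ∂(gam n)) +
        4 * θ * (∫ y, pd i w y ^ 2 ∂(gam n)) + 20 * θ := by
      intro i
      have h2 : ∫ y, pd i f y ^ 2 ∂(gam n) ≤ ∫ y, (pd i w y ^ 2 +
          4 * θ * pd i w y ^ 2 + 20 * θ * (y i * y i)) ∂(gam n) := by
        refine integral_mono ((hfS.pd i).pow 2).int ((((hw.pd i).pow 2).add
          (((hw.pd i).pow 2).const_mul _)).add (((sl_coord i).mul (sl_coord i)).const_mul _)).int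
          fun y => ?_
        simp only
        have h3 := pow_le_pow_left₀ (abs_nonneg _) (hgrad i y) 2
        rw [sq_abs] at h3
        have e1 : y i * y i = |y i| ^ 2 := by rw [sq_abs]; ring
        have e2 : pd i w y ^ 2 = |pd i w y| ^ 2 := by rw [sq_abs]
        rw [e1, e2]
        have h5 : θ ^ 2 * |y i| ^ 2 ≤ θ * |y i| ^ 2 :=
          mul_le_mul_of_nonneg_right (by nlinarith) (sq_nonneg _)
        nlinarith [mul_nonneg hθ.le (sq_nonneg (|pd i w y| - |y i|))]
      rw [integral_add (((hw.pd i).pow 2).add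
          (((hw.pd i).pow 2).const_mul _)).int (((sl_coord i).mul (sl_coord i)).const_mul _).int,
        integral_add ((hw.pd i).pow 2).int (((hw.pd i).pow 2).const_mul _).int,
        integral_const_mul, integral_const_mul, gam_coord_mul] at h2
      simpa using h2
    refine (Finset.sum_le_sum fun i _ => h1 i).trans ?_
    rw [Finset.sum_add_distrib, Finset.sum_add_distrib, ← Finset.mul_sum]
    simp only [Finset.sum_const, Finset.card_univ, Fintype.card_fin, nsmul_eq_mul]
    nlinarith [mul_nonneg hm0 hθ.le]

lemma static_algebra {a b A B D₁ D₂ E₁ E₂ K θ ρ : ℝ} (ha : 0 < a) (hb : 0 < b) (hK1 : 1 ≤ K)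
    (hθ : 0 < θ) (A₁ : A ≤ 1) (B₁ : 1 - K * θ ≤ A) (e₁ : E₁ ≤ D₁ + K * θ)
    (A₂ : B ≤ 1) (B₂ : 1 - K * θ ≤ B) (e₂ : E₂ ≤ D₂ + K * θ) (hρ0 : 0 ≤ ρ)
    (hρ1 : ρ ^ 2 ≤ a ^ 2 * E₁ + b ^ 2 * E₂ - (a ^ 2 * A + b ^ 2 * B))
    (hρ2 : (a ^ 2 * A - b ^ 2 * B) ^ 2 ≤ 4 * ρ ^ 2 * (a ^ 2 * A + b ^ 2 * B)) :
    ∃ f g ρ : ℝ, 0 ≤ f ∧ 0 ≤ g ∧ 0 ≤ ρ ∧ f + g = 1 ∧ |f - g| ≤ 2 * K * (ρ + θ) ∧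
      ρ ^ 2 ≤ (D₁ - 1) * f + (D₂ - 1) * g + 2 * K * θ := by
  set S := a ^ 2 + b ^ 2 with hS
  have hSp : 0 < S := by positivity
  have e1 : (ρ / Real.sqrt S) ^ 2 = ρ ^ 2 / S := by rw [div_pow, Real.sq_sqrt hSp.le]
  have hf0 : 0 ≤ a ^ 2 / S := by positivity
  have hg0 : 0 ≤ b ^ 2 / S := by positivity
  have hfg : a ^ 2 / S + b ^ 2 / S = 1 := by rw [← add_div]; exact div_self hSp.ne'
  have k1 : ρ ^ 2 / S ≤ a ^ 2 / S * (D₁ - 1) + b ^ 2 / S * (D₂ - 1) + 2 * K * θ := by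
    have : ρ ^ 2 ≤ a ^ 2 * (D₁ - 1 + 2 * K * θ) + b ^ 2 * (D₂ - 1 + 2 * K * θ) := by
      have h1 := mul_le_mul_of_nonneg_left e₁ (sq_nonneg a)
      have h2 := mul_le_mul_of_nonneg_left e₂ (sq_nonneg b)
      have h3 := mul_le_mul_of_nonneg_left B₁ (sq_nonneg a)
      have h4 := mul_le_mul_of_nonneg_left B₂ (sq_nonneg b)
      linarith
    have h2 := div_le_div_of_nonneg_right this hSp.le
    have e : (a ^ 2 * (D₁ - 1 + 2 * K * θ) + b ^ 2 * (D₂ - 1 + 2 * K * θ)) / S =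
      a ^ 2 / S * (D₁ - 1) + b ^ 2 / S * (D₂ - 1) + 2 * K * θ * (a ^ 2 / S + b ^ 2 / S) := by ring
    rw [e, hfg, mul_one] at h2
    exact h2
  have k2 : (a ^ 2 / S * A - b ^ 2 / S * B) ^ 2 ≤ (2 * (ρ / Real.sqrt S)) ^ 2 := by
    have h1 : a ^ 2 / S * A + b ^ 2 / S * B ≤ 1 := by
      have j3 := mul_le_mul_of_nonneg_left A₁ hf0
      have j4 := mul_le_mul_of_nonneg_left A₂ hg0
      linarith
    have h2 := div_le_div_of_nonneg_right hρ2 (sq_nonneg S)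
    have e2 : (a ^ 2 * A - b ^ 2 * B) ^ 2 / S ^ 2 = (a ^ 2 / S * A - b ^ 2 / S * B) ^ 2 := by
      ring
    have e3 : 4 * ρ ^ 2 * (a ^ 2 * A + b ^ 2 * B) / S ^ 2 =
        4 * (ρ ^ 2 / S) * (a ^ 2 / S * A + b ^ 2 / S * B) := by ring
    rw [e2, e3] at h2
    rw [mul_pow, e1]
    have h3 : 0 ≤ ρ ^ 2 / S := by positivity
    nlinarith
  have hρS : 0 ≤ ρ / Real.sqrt S := by positivity
  refine ⟨a ^ 2 / S, b ^ 2 / S, ρ / Real.sqrt S, hf0, hg0, hρS, hfg, ?_, by rw [e1]; linarith⟩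
  have k3 := abs_le_of_sq_le_sq' k2 (by positivity)
  have hr : ρ / Real.sqrt S ≤ K * (ρ / Real.sqrt S) := le_mul_of_one_le_left hρS hK1
  have h5 : 0 ≤ K * θ := by positivity
  generalize a ^ 2 / S = f at *
  generalize b ^ 2 / S = g at *
  rw [abs_le]
  have j1 := mul_le_mul_of_nonneg_left B₁ hf0
  have j2 := mul_le_mul_of_nonneg_left B₂ hg0
  have j3 := mul_le_mul_of_nonneg_left A₁ hf0
  have j4 := mul_le_mul_of_nonneg_left A₂ hg0
  have j5 : f * (K * θ) + g * (K * θ) = K * θ := by rw [← add_mul, hfg, one_mul]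
  obtain ⟨k4, k5⟩ := k3
  have j6 : 0 ≤ f * (K * θ) := mul_nonneg hf0 h5
  have j7 : 0 ≤ g * (K * θ) := mul_nonneg hg0 h5
  constructor <;> linarith

/-- The static stability estimate behind the monotonicity formula.  For two almost segregated
profiles, a convex combination of the Dirichlet energies is at least one, and if it is close to
one the combination is close to the symmetric one. -/
lemma static_stability (n : ℕ) : ∃ K ≥ (1 : ℝ), ∀ w₁ w₂ : Euc n → ℝ, Sl w₁ → Sl w₂ →
    (∀ x, 0 ≤ w₁ x) → (∀ x, 0 ≤ w₂ x) →
    ∫ y, w₁ y ^ 2 ∂(gam n) = 1 → ∫ y, w₂ y ^ 2 ∂(gam n) = 1 →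
    ∑ i, ∫ y, pd i w₁ y ^ 2 ∂(gam n) ≤ 4 → ∑ i, ∫ y, pd i w₂ y ^ 2 ∂(gam n) ≤ 4 →
    ∀ θ : ℝ, 0 < θ → K * θ ≤ 1 → (∀ x, w₁ x * w₂ x ≤ θ ^ 2 * (1 + ‖x‖ ^ 2) ^ 2) →
    ∃ f g ρ : ℝ, 0 ≤ f ∧ 0 ≤ g ∧ 0 ≤ ρ ∧ f + g = 1 ∧ |f - g| ≤ K * (ρ + θ) ∧
      ρ ^ 2 ≤ (∑ i, ∫ y, pd i w₁ y ^ 2 ∂(gam n) - 1) * f +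
        (∑ i, ∫ y, pd i w₂ y ^ 2 ∂(gam n) - 1) * g + K * θ := by
  obtain ⟨K, hK1, hK⟩ := trunc_profile n
  refine ⟨2 * K, by linarith, fun w₁ w₂ hw₁ hw₂ p₁ p₂ i₁ i₂ d₁ d₂ θ hθ hKθ hseg => ?_⟩
  have hθ1 : θ ≤ 1 := by nlinarith
  obtain ⟨f₁, s₁, n₁, t₁, z₁, A₁, B₁, E₁⟩ := hK w₁ hw₁ p₁ i₁ d₁ θ hθ hθ1
  obtain ⟨f₂, s₂, n₂, t₂, z₂, A₂, B₂, E₂⟩ := hK w₂ hw₂ p₂ i₂ d₂ θ hθ hθ1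
  have hdis : ∀ x, f₁ x = 0 ∨ f₂ x = 0 := by
    intro x
    by_contra hcon
    push Not at hcon
    have h1 := t₁ x hcon.1
    have h2 := t₂ x hcon.2
    have h3 := mul_lt_mul'' h1 h2 (mul_pos hθ (weight_pos x)).le (mul_pos hθ (weight_pos x)).le
    have := hseg x
    nlinarith
  have hpos : ∀ {f : Euc n → ℝ}, Sl f → (∀ x, 0 ≤ f x) → 1 - K * θ ≤ ∫ y, f y ^ 2 ∂(gam n) →
      0 < ∫ y, f y ∂(gam n) := by
    intro f hf h0 hB
    refine lt_of_le_of_ne (integral_nonneg h0) fun hz => ?_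
    have := (integral_eq_zero_iff_of_nonneg h0 hf.int).1 hz.symm
    have h2 : ∫ y, f y ^ 2 ∂(gam n) = 0 := by
      rw [integral_congr_ae (g := fun _ => (0 : ℝ))]
      · simp
      · filter_upwards [this] with y hy
        simp [hy]
    rw [h2] at hB; nlinarith
  have hα := hpos s₁ n₁ B₁
  have hβ := hpos s₂ n₂ B₂
  set α := ∫ y, f₁ y ∂(gam n)
  set β := ∫ y, f₂ y ∂(gam n)
  have hα' : 0 < α⁻¹ := inv_pos.2 hα
  have hβ' : 0 < β⁻¹ := inv_pos.2 hβ
  set a := α⁻¹ with ha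
  set b := β⁻¹ with hb
  have hh : Sl (fun x => a * f₁ x - b * f₂ x) := (s₁.const_mul a).sub (s₂.const_mul b)
  have hmean : ∫ y, (a * f₁ y - b * f₂ y) ∂(gam n) = 0 := by
    rw [integral_sub (s₁.const_mul a).int (s₂.const_mul b).int, integral_const_mul,
      integral_const_mul, ha, hb, inv_mul_cancel₀ hα.ne', inv_mul_cancel₀ hβ.ne', sub_self]
  obtain ⟨ρ, hρ0, hρ1, hρ2⟩ := mean_zero_gap hh hmean
  have q1 : ∫ y, (a * f₁ y - b * f₂ y) ^ 2 ∂(gam n) =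
      a ^ 2 * (∫ y, f₁ y ^ 2 ∂(gam n)) + b ^ 2 * ∫ y, f₂ y ^ 2 ∂(gam n) := by
    rw [← integral_const_mul, ← integral_const_mul,
      ← integral_add ((s₁.pow 2).const_mul _).int ((s₂.pow 2).const_mul _).int]
    refine integral_congr_ae (Filter.Eventually.of_forall fun y => ?_)
    rcases hdis y with h | h <;> simp only [h] <;> ring
  have q2 : ∫ y, (a * f₁ y - b * f₂ y) * |a * f₁ y - b * f₂ y| ∂(gam n) =
      a ^ 2 * (∫ y, f₁ y ^ 2 ∂(gam n)) - b ^ 2 * ∫ y, f₂ y ^ 2 ∂(gam n) := by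
    rw [← integral_const_mul, ← integral_const_mul,
      ← integral_sub ((s₁.pow 2).const_mul _).int ((s₂.pow 2).const_mul _).int]
    refine integral_congr_ae (Filter.Eventually.of_forall fun y => ?_)
    rcases hdis y with h | h <;> simp only [h]
    · rw [mul_zero, zero_sub, abs_neg, abs_of_nonneg (mul_nonneg hβ'.le (n₂ y))]; ring
    · rw [mul_zero, sub_zero, abs_of_nonneg (mul_nonneg hα'.le (n₁ y))]; ring
  have q3 : ∑ i, ∫ y, pd i (fun x => a * f₁ x - b * f₂ x) y ^ 2 ∂(gam n) =
      a ^ 2 * (∑ i, ∫ y, pd i f₁ y ^ 2 ∂(gam n)) + b ^ 2 * ∑ i, ∫ y, pd i f₂ y ^ 2 ∂(gam n) := by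
    rw [Finset.mul_sum, Finset.mul_sum, ← Finset.sum_add_distrib]
    refine Finset.sum_congr rfl fun i _ => ?_
    rw [pd_sub (s₁.const_mul a).diff (s₂.const_mul b).diff, pd_const_mul _ s₁.diff,
      pd_const_mul _ s₂.diff, ← integral_const_mul, ← integral_const_mul,
      ← integral_add (((s₁.pd i).pow 2).const_mul _).int (((s₂.pd i).pow 2).const_mul _).int]
    refine integral_congr_ae (Filter.Eventually.of_forall fun y => ?_)
    rcases hdis y with h | h
    · simp only [z₁ y h]; ring
    · simp only [z₂ y h]; ring
  rw [q1, q3] at hρ1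
  rw [q1, q2] at hρ2
  exact static_algebra hα' hβ' hK1 hθ A₁ B₁ E₁ A₂ B₂ E₂ hρ0 hρ1 hρ2

end static


/-! ### The differential inequality, algebraic part -/

set_option maxHeartbeats 1000000 in
lemma alg_aux {p q x y m τ ν θ K f g ρ : ℝ} (hK : 1 ≤ K) (hq : 0 ≤ q) (hqp : q ≤ p)
    (hpq : p + q = 1) (hx : -1 ≤ x) (hy : -1 ≤ y) (hxy : x + y < 0) (hm : 0 ≤ m)
    (hpx : p * x + q * y = -m + τ) (hτ : 0 ≤ τ) (hν : τ + p * q * (x - y) ^ 2 ≤ ν)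
    (hθ : 0 < θ) (_ : 0 ≤ f) (hg : 0 ≤ g) (_ : 0 ≤ ρ) (hfg : f + g = 1)
    (habs : |f - g| ≤ K * (ρ + θ)) (hρ2 : ρ ^ 2 ≤ x * f + y * g + K * θ) :
    -(100 * K ^ 6 * (ν + θ)) ≤ x + y + K ^ 2 / 2 * ((p - q) * (y - x)) := by
  have hKp : 0 < K := by linarith
  have k2 : 1 ≤ K ^ 2 := one_le_pow₀ hK
  have hτν : τ ≤ ν := by linarith [mul_nonneg (mul_nonneg (hq.trans hqp) hq) (sq_nonneg (x - y))]
  have hν0 : 0 ≤ ν := hτ.trans hτν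
  have p1 : K ≤ K ^ 6 := le_self_pow₀ hK (by norm_num)
  have p2 : K ^ 2 ≤ K ^ 6 := pow_le_pow_right₀ hK (by norm_num)
  have p3 : K ^ 3 ≤ K ^ 6 := pow_le_pow_right₀ hK (by norm_num)
  have p4 : K ^ 4 ≤ K ^ 6 := pow_le_pow_right₀ hK (by norm_num)
  have p5 : K ^ 5 ≤ K ^ 6 := pow_le_pow_right₀ hK (by norm_num)
  set d := x - y with hd
  have hd2 : |d| ≤ 2 := by rw [abs_le]; constructor <;> linarith
  obtain ⟨hd3, hd4⟩ := abs_le.1 hd2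
  -- the lower bound for `x + y` coming from the static estimate
  have hE : -(K ^ 2 * d ^ 2 / 8) - 6 * K * θ ≤ x + y := by
    have e : x * f + y * g = (x + y) / 2 + (f - g) * d / 2 := by
      have : f = 1 - g := by linarith
      rw [hd, this]; ring
    have h1 : (f - g) * d ≤ K * (ρ + θ) * |d| := by
      refine (le_abs_self _).trans ?_
      rw [abs_mul]
      exact mul_le_mul_of_nonneg_right habs (abs_nonneg _)
    have h2 : K * θ * |d| ≤ K * θ * 2 := mul_le_mul_of_nonneg_left hd2 (by positivity)
    have h3 : |d| ^ 2 = d ^ 2 := sq_abs d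
    have h4 : K ^ 2 * |d| ^ 2 = K ^ 2 * d ^ 2 := by rw [h3]
    linarith [sq_nonneg (ρ - K * |d| / 4), mul_pos hKp hθ]
  have hEx : x + y + K ^ 2 / 2 * ((p - q) * (y - x)) =
      (1 + K ^ 2 / 2) * (x + y) + K ^ 2 * m - K ^ 2 * τ := by
    have e : p = 1 - q := by linarith
    have hm' : m = τ - (p * x + q * y) := by linarith
    rw [hm', e]; ring
  rcases le_total q (3 / (16 * K ^ 2)) with hqs | hqs
  · have hq1 : q * (16 * K ^ 2) ≤ 3 := by rwa [le_div_iff₀ (by positivity)] at hqs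
    have hq2 : 1 / 2 ≤ p - q := by nlinarith
    rcases le_total d 0 with hdn | hdp
    · have h1 : K ^ 2 / 2 * (1 / 2 * (-d)) ≤ K ^ 2 / 2 * ((p - q) * (y - x)) := by
        have : y - x = -d := by rw [hd]; ring
        rw [this]
        exact mul_le_mul_of_nonneg_left (mul_le_mul_of_nonneg_right hq2 (by linarith))
          (by positivity)
      have h2 : K ^ 2 * d ^ 2 / 8 ≤ K ^ 2 / 2 * (1 / 2 * (-d)) := by
        have h0 : d ^ 2 ≤ 2 * (-d) := by
          have := mul_nonneg (neg_nonneg.2 hdn) (by linarith : 0 ≤ 2 + d)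
          linarith
        have := mul_le_mul_of_nonneg_left h0 (sq_nonneg K)
        linarith
      have h3 : K * θ ≤ K ^ 6 * θ := mul_le_mul_of_nonneg_right p1 hθ.le
      have h4 : 0 ≤ K ^ 6 * ν := by positivity
      have h5 : 0 ≤ K ^ 6 * θ := by positivity
      linarith
    · have hxl : 3 / 8 * d - 2 * K ^ 3 * θ ≤ K ^ 2 * x := by
        have e : x * f + y * g = x - g * d := by
          have : f = 1 - g := by linarith
          rw [hd, this]; ring
        have h1 : ρ ^ 2 - K * θ ≤ x - g * d := by linarith
        have h2 : (1 / 2 - K * (ρ + θ) / 2) * d ≤ g * d := by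
          refine mul_le_mul_of_nonneg_right ?_ hdp
          linarith [(abs_le.1 habs).2]
        have h3 : ρ ^ 2 + d / 2 - K * ρ * d / 2 - 2 * (K * θ) ≤ x := by
          have : K * θ * d ≤ K * θ * 2 := mul_le_mul_of_nonneg_left hd4 (by positivity)
          linarith
        have h4 : ρ ^ 2 - K * θ ≤ x := by linarith [mul_nonneg hg hdp]
        have h5 : (K ^ 2 - 1) * (ρ ^ 2 - 2 * (K * θ)) ≤ (K ^ 2 - 1) * x :=
          mul_le_mul_of_nonneg_left (by linarith [mul_pos hKp hθ]) (by linarith)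
        have h6 : d ^ 2 ≤ 2 * d := by
          have := mul_nonneg hdp (by linarith : 0 ≤ 2 - d)
          linarith
        linarith [sq_nonneg (K * ρ - d / 4)]
      have hτl : K ^ 2 * x - K ^ 2 * (q * d) ≤ K ^ 2 * τ := by
        rw [← mul_sub]
        refine mul_le_mul_of_nonneg_left ?_ (by positivity)
        have e : p = 1 - q := by linarith
        rw [e] at hpx
        rw [hd]; linarith
      have hdl : d ≤ 16 / 3 * (K ^ 2 * τ + 2 * K ^ 3 * θ) := by
        have h1 : K ^ 2 * (q * d) ≤ 3 / 16 * d := by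
          have := mul_le_mul_of_nonneg_right hq1 hdp
          linarith
        linarith
      have h1 : -(K ^ 2 / 2 * d) ≤ K ^ 2 / 2 * ((p - q) * (y - x)) := by
        have e : y - x = -d := by rw [hd]; ring
        rw [e, ← mul_neg]
        refine mul_le_mul_of_nonneg_left ?_ (by positivity)
        have := mul_nonneg hdp (by linarith : 0 ≤ 1 - (p - q))
        linarith
      have h2 : K ^ 2 * d ^ 2 / 8 ≤ K ^ 2 * d / 4 := by
        have h0 : d ^ 2 ≤ 2 * d := by
          have := mul_nonneg hdp (by linarith : 0 ≤ 2 - d)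
          linarith
        have := mul_le_mul_of_nonneg_left h0 (sq_nonneg K)
        linarith
      have h3 : K ^ 2 * d ≤ K ^ 2 * (16 / 3 * (K ^ 2 * τ + 2 * K ^ 3 * θ)) :=
        mul_le_mul_of_nonneg_left hdl (by positivity)
      have h4 : K * θ ≤ K ^ 6 * θ := mul_le_mul_of_nonneg_right p1 hθ.le
      have h5 : K ^ 5 * θ ≤ K ^ 6 * θ := mul_le_mul_of_nonneg_right p5 hθ.le
      have h6 : K ^ 4 * τ ≤ K ^ 6 * ν := mul_le_mul p4 hτν hτ (by positivity)
      have h7 : 0 ≤ K ^ 6 * ν := by positivity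
      have h8 : 0 ≤ K ^ 6 * θ := by positivity
      linarith
  · have hq1 : 3 ≤ q * (16 * K ^ 2) := by rwa [div_le_iff₀ (by positivity)] at hqs
    have hp : 1 / 2 ≤ p := by linarith
    have h1 : 3 / 32 * d ^ 2 ≤ K ^ 2 * ν := by
      have h2 : 3 / 32 ≤ K ^ 2 * (p * q) := by
        have h3 := mul_nonneg (sq_nonneg K) (mul_nonneg hq (by linarith : 0 ≤ p - 1 / 2))
        linarith
      have h3 := mul_le_mul_of_nonneg_right h2 (sq_nonneg d)
      have h4 : K ^ 2 * (p * q * d ^ 2) ≤ K ^ 2 * ν :=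
        mul_le_mul_of_nonneg_left (by linarith) (by positivity)
      linarith
    rw [hEx]
    have h2 : K ^ 2 * d ^ 2 ≤ 32 / 3 * (K ^ 4 * ν) := by
      have := mul_le_mul_of_nonneg_left h1 (sq_nonneg K)
      linarith
    have h3 : K ^ 4 * d ^ 2 ≤ 32 / 3 * (K ^ 6 * ν) := by
      have := mul_le_mul_of_nonneg_left h1 (by positivity : 0 ≤ K ^ 4)
      linarith
    have h4 : (1 + K ^ 2 / 2) * (-(K ^ 2 * d ^ 2 / 8) - 6 * K * θ) ≤ (1 + K ^ 2 / 2) * (x + y) :=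
      mul_le_mul_of_nonneg_left hE (by positivity)
    have h5 : K ^ 2 * τ ≤ K ^ 6 * ν := mul_le_mul p2 hτν hτ (by positivity)
    have h6 : K ^ 4 * ν ≤ K ^ 6 * ν := mul_le_mul_of_nonneg_right p4 hν0
    have h7 : K * θ ≤ K ^ 6 * θ := mul_le_mul_of_nonneg_right p1 hθ.le
    have h8 : K ^ 3 * θ ≤ K ^ 6 * θ := mul_le_mul_of_nonneg_right p3 hθ.le
    have h9 : 0 ≤ K ^ 2 * m := by positivity
    have h10 : 0 ≤ K ^ 6 * ν := by positivity
    have h11 : 0 ≤ K ^ 6 * θ := by positivity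
    linarith

/-- The quantity governing the logarithmic derivative of the potential is bounded below by the
derivative of the frequency and by the segregation parameter `θ`. -/
lemma alg_main {p q x y m τ ν θ K : ℝ} (hK : 1 ≤ K) (hp : 0 ≤ p) (hq : 0 ≤ q)
    (hpq : p + q = 1) (hx : -1 ≤ x) (hy : -1 ≤ y) (hm : 0 ≤ m)
    (hpx : p * x + q * y = -m + τ) (hτ : 0 ≤ τ) (hτ1 : τ ≤ 1)
    (hν : τ + p * q * (x - y) ^ 2 ≤ ν) (hθ : 0 < θ)
    (hS : K * θ ≤ 1 → x ≤ 3 → y ≤ 3 → ∃ f g ρ : ℝ, 0 ≤ f ∧ 0 ≤ g ∧ 0 ≤ ρ ∧ f + g = 1 ∧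
      |f - g| ≤ K * (ρ + θ) ∧ ρ ^ 2 ≤ x * f + y * g + K * θ) :
    -(100 * K ^ 6 * (ν + θ)) ≤ x + y + K ^ 2 / 2 * ((p - q) * (y - x)) := by
  have k2 : 1 ≤ K ^ 2 := one_le_pow₀ hK
  have hτν : τ ≤ ν := by nlinarith [mul_nonneg (mul_nonneg hp hq) (sq_nonneg (x - y))]
  have hν0 : 0 ≤ ν := hτ.trans hτν
  have hEx : x + y + K ^ 2 / 2 * ((p - q) * (y - x)) =
      (1 + K ^ 2 / 2) * (x + y) + K ^ 2 * m - K ^ 2 * τ := by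
    have e : p = 1 - q := by linarith
    have hm' : m = τ - (p * x + q * y) := by linarith
    rw [hm', e]; ring
  have p1 : K ≤ K ^ 6 := le_self_pow₀ hK (by norm_num)
  have p2 : K ^ 2 ≤ K ^ 6 := pow_le_pow_right₀ hK (by norm_num)
  have p3 : K ^ 3 ≤ K ^ 6 := pow_le_pow_right₀ hK (by norm_num)
  have h9 : 0 ≤ K ^ 2 * m := by positivity
  have h10 : 0 ≤ K ^ 6 * ν := by positivity
  have h11 : 0 ≤ K ^ 6 * θ := by positivity
  have h5 : K ^ 2 * τ ≤ K ^ 6 * ν := mul_le_mul p2 hτν hτ (by positivity)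
  rcases le_or_gt 0 (x + y) with h | h
  · rw [hEx]
    have : 0 ≤ (1 + K ^ 2 / 2) * (x + y) := mul_nonneg (by positivity) h
    linarith
  rcases le_or_gt (K * θ) 1 with hθK | hθK
  · obtain ⟨f, g, ρ, hf, hg, hρ, hfg, hab, hρ2⟩ := hS hθK (by linarith) (by linarith)
    rcases le_total q p with hqp | hqp
    · exact alg_aux hK hq hqp hpq hx hy h hm hpx hτ hν hθ hf hg hρ hfg hab hρ2
    · have := alg_aux hK hp hqp (by linarith) hy hx (by linarith) hm (by linarith) hτ
        (by nlinarith) hθ hg hf hρ (by linarith) (by rwa [abs_sub_comm]) (by linarith) (ν := ν)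
      linarith
  · rw [hEx]
    have h1 : (1 + K ^ 2 / 2) * (-2) ≤ (1 + K ^ 2 / 2) * (x + y) :=
      mul_le_mul_of_nonneg_left (by linarith) (by positivity)
    have h2 : K ^ 2 * τ ≤ K ^ 2 := mul_le_of_le_one_right (by positivity) hτ1
    have h3 : K ^ 5 * 1 ≤ K ^ 5 * (K * θ) := mul_le_mul_of_nonneg_left hθK.le (by positivity)
    have h4 : K ^ 2 ≤ K ^ 5 := pow_le_pow_right₀ hK (by norm_num)
    linarith


/-! ### Good scales -/

section good
variable {n : ℕ} {u v : Euc n → ℝ} {c : Euc n} {r : ℝ}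

lemma profile_norm (h : Sol u v) (hr : 0 < r) :
    ∫ y, ((Real.sqrt (Uf u c r))⁻¹ * u (c + r • y)) ^ 2 ∂(gam n) = 1 := by
  have hU := Uf_pos h hr.le (c := c)
  simp_rw [mul_pow]
  rw [integral_const_mul, inv_pow, Real.sq_sqrt hU.le]
  exact inv_mul_cancel₀ hU.ne'

lemma profile_energy (h : Sol u v) (hr : 0 < r) :
    ∑ i, ∫ y, pd i (fun z => (Real.sqrt (Uf u c r))⁻¹ * u (c + r • z)) y ^ 2 ∂(gam n)
      = r ^ 2 * Gf u c r / Uf u c r := by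
  have hU := Uf_pos h hr.le (c := c)
  have e : ∀ i, ∫ y, pd i (fun z => (Real.sqrt (Uf u c r))⁻¹ * u (c + r • z)) y ^ 2 ∂(gam n)
      = r ^ 2 / Uf u c r * ∫ y, pd i u (c + r • y) ^ 2 ∂(gam n) := by
    intro i
    rw [pd_const_mul _ (h.su.affine c r).diff, pd_affine h.su.diff, ← integral_const_mul]
    refine integral_congr_ae (Filter.Eventually.of_forall fun y => ?_)
    simp only
    rw [mul_pow, mul_pow, inv_pow, Real.sq_sqrt hU.le]; ring
  simp_rw [e]
  rw [← Finset.mul_sum, Gf, integral_finsetSum _ fun i _ => (((h.su.pd i).pow 2).affine c r).int]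
  ring

lemma profile_energy_le (h : Sol u v) (hr : 0 < r) :
    r ^ 2 * Gf u c r / Uf u c r - 1 ≤ xf u v c r := by
  rw [xf]
  have hU := Uf_pos h hr.le (c := c)
  have : r ^ 2 * Gf u c r / Uf u c r ≤ r ^ 2 * (Gf u c r + Wf u v c r) / Uf u c r :=
    div_le_div_of_nonneg_right (mul_le_mul_of_nonneg_left
      (by linarith [Wf_nonneg (u := u) (v := v) (c := c) (r := r)]) (sq_nonneg r)) hU.le
  linarith

/-- At a scale where the two components are segregated up to `θ`, the sum of the logarithmic
derivatives is bounded below in terms of the derivative of the frequency and of `θ`. -/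
lemma scale_ineq (n : ℕ) : ∃ K ≥ (1 : ℝ), ∀ u v : Euc n → ℝ, Sol u v → ∀ C : ℝ,
    (∀ x, u x + v x ≤ C * (1 + ‖x‖)) → ∀ (c : Euc n) (r : ℝ), 0 < r → ∀ θ : ℝ, 0 < θ →
    (∀ ξ : Euc n, u (c + r • ξ) * v (c + r • ξ) ≤
      θ ^ 2 * (1 + ‖ξ‖ ^ 2) ^ 2 * (Real.sqrt (Uf u c r) * Real.sqrt (Uf v c r))) →
    -(100 * K ^ 6 * (nuf u v c r + θ)) ≤ (1 + K ^ 2 / 2) * (2 + xf u v c r + xf v u c r)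
      - K ^ 2 * (Nf u v c r + tf u v c r) - 2 := by
  obtain ⟨K, hK1, hK⟩ := static_stability n
  refine ⟨K, hK1, fun u v h C hC c r hr θ hθ hseg => ?_⟩
  have hU := Uf_pos h hr.le (c := c)
  have hV := Uf_pos h.swap hr.le (c := c)
  have hH := Hf_pos h hr.le (c := c)
  have hpq : Uf u c r / Hf u v c r + Uf v c r / Hf u v c r = 1 := by
    rw [← add_div]; exact div_self hH.ne'
  have hpx := px_add_qy h hr.le (c := c)
  have hN1 := Nf_le_one h hC hr (c := c)
  have hx3 := profile_energy_le h hr (c := c)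
  have hy3 := profile_energy_le h.swap hr (c := c)
  have hmain := alg_main (p := Uf u c r / Hf u v c r) (q := Uf v c r / Hf u v c r)
    (x := xf u v c r) (y := xf v u c r) (m := 1 - Nf u v c r) (τ := tf u v c r)
    (ν := nuf u v c r) (θ := θ) (K := K) hK1 (by positivity) (by positivity) hpq
    (xf_ge h hr.le) (xf_ge h.swap hr.le) (by linarith) (by linarith) (tf_nonneg h hr.le)
    ((tf_le_Nf h hr.le).trans hN1) (nuf_ge h hr.le) hθ (fun hKθ hx hy => by
      have hsU := Real.sqrt_pos.2 hU
      have hsV := Real.sqrt_pos.2 hV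
      obtain ⟨f, g, ρ, hf, hg, hρ, hfg, hab, hle⟩ := hK
        (fun z => (Real.sqrt (Uf u c r))⁻¹ * u (c + r • z))
        (fun z => (Real.sqrt (Uf v c r))⁻¹ * v (c + r • z))
        ((h.su.affine c r).const_mul _) ((h.sv.affine c r).const_mul _)
        (fun x => mul_nonneg (inv_nonneg.2 hsU.le) (h.pu _).le)
        (fun x => mul_nonneg (inv_nonneg.2 hsV.le) (h.pv _).le)
        (profile_norm h hr) (profile_norm h.swap hr)
        (by rw [profile_energy h hr]; linarith) (by rw [profile_energy h.swap hr]; linarith)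
        θ hθ hKθ (fun ξ => by
          have := hseg ξ
          have e : (Real.sqrt (Uf u c r))⁻¹ * u (c + r • ξ) *
              ((Real.sqrt (Uf v c r))⁻¹ * v (c + r • ξ)) = u (c + r • ξ) * v (c + r • ξ) /
              (Real.sqrt (Uf u c r) * Real.sqrt (Uf v c r)) := by
            field_simp
          rw [e, div_le_iff₀ (by positivity)]
          exact this)
      rw [profile_energy h hr, profile_energy h.swap hr] at hle
      refine ⟨f, g, ρ, hf, hg, hρ, hfg, hab, hle.trans ?_⟩
      have h1 := mul_le_mul_of_nonneg_right hx3 hf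
      have h2 := mul_le_mul_of_nonneg_right hy3 hg
      linarith)
  refine hmain.trans (le_of_eq ?_)
  have e : Nf u v c r + tf u v c r = 1 + (Uf u c r / Hf u v c r * xf u v c r +
    Uf v c r / Hf u v c r * xf v u c r) := by rw [hpx]; ring
  have e2 : Uf v c r / Hf u v c r = 1 - Uf u c r / Hf u v c r := by linarith
  rw [e, e2]; ring

/-- At a scale with controlled growth of `E u² · E v²` the two components are segregated. -/
lemma good_seg (h : Sol u v) (hr : 0 < r)
    (hgood : ∀ t ≥ (1 : ℝ), Uf u c (t * r) * Uf v c (t * r) ≤ t ^ 8 * (Uf u c r * Uf v c r))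
    {A κ : ℝ} (hA : A = (2 : ℝ) ^ n * Real.exp 1 * 2 ^ 4) (hκ : 0 < κ)
    (hκr : κ ^ 2 ≤ r ^ 4 * (Uf u c r * Uf v c r)) {θ : ℝ} (hθ : 0 < θ)
    (h1 : A ^ 8 ≤ θ ^ 18 * κ) (h2 : 1 ≤ θ ^ 18 * κ ^ 9) (ξ : Euc n) :
    u (c + r • ξ) * v (c + r • ξ) ≤
      θ ^ 2 * (1 + ‖ξ‖ ^ 2) ^ 2 * (Real.sqrt (Uf u c r) * Real.sqrt (Uf v c r)) := by
  have hU := Uf_pos h hr.le (c := c)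
  have hV := Uf_pos h.swap hr.le (c := c)
  set x := c + r • ξ with hx
  set z := u x * v x with hz
  have hz0 : 0 < z := mul_pos (h.pu _) (h.pv _)
  set s := 1 + ‖ξ‖ ^ 2 with hs
  have hs1 : 1 ≤ s := by rw [hs]; nlinarith [norm_nonneg ξ]
  set q := Real.sqrt (Uf u c r) * Real.sqrt (Uf v c r) with hq
  have hq0 : 0 < q := by positivity
  have hq2 : q ^ 2 = Uf u c r * Uf v c r := by
    rw [hq, mul_pow, Real.sq_sqrt hU.le, Real.sq_sqrt hV.le]
  rw [← hq2] at hκr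
  have hκq : κ ≤ r ^ 2 * q := by
    refine le_of_sq_le_sq ?_ (by positivity)
    linarith
  refine le_of_pow_le_pow_left₀ (n := 9) (by norm_num) (by positivity) ?_
  have e9 : (θ ^ 2 * s ^ 2 * q) ^ 9 = θ ^ 18 * s ^ 18 * q ^ 9 := by ring
  rw [e9]
  set t := Real.sqrt s with ht
  have ht2 : t ^ 2 = s := Real.sq_sqrt (by linarith)
  have ht1 : 1 ≤ t := Real.one_le_sqrt.2 hs1
  have ht0 : 0 < t := by linarith
  have htr : 0 < t * r := by positivity
  rcases le_total 1 ((t * r) ^ 2 * z) with hc | hc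
  · have hw := weak_acf h htr hc
    have hxc : ‖x - c‖ ^ 2 / (6 * (t * r) ^ 2) ≤ 1 := by
      have e : x - c = r • ξ := by rw [hx]; abel
      rw [div_le_one (by positivity), e, norm_smul, mul_pow, mul_pow, ht2, hs, Real.norm_eq_abs,
        sq_abs]
      nlinarith [sq_nonneg (r * ‖ξ‖), sq_nonneg r]
    have hcmp : ∀ w : Euc n → ℝ, Sl w → Uf w x (t * r) ≤ 2 ^ n * Real.exp 1 * Uf w c (2 * (t * r)) := by
      intro w hw
      refine (compare (c := c) (x := x) (hw.pow 2).tame (fun _ => sq_nonneg _) htr).trans ?_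
      have : 0 ≤ Uf w c (2 * (t * r)) := Uf_nonneg
      exact mul_le_mul_of_nonneg_right (mul_le_mul_of_nonneg_left (Real.exp_le_exp.2 hxc)
        (by positivity)) this
    have hprod : Uf u x (t * r) * Uf v x (t * r) ≤ A ^ 2 * (s ^ 4 * q ^ 2) := by
      have h3 := mul_le_mul (hcmp u h.su) (hcmp v h.sv) Uf_nonneg
        (mul_nonneg (by positivity) Uf_nonneg)
      have h4 := hgood (2 * t) (by linarith)
      rw [← hq2] at h4
      have e : 2 * t * r = 2 * (t * r) := by ring
      rw [e] at h4
      have e2 : (2 * t) ^ 8 = 2 ^ 8 * s ^ 4 := by rw [← ht2]; ring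
      rw [e2] at h4
      have h5 := mul_le_mul_of_nonneg_left h4 (sq_nonneg ((2 : ℝ) ^ n * Real.exp 1))
      rw [hA]
      linarith
    have h6 := pow_le_pow_left₀ (mul_nonneg Uf_nonneg Uf_nonneg) hprod 4
    have h7 : z ^ 9 * (t * r) ^ 2 ≤ A ^ 8 * (s ^ 16 * q ^ 8) := by
      refine (hw.trans h6).trans (le_of_eq ?_); ring
    have h8 : z ^ 9 * r ^ 2 ≤ A ^ 8 * (s ^ 18 * q ^ 8) := by
      have h9 : z ^ 9 * r ^ 2 ≤ z ^ 9 * (t * r) ^ 2 := by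
        rw [mul_pow t r 2]
        refine mul_le_mul_of_nonneg_left ?_ (pow_nonneg hz0.le 9)
        exact le_mul_of_one_le_left (sq_nonneg r) (one_le_pow₀ ht1)
      have h10 : s ^ 16 ≤ s ^ 18 := pow_le_pow_right₀ hs1 (by norm_num)
      exact (h9.trans h7).trans (mul_le_mul_of_nonneg_left
        (mul_le_mul_of_nonneg_right h10 (by positivity)) (by positivity))
    have h9 : z ^ 9 * r ^ 2 ≤ (θ ^ 18 * s ^ 18 * q ^ 9) * r ^ 2 := by
      have h10 := mul_le_mul_of_nonneg_right h1 (by positivity : 0 ≤ s ^ 18 * q ^ 8)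
      have h11 := mul_le_mul_of_nonneg_right hκq (by positivity : 0 ≤ θ ^ 18 * (s ^ 18 * q ^ 8))
      linarith
    exact le_of_mul_le_mul_right h9 (by positivity)
  · have h3 : z * r ^ 2 ≤ 1 := by
      refine le_trans ?_ hc
      rw [mul_comm, mul_pow t r 2]
      exact mul_le_mul_of_nonneg_right (le_mul_of_one_le_left (sq_nonneg r) (one_le_pow₀ ht1)) hz0.le
    have h4 : z * κ ≤ q := by
      calc z * κ ≤ z * (r ^ 2 * q) := mul_le_mul_of_nonneg_left hκq hz0.le
        _ = z * r ^ 2 * q := by ring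
        _ ≤ 1 * q := mul_le_mul_of_nonneg_right h3 hq0.le
        _ = q := one_mul q
    have h5 := pow_le_pow_left₀ (by positivity) h4 9
    have h6 : 1 ≤ s ^ 18 := one_le_pow₀ hs1
    calc z ^ 9 ≤ z ^ 9 * (θ ^ 18 * κ ^ 9) := le_mul_of_one_le_right (by positivity) h2
      _ = θ ^ 18 * (z * κ) ^ 9 := by ring
      _ ≤ θ ^ 18 * q ^ 9 := mul_le_mul_of_nonneg_left h5 (by positivity)
      _ ≤ θ ^ 18 * q ^ 9 * s ^ 18 := le_mul_of_one_le_right (by positivity) h6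
      _ = _ := by ring

end good


/-! ### The almost monotone potential -/

/-- A function which, at each point, either increases infinitesimally or admits a later point where
it is not smaller, returns above its initial value at arbitrarily late times. -/
lemma unbounded_of_jump {F F' : ℝ → ℝ} {a : ℝ} (hd : ∀ r ≥ a, HasDerivAt F (F' r) r)
    (hstep : ∀ r ≥ a, 0 < F' r ∨ ∃ s > r, F r ≤ F s) (T : ℝ) : ∃ r ≥ T, a ≤ r ∧ F a ≤ F r := by
  by_contra hcon
  push Not at hcon
  set S : Set ℝ := Ici a ∩ F ⁻¹' (Ici (F a)) with hS
  have hcl : IsClosed S :=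
    ContinuousOn.preimage_isClosed_of_isClosed
      (fun t ht => (hd t ht).continuousAt.continuousWithinAt) isClosed_Ici isClosed_Ici
  have hbdd : BddAbove S := ⟨T, fun r hr => by
    by_contra h
    exact absurd (hcon r (not_le.1 h).le hr.1) (not_lt.2 hr.2)⟩
  have hmem : sSup S ∈ S := hcl.csSup_mem ⟨a, le_refl a, le_refl (F a)⟩ hbdd
  have hup : ∀ s > sSup S, ¬ F (sSup S) ≤ F s := fun s hs hle =>
    absurd (le_csSup hbdd (show s ∈ S from ⟨le_trans hmem.1 hs.le, le_trans hmem.2 hle⟩))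
      (not_le.2 hs)
  rcases hstep _ hmem.1 with h | ⟨s, hs, hle⟩
  · have h1 := (hasDerivAt_iff_tendsto_slope.1 (hd _ hmem.1)).eventually (lt_mem_nhds h)
    have h2 : ∀ᶠ t in nhdsWithin (sSup S) (Ioi (sSup S)), 0 < slope F (sSup S) t :=
      h1.filter_mono (nhdsWithin_mono _ fun t ht => ne_of_gt ht)
    obtain ⟨t, ht, hts⟩ := (h2.and self_mem_nhdsWithin).exists
    refine hup t hts ?_
    rw [slope_def_field, div_pos_iff_of_pos_right (sub_pos.2 hts)] at ht
    linarith
  · exact hup s hs hle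

section potential
variable {n : ℕ}

/-- The potential `(1 + K²/2) log (U V) - K² log H - 4 log r + 100 K⁶ N - C₂ θ(r)` built from the
`L²` norms and the frequency at scale `r`, with `θ(r) = B (r / a) ^ (-1 / 9)` and
`C₂ = 18 (100 K⁶ + 1)`. -/
noncomputable def Pot (u v : Euc n → ℝ) (c : Euc n) (K B a r : ℝ) : ℝ :=
  (1 + K ^ 2 / 2) * (Real.log (Uf u c r) + Real.log (Uf v c r)) - K ^ 2 * Real.log (Hf u v c r)
    - 4 * Real.log r + 100 * K ^ 6 * Nf u v c r
    - 18 * (100 * K ^ 6 + 1) * (B * Real.exp (-(Real.log r - Real.log a) / 9))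

lemma Pot_deriv {u v : Euc n → ℝ} {c : Euc n} {K B a r : ℝ} (h : Sol u v) (hr : 0 < r) :
    HasDerivAt (Pot u v c K B a) (2 / r * ((1 + K ^ 2 / 2) * (2 + xf u v c r + xf v u c r)
      - K ^ 2 * (Nf u v c r + tf u v c r) - 2 + 100 * K ^ 6 * nuf u v c r
      + (100 * K ^ 6 + 1) * (B * Real.exp (-(Real.log r - Real.log a) / 9)))) r := by
  have hU := (Uf_pos h hr.le (c := c)).ne'
  have hV := (Uf_pos h.swap hr.le (c := c)).ne'
  have hH := (Hf_pos h hr.le (c := c)).ne'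
  have d1 := ((Uf_deriv' h hr (c := c)).log hU).fun_add ((Uf_deriv' h.swap hr (c := c)).log hV)
  have d2 := (Hf_deriv' h hr (c := c)).log hH
  have d3 := Real.hasDerivAt_log hr.ne'
  have d4 := Nf_deriv h hr (c := c)
  have d5 := (((d3.fun_sub (hasDerivAt_const r (Real.log a))).fun_neg.div_const 9).exp).const_mul B
  refine (((((d1.const_mul (1 + K ^ 2 / 2)).fun_sub (d2.const_mul (K ^ 2))).fun_sub
    (d3.const_mul 4)).fun_add (d4.const_mul (100 * K ^ 6))).fun_sub
    (d5.const_mul (18 * (100 * K ^ 6 + 1)))).congr_deriv ?_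
  generalize Real.exp (-(Real.log r - Real.log a) / 9) = E
  rw [mul_div_cancel_right₀ _ hU, mul_div_cancel_right₀ _ hV, mul_div_cancel_right₀ _ hH]
  field_simp
  ring

set_option maxHeartbeats 1000000 in
/-- A scale at which `U V` grows faster than the eighth power is a jump point of the potential. -/
lemma Pot_jump {u v : Euc n → ℝ} {c : Euc n} {C K B a r t : ℝ} (h : Sol u v)
    (hC : ∀ x, u x + v x ≤ C * (1 + ‖x‖)) (hr : 0 < r) (hB : 0 ≤ B) (ht1 : 1 ≤ t)
    (hbad : t ^ 8 * (Uf u c r * Uf v c r) < Uf u c (t * r) * Uf v c (t * r)) :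
    Pot u v c K B a r ≤ Pot u v c K B a (t * r) := by
  have hU := Uf_pos h hr.le (c := c)
  have hV := Uf_pos h.swap hr.le (c := c)
  have ht0 : 0 < t := by linarith
  have hts : r ≤ t * r := le_mul_of_one_le_left hr.le ht1
  have htr : 0 < t * r := by positivity
  have hU' := Uf_pos h htr.le (c := c)
  have hV' := Uf_pos h.swap htr.le (c := c)
  have hH := Hf_pos h hr.le (c := c)
  have hH' := Hf_pos h htr.le (c := c)
  have hlt : 0 ≤ Real.log t := Real.log_nonneg ht1
  have l1 := Real.log_le_log (by positivity) hbad.le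
  rw [Real.log_mul (by positivity) (by positivity), Real.log_mul hU.ne' hV.ne',
    Real.log_mul hU'.ne' hV'.ne', Real.log_pow] at l1
  have l2 : Real.log (Hf u v c (t * r)) ≤ 4 * Real.log t + Real.log (Hf u v c r) := by
    have := Hf_quad h hC hr hts (c := c)
    rw [div_le_div_iff₀ (by positivity) (by positivity)] at this
    have h2 : Hf u v c (t * r) ≤ t ^ 4 * Hf u v c r := by
      refine le_of_mul_le_mul_right ?_ (by positivity : 0 < r ^ 4)
      calc _ ≤ _ := this
        _ = _ := by ring
    have h3 := Real.log_le_log hH' h2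
    rw [Real.log_mul (by positivity) hH.ne', Real.log_pow] at h3
    exact_mod_cast h3
  have l3 : Real.log (t * r) = Real.log t + Real.log r := Real.log_mul ht0.ne' hr.ne'
  have l4 := Nf_mono h hr hts (c := c)
  have l5 : B * Real.exp (-(Real.log (t * r) - Real.log a) / 9)
      ≤ B * Real.exp (-(Real.log r - Real.log a) / 9) :=
    mul_le_mul_of_nonneg_left (Real.exp_le_exp.2 (by rw [l3]; linarith)) hB
  rw [Pot, Pot]
  have k0 : 0 ≤ K ^ 6 := by positivity
  have m1 := mul_le_mul_of_nonneg_left l1 (by positivity : 0 ≤ 1 + K ^ 2 / 2)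
  have m2 := mul_le_mul_of_nonneg_left l2 (sq_nonneg K)
  have m4 := mul_le_mul_of_nonneg_left l4 (by positivity : 0 ≤ 100 * K ^ 6)
  have m5 := mul_le_mul_of_nonneg_left l5 (by positivity : 0 ≤ 18 * (100 * K ^ 6 + 1))
  push_cast at m1
  rw [l3] at m5 ⊢
  have : 0 ≤ K ^ 2 * Real.log t := by positivity
  linarith

lemma exists_pot_const {κ₀ : ℝ} (hκ₀ : 0 < κ₀) (A : ℝ) :
    ∃ B : ℝ, 1 ≤ B ∧ A ^ 8 ≤ B ^ 18 * κ₀ ∧ 1 ≤ B ^ 18 * κ₀ ^ 9 := by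
  have hb1 : 0 ≤ A ^ 8 / κ₀ := by positivity
  have hb2 : 0 < (κ₀ ^ 9)⁻¹ := by positivity
  obtain ⟨B, hB⟩ : ∃ B : ℝ, B = A ^ 8 / κ₀ + (κ₀ ^ 9)⁻¹ + 1 := ⟨_, rfl⟩
  have hB1 : 1 ≤ B := by linarith
  have hB18 : B ≤ B ^ 18 := le_self_pow₀ hB1 (by norm_num)
  refine ⟨B, hB1, ?_, ?_⟩
  · rw [← div_le_iff₀ hκ₀]
    exact le_trans (by linarith) hB18
  · rw [← inv_le_iff_one_le_mul₀ (by positivity)]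
    exact le_trans (by linarith) hB18

set_option maxHeartbeats 2000000 in
/-- The potential returns above its initial value at arbitrarily large scales. -/
lemma potential_bound (n : ℕ) {κ₀ : ℝ} (hκ₀ : 0 < κ₀) : ∃ M ≥ (0 : ℝ), ∃ D : ℝ,
    ∀ u v : Euc n → ℝ, Sol u v → ∀ C : ℝ, (∀ x, u x + v x ≤ C * (1 + ‖x‖)) →
    ∀ (c : Euc n) (a : ℝ), 0 < a → κ₀ ^ 2 ≤ a ^ 4 * (Uf u c a * Uf v c a) → ∀ T, ∃ r ≥ T, a ≤ r ∧
      Real.log (Uf u c a * Uf v c a) - 4 * Real.log a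
        + M * Real.log (Uf u c a * Uf v c a / Hf u v c a ^ 2)
      ≤ Real.log (Uf u c r * Uf v c r) - 4 * Real.log r + D := by
  obtain ⟨K, hK1, hK⟩ := scale_ineq n
  set A : ℝ := (2 : ℝ) ^ n * Real.exp 1 * 2 ^ 4 with hA
  have hA0 : 0 < A := by positivity
  obtain ⟨B, hB1, hBa, hBb⟩ := exists_pot_const hκ₀ A
  refine ⟨K ^ 2 / 2, by positivity, 100 * K ^ 6 + 18 * (100 * K ^ 6 + 1) * B,
    fun u v h C hC c a ha hκa T => ?_⟩
  have hstep : ∀ r ≥ a, 0 < 2 / r * ((1 + K ^ 2 / 2) * (2 + xf u v c r + xf v u c r)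
      - K ^ 2 * (Nf u v c r + tf u v c r) - 2 + 100 * K ^ 6 * nuf u v c r
      + (100 * K ^ 6 + 1) * (B * Real.exp (-(Real.log r - Real.log a) / 9))) ∨
      ∃ s > r, Pot u v c K B a r ≤ Pot u v c K B a s := by
    intro r hra
    have hr : 0 < r := ha.trans_le hra
    have hU := Uf_pos h hr.le (c := c)
    have hV := Uf_pos h.swap hr.le (c := c)
    by_cases hgood : ∀ t ≥ (1 : ℝ), Uf u c (t * r) * Uf v c (t * r) ≤ t ^ 8 * (Uf u c r * Uf v c r)
    · left
      set θ := B * Real.exp (-(Real.log r - Real.log a) / 9) with hθ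
      have hθ0 : 0 < θ := by positivity
      have hθ18 : θ ^ 18 = B ^ 18 * (a / r) ^ 2 := by
        rw [hθ, mul_pow, ← Real.exp_nat_mul]
        congr 1
        have e : ((18 : ℕ) : ℝ) * (-(Real.log r - Real.log a) / 9)
            = Real.log ((a / r) ^ 2) := by
          rw [Real.log_pow, Real.log_div ha.ne' hr.ne']; push_cast; ring
        rw [e, Real.exp_log (by positivity)]
      have hra1 : 1 ≤ r / a := (one_le_div ha).2 hra
      have hseg := good_seg h hr hgood hA (κ := κ₀ * (r / a) ^ 2) (by positivity) (by
          have hm := mul_le_mul (Uf_mono h ha.le hra (c := c)) (Uf_mono h.swap ha.le hra (c := c))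
            Uf_nonneg Uf_nonneg
          have e : (κ₀ * (r / a) ^ 2) ^ 2 = κ₀ ^ 2 * (r ^ 4 / a ^ 4) := by
            rw [mul_pow]; congr 1; rw [← pow_mul, div_pow]
          rw [e]
          calc κ₀ ^ 2 * (r ^ 4 / a ^ 4) ≤ a ^ 4 * (Uf u c a * Uf v c a) * (r ^ 4 / a ^ 4) :=
                mul_le_mul_of_nonneg_right hκa (by positivity)
            _ = r ^ 4 * (Uf u c a * Uf v c a) := by field_simp
            _ ≤ _ := mul_le_mul_of_nonneg_left hm (by positivity)) hθ0
        (by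
          rw [hθ18]
          have e : B ^ 18 * (a / r) ^ 2 * (κ₀ * (r / a) ^ 2) = B ^ 18 * κ₀ := by field_simp
          rw [e]; exact hBa)
        (by
          rw [hθ18]
          have e : B ^ 18 * (a / r) ^ 2 * (κ₀ * (r / a) ^ 2) ^ 9
              = B ^ 18 * κ₀ ^ 9 * (r / a) ^ 16 := by field_simp
          rw [e]
          exact hBb.trans (le_mul_of_one_le_right (by positivity) (one_le_pow₀ hra1)))
      have := hK u v h C hC c r hr θ hθ0 hseg
      refine mul_pos (by positivity) ?_
      linarith
    · right
      push Not at hgood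
      obtain ⟨t, ht1, hbad⟩ := hgood
      have ht1' : 1 < t := by
        refine lt_of_le_of_ne ht1 fun he => ?_
        rw [← he] at hbad; simp at hbad
      exact ⟨t * r, lt_mul_of_one_lt_left hr ht1', Pot_jump h hC hr (by linarith) ht1 hbad⟩
  obtain ⟨r, hrT, hra, hle⟩ := unbounded_of_jump
    (fun r hr => Pot_deriv (K := K) (B := B) (a := a) (c := c) h (ha.trans_le hr)) hstep T
  refine ⟨r, hrT, hra, ?_⟩
  have hr : 0 < r := ha.trans_le hra
  have hU := Uf_pos h hr.le (c := c)
  have hV := Uf_pos h.swap hr.le (c := c)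
  have hH := Hf_pos h hr.le (c := c)
  have aU := Uf_pos h ha.le (c := c)
  have aV := Uf_pos h.swap ha.le (c := c)
  have aH := Hf_pos h ha.le (c := c)
  have hlog : Real.log (Uf u c r) + Real.log (Uf v c r) ≤ 2 * Real.log (Hf u v c r) := by
    have h1 := Real.log_le_log hU (show Uf u c r ≤ Hf u v c r by rw [Hf]; linarith)
    have h2 := Real.log_le_log hV (show Uf v c r ≤ Hf u v c r by rw [Hf]; linarith)
    linarith
  rw [Real.log_div (by positivity) (by positivity), Real.log_mul hU.ne' hV.ne',
    Real.log_mul aU.ne' aV.ne', Real.log_pow]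
  rw [Pot, Pot] at hle
  have n1 := mul_le_mul_of_nonneg_left (Nf_le_one h hC hr (c := c)) (by positivity : 0 ≤ 100 * K ^ 6)
  have n2 := mul_nonneg (by positivity : 0 ≤ 100 * K ^ 6) (Nf_nonneg h ha.le (c := c))
  have n3 : 0 ≤ 18 * (100 * K ^ 6 + 1) * (B * Real.exp (-(Real.log r - Real.log a) / 9)) := by
    positivity
  have n4 := mul_le_mul_of_nonneg_left hlog (by positivity : 0 ≤ K ^ 2 / 2)
  rw [sub_self, neg_zero, zero_div, Real.exp_zero, mul_one] at hle
  push_cast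
  linarith

end potential


/-! ### Linear growth measured from the nodal set -/

section nodal
variable {n : ℕ} {u v : Euc n → ℝ}

lemma Hf_growth_unif (h : Sol u v) {C : ℝ} (hC : ∀ x, u x + v x ≤ C * (1 + ‖x‖)) :
    ∃ K > 0, ∀ c : Euc n, ∀ r ≥ 1 + ‖c‖, Hf u v c r ≤ K * r ^ 2 := by
  have hC0 : 0 ≤ C := by
    have := hC 0; simp at this; linarith [h.pu 0, h.pv 0]
  have ht : Tame (fun y : Euc n => (C * (1 + ‖y‖)) ^ 2) :=
    (((tame_const 1).add tame_norm).const_mul C).pow 2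
  have hK : 0 ≤ ∫ y : Euc n, (C * (1 + ‖y‖)) ^ 2 ∂(gam n) :=
    integral_nonneg fun y => sq_nonneg _
  refine ⟨(∫ y : Euc n, (C * (1 + ‖y‖)) ^ 2 ∂(gam n)) + 1, by linarith, fun c r hr => ?_⟩
  have hr0 : 0 < r := by linarith [norm_nonneg c]
  have h1 : Hf u v c r ≤ ∫ y : Euc n, (C * (1 + ‖y‖)) ^ 2 * r ^ 2 ∂(gam n) := by
    rw [Hf, Uf, Uf, ← integral_add ((h.su.affine c r).pow 2).int ((h.sv.affine c r).pow 2).int]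
    refine integral_mono (((h.su.affine c r).pow 2).add ((h.sv.affine c r).pow 2)).int
      (ht.int.mul_const _) fun y => ?_
    have hb : u (c + r • y) + v (c + r • y) ≤ C * (1 + ‖y‖) * r := by
      refine (hC _).trans ?_
      rw [mul_assoc]
      refine mul_le_mul_of_nonneg_left ?_ hC0
      have := norm_add_le c (r • y)
      rw [norm_smul, Real.norm_eq_abs, abs_of_pos hr0] at this
      linarith
    have := h.pu (c + r • y)
    have := h.pv (c + r • y)
    simp only
    rw [← mul_pow]
    nlinarith
  rw [integral_mul_const] at h1
  nlinarith [sq_nonneg r]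

/-- The size of the solution at the natural scale of a nodal point is bounded uniformly. -/
lemma start_bound (h : Sol u v) {C : ℝ} (hC : ∀ x, u x + v x ≤ C * (1 + ‖x‖)) :
    ∃ E > 0, ∀ c, u c = v c → ∃ r > 0, r ^ 2 * Hf u v c r = 1 ∧ Hf u v c r ≤ E := by
  obtain ⟨K, hK, hstart⟩ := start_scale n
  obtain ⟨K', hK', hgr⟩ := Hf_growth_unif h hC
  obtain ⟨M, hM, D, hpot⟩ := potential_bound n (κ₀ := K⁻¹) (by positivity)
  refine ⟨Real.exp ((2 * Real.log K' + D + (2 + 2 * M) * Real.log K) / 4), Real.exp_pos _,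
    fun c hc => ?_⟩
  obtain ⟨a, ha, haH, hHu⟩ := hstart u v h C hC c hc
  refine ⟨a, ha, haH, ?_⟩
  have hH := Hf_pos h ha.le (c := c)
  have hU := Uf_pos h ha.le (c := c)
  have hV := Uf_pos h.swap ha.le (c := c)
  have gU := Uf_ge h ha.le (c := c)
  have gV := Uf_ge h.swap ha.le (c := c)
  rw [← hc] at gV
  have kU : K⁻¹ * Hf u v c a ≤ Uf u c a := by
    rw [inv_mul_le_iff₀ hK]
    exact hHu.trans (mul_le_mul_of_nonneg_left gU hK.le)
  have kV : K⁻¹ * Hf u v c a ≤ Uf v c a := by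
    rw [inv_mul_le_iff₀ hK]
    exact hHu.trans (mul_le_mul_of_nonneg_left gV hK.le)
  have hp : (K⁻¹ * Hf u v c a) * (K⁻¹ * Hf u v c a) ≤ Uf u c a * Uf v c a :=
    mul_le_mul kU kV (by positivity) hU.le
  have hκ : K⁻¹ ^ 2 ≤ a ^ 4 * (Uf u c a * Uf v c a) :=
    calc K⁻¹ ^ 2 = K⁻¹ ^ 2 * (a ^ 2 * Hf u v c a) ^ 2 := by rw [haH]; ring
      _ = a ^ 4 * ((K⁻¹ * Hf u v c a) * (K⁻¹ * Hf u v c a)) := by ring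
      _ ≤ _ := mul_le_mul_of_nonneg_left hp (by positivity)
  obtain ⟨r, hrT, har, hle⟩ := hpot u v h C hC c a ha hκ (1 + ‖c‖)
  have hr : 0 < r := ha.trans_le har
  have hU' := Uf_pos h hr.le (c := c)
  have hV' := Uf_pos h.swap hr.le (c := c)
  have hHr := hgr c r hrT
  have l1 : Real.log (Uf u c r) ≤ Real.log K' + 2 * Real.log r := by
    have := Real.log_le_log hU' (show Uf u c r ≤ K' * r ^ 2 by rw [Hf] at hHr; linarith)
    rw [Real.log_mul hK'.ne' (by positivity), Real.log_pow] at this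
    exact_mod_cast this
  have l2 : Real.log (Uf v c r) ≤ Real.log K' + 2 * Real.log r := by
    have := Real.log_le_log hV' (show Uf v c r ≤ K' * r ^ 2 by rw [Hf] at hHr; linarith)
    rw [Real.log_mul hK'.ne' (by positivity), Real.log_pow] at this
    exact_mod_cast this
  have l3 : 2 * Real.log a + Real.log (Hf u v c a) = 0 := by
    have := congrArg Real.log haH
    rw [Real.log_mul (by positivity) hH.ne', Real.log_pow, Real.log_one] at this
    exact_mod_cast this
  have l4 : 2 * (Real.log (Hf u v c a) - Real.log K) ≤ Real.log (Uf u c a * Uf v c a) := by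
    have := Real.log_le_log (by positivity) hp
    rw [Real.log_mul (by positivity) (by positivity), Real.log_mul (by positivity) (by positivity),
      Real.log_inv] at this
    linarith
  rw [Real.log_div (by positivity) (by positivity), Real.log_pow, Real.log_mul hU'.ne' hV'.ne'] at hle
  push_cast at hle
  have l5 := mul_le_mul_of_nonneg_left (show -(2 * Real.log K)
    ≤ Real.log (Uf u c a * Uf v c a) - 2 * Real.log (Hf u v c a) by linarith) hM
  rw [← Real.log_le_iff_le_exp hH]
  linarith

lemma Hf_nodal (h : Sol u v) {C : ℝ} (hC : ∀ x, u x + v x ≤ C * (1 + ‖x‖)) :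
    ∃ E > 0, ∀ c, u c = v c → ∀ r > 0, Hf u v c r ≤ E * (1 + r ^ 2) := by
  obtain ⟨E, hE, hst⟩ := start_bound h hC
  refine ⟨E + Real.exp 1 * E ^ 2, by positivity, fun c hc r hr => ?_⟩
  obtain ⟨a, ha, haH, hH⟩ := hst c hc
  have hH0 := Hf_pos h ha.le (c := c)
  have hee : 0 < Real.exp 1 * E ^ 2 := by positivity
  rcases le_total r a with hra | hra
  · have := Hf_mono h hr.le hra (c := c)
    have h1 : E * 1 ≤ E * (1 + r ^ 2) := mul_le_mul_of_nonneg_left (by nlinarith) hE.le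
    have h2 : 0 ≤ Real.exp 1 * E ^ 2 * (1 + r ^ 2) := by positivity
    linarith
  · have h1 := Hf_lin h hC ha hra (c := c)
    have e : Hf u v c a / a ^ 2 = Hf u v c a ^ 2 := by
      rw [div_eq_iff (by positivity)]
      calc Hf u v c a = Hf u v c a * (a ^ 2 * Hf u v c a) := by rw [haH, mul_one]
        _ = _ := by ring
    rw [e, div_le_iff₀ (by positivity)] at h1
    have h2 : Hf u v c a ^ 2 ≤ E ^ 2 := pow_le_pow_left₀ hH0.le hH 2
    have h3 : Real.exp 1 * Hf u v c a ^ 2 * r ^ 2 ≤ Real.exp 1 * E ^ 2 * r ^ 2 := by gcongr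
    have h4 : 0 ≤ E * (1 + r ^ 2) := by positivity
    linarith

/-- The solution grows linearly from each nodal point, with a constant independent of the point. -/
lemma nodal_growth (h : Sol u v) {C : ℝ} (hC : ∀ x, u x + v x ≤ C * (1 + ‖x‖)) :
    ∃ E > 0, ∀ c, u c = v c → ∀ x, u x ≤ E * (1 + ‖x - c‖) ∧ v x ≤ E * (1 + ‖x - c‖) := by
  obtain ⟨E, hE, hH⟩ := Hf_nodal h hC
  refine ⟨2 ^ n * Real.exp 1 * Real.sqrt (5 * E), by positivity, fun c hc x => ?_⟩
  set r := 1 + ‖x - c‖ with hr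
  have hr1 : 1 ≤ r := by rw [hr]; linarith [norm_nonneg (x - c)]
  have hr0 : 0 < r := by linarith
  have hHr := hH c hc (2 * r) (by positivity)
  have hle : E * (1 + (2 * r) ^ 2) ≤ (Real.sqrt (5 * E) * r) ^ 2 := by
    rw [mul_pow (Real.sqrt (5 * E)), Real.sq_sqrt (by positivity)]
    have : 1 ≤ r ^ 2 := one_le_pow₀ hr1
    have := mul_le_mul_of_nonneg_left this hE.le
    linarith
  have hexp : Real.exp (‖x - c‖ ^ 2 / (6 * r ^ 2)) ≤ Real.exp 1 := by
    refine Real.exp_le_exp.2 ((div_le_one (by positivity)).2 ?_)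
    have : ‖x - c‖ ^ 2 ≤ r ^ 2 := pow_le_pow_left₀ (norm_nonneg _) (by linarith) 2
    nlinarith
  have key : ∀ {f g : Euc n → ℝ}, Sol f g → Uf f c (2 * r) ≤ E * (1 + (2 * r) ^ 2) →
      f x ≤ 2 ^ n * Real.exp 1 * Real.sqrt (5 * E) * r := by
    intro f g hf hU
    have h1 : af f c (2 * r) ≤ Real.sqrt (5 * E) * r :=
      le_of_sq_le_sq ((af_sq_le hf).trans (hU.trans hle)) (by positivity)
    calc f x ≤ 2 ^ n * Real.exp (‖x - c‖ ^ 2 / (6 * r ^ 2)) * af f c (2 * r) := sub_point hf hr0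
      _ ≤ 2 ^ n * Real.exp 1 * (Real.sqrt (5 * E) * r) := by
        refine mul_le_mul (by gcongr) h1 ?_ (by positivity)
        exact integral_nonneg fun y => (hf.pu _).le
      _ = _ := by ring
  have nU : 0 ≤ Uf u c (2 * r) := Uf_nonneg
  have nV : 0 ≤ Uf v c (2 * r) := Uf_nonneg
  rw [Hf] at hHr
  exact ⟨key h (by linarith), key h.swap (by linarith)⟩

end nodal


/-! ### Lipschitz bound and bound of the smaller component -/

section lipschitz
variable {n : ℕ} {u v : Euc n → ℝ}

lemma pd_eq_zero_of_max {f : Euc n → ℝ} {z : Euc n} (hz : IsLocalMax f z) (i : Fin n) :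
    pd i f z = 0 := by
  rw [pd, hz.fderiv_eq_zero]; rfl

lemma lap_nonpos_of_max {f : Euc n → ℝ} (hf : Sm f) {z : Euc n} (hz : IsLocalMax f z) :
    lap f z ≤ 0 := by
  rw [lap_eq]
  refine Finset.sum_nonpos fun i _ => ?_
  by_contra hpos
  push Not at hpos
  set e : Euc n := EuclideanSpace.single i 1 with he
  have hline : ∀ g : Euc n → ℝ, Sm g → ∀ t : ℝ,
      HasDerivAt (fun t : ℝ => g (z + t • e)) (pd i g (z + t • e)) t := by
    intro g hg t
    have h1 : HasDerivAt (fun t : ℝ => z + t • e) e t := by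
      simpa using ((hasDerivAt_id t).smul_const e).const_add z
    exact (hg.diff (z + t • e)).hasFDerivAt.comp_hasDerivAt t h1
  have hcont : Continuous fun t : ℝ => z + t • e := by fun_prop
  have hd : deriv (fun t : ℝ => f (z + t • e)) = fun t => pd i f (z + t • e) :=
    funext fun t => (hline f hf t).deriv
  have hmin : IsLocalMin (fun t : ℝ => f (z + t • e)) 0 := by
    refine isLocalMin_of_deriv_deriv_pos ?_ ?_ (hline f hf 0).continuousAt
    · rw [hd, (hline _ (hf.pd i) 0).deriv]; simpa using hpos
    · rw [hd]; simpa using pd_eq_zero_of_max hz i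
  have hmax : IsLocalMax (fun t : ℝ => f (z + t • e)) 0 := by
    have h0 : Filter.Tendsto (fun t : ℝ => z + t • e) (nhds 0) (nhds z) := by
      simpa using hcont.tendsto 0
    filter_upwards [h0.eventually hz] with t ht
    simpa using ht
  have hconst : (fun t : ℝ => f (z + t • e)) =ᶠ[nhds 0] fun _ => f z := by
    filter_upwards [hmin, hmax] with t h1 h2
    simp only [zero_smul, add_zero] at h1 h2
    exact le_antisymm h2 h1
  have h1 := hconst.deriv.deriv_eq
  rw [hd, (hline _ (hf.pd i) 0).deriv] at h1
  simp at h1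
  rw [h1] at hpos
  exact lt_irrefl _ hpos

/-- The Keller–Osserman estimate: positive subsolutions of `Δw = w³` decay like the inverse of the
distance to the boundary. -/
lemma keller_osserman {w : Euc n → ℝ} (hw : Sm w) (x : Euc n) {d : ℝ} (hd : 0 < d)
    (pos : ∀ z, 0 < w z) (hsub : ∀ z ∈ ball x d, w z ^ 3 ≤ lap w z) :
    ∀ z ∈ ball x (d / 2), w z ≤ 4 / 3 * Real.sqrt (2 * n + 8) / d := by
  set q : Euc n → ℝ := fun y => d ^ 2 - ‖y - x‖ ^ 2 with hq
  have hsq : Sm fun y : Euc n => ‖y - x‖ ^ 2 := (contDiff_id.sub contDiff_const).norm_sq ℝ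
  have hqs : Sm q := contDiff_const.sub hsq
  have hpq : ∀ i, pd i q = fun y => - (2 * (y i - x i)) := by
    intro i
    have h1 : pd i (fun y : Euc n => ‖y - x‖ ^ 2) = fun y => 2 * (y i - x i) := by
      have := pd_affine (f := fun y : Euc n => ‖y‖ ^ 2) (i := i) sl_norm_sq.diff (-x) 1
      rw [pd_norm_sq] at this
      have e : (fun y : Euc n => ‖y - x‖ ^ 2) = fun y => ‖-x + (1 : ℝ) • y‖ ^ 2 := by
        funext y; rw [one_smul, neg_add_eq_sub]
      rw [e, this]; funext y; simp; ring
    rw [hq, pd_sub (differentiable_const _) hsq.diff, h1, pd_const]; funext y; simp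
  have hlq : ∀ y, lap q y = - (2 * n) := by
    intro y
    rw [lap_eq]
    have : ∀ i, pd i (pd i q) y = -2 := by
      intro i
      have e : pd i q = fun y => -2 * y i + 2 * x i := by rw [hpq]; funext y; ring
      have s1 : Differentiable ℝ fun y : Euc n => -2 * y i := (sm_coord i).diff.const_mul _
      rw [e, pd_add s1 (differentiable_const _), pd_const_mul _ (sm_coord i).diff, pd_coord, pd_const]
      simp
    simp [this]; ring
  have hPs : Sm fun y => q y * w y := hqs.mul hw
  obtain ⟨z, hzB, hzmax⟩ := (isCompact_closedBall x d).exists_isMaxOn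
    ⟨x, mem_closedBall_self hd.le⟩ hPs.continuous.continuousOn
  have hqx : q x = d ^ 2 := by simp [hq]
  have hPz : 0 < q z * w z := by
    have : q x * w x ≤ q z * w z := hzmax (mem_closedBall_self hd.le : x ∈ closedBall x d)
    refine lt_of_lt_of_le ?_ this
    rw [hqx]; exact mul_pos (by positivity) (pos x)
  have hqz : 0 < q z := pos_of_mul_pos_left hPz (pos z).le
  have hzb : z ∈ ball x d := by
    rw [mem_ball_iff_norm]
    have : ‖z - x‖ ^ 2 < d ^ 2 := by simp only [hq] at hqz; linarith
    exact lt_of_pow_lt_pow_left₀ 2 hd.le this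
  have hloc : IsLocalMax (fun y => q y * w y) z :=
    hzmax.isLocalMax (Filter.mem_of_superset (isOpen_ball.mem_nhds hzb) ball_subset_closedBall)
  have hlap := lap_nonpos_of_max hPs hloc
  rw [lap_mul hqs hw, hlq] at hlap
  have hgr : ∀ i, q z * pd i w z = - (pd i q z * w z) := by
    intro i
    have := pd_eq_zero_of_max hloc i
    rw [pd_mul hqs.diff hw.diff] at this
    linarith
  have hgq : ∑ i, pd i q z ^ 2 = 4 * ‖z - x‖ ^ 2 := by
    rw [norm_sq_sum, Finset.mul_sum]
    refine Finset.sum_congr rfl fun i _ => ?_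
    rw [hpq]; simp; ring
  have hcross : q z * ∑ i, pd i q z * pd i w z = - (4 * ‖z - x‖ ^ 2) * w z := by
    rw [← hgq, Finset.mul_sum, ← Finset.sum_neg_distrib, Finset.sum_mul]
    refine Finset.sum_congr rfl fun i _ => ?_
    calc q z * (pd i q z * pd i w z) = pd i q z * (q z * pd i w z) := by ring
      _ = _ := by rw [hgr i]; ring
  have hzd : ‖z - x‖ ^ 2 ≤ d ^ 2 := by simp only [hq] at hqz; linarith
  have hqd : q z ≤ d ^ 2 := by simp only [hq]; linarith [sq_nonneg ‖z - x‖]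
  have hsz := hsub z hzb
  -- multiplying `Δ(q w) ≤ 0` by `q` turns it into a bound of `q w` at the maximum
  have hb : (q z * w z) ^ 2 ≤ (2 * n + 8) * d ^ 2 := by
    have hwz := pos z
    have h1 : q z * (q z * w z ^ 3) ≤ q z * (q z * lap w z) :=
      mul_le_mul_of_nonneg_left (mul_le_mul_of_nonneg_left hsz hqz.le) hqz.le
    have h2 := mul_le_mul_of_nonneg_left hlap hqz.le
    have h3 : w z * (q z * w z) ^ 2 ≤ w z * ((2 * n) * q z + 8 * ‖z - x‖ ^ 2) := by
      have e1 : q z * (-(2 * n) * w z + q z * lap w z + 2 * ∑ i, pd i q z * pd i w z)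
          = -(2 * n) * (q z * w z) + q z * (q z * lap w z)
            + 2 * (q z * ∑ i, pd i q z * pd i w z) := by ring
      rw [e1, hcross] at h2
      linarith
    have h4 := le_of_mul_le_mul_left h3 hwz
    have h5 : (2 * n) * q z ≤ (2 * n : ℝ) * d ^ 2 := mul_le_mul_of_nonneg_left hqd (by positivity)
    linarith
  have hb' : q z * w z ≤ Real.sqrt (2 * n + 8) * d := by
    refine le_of_sq_le_sq ?_ (by positivity)
    rw [mul_pow (Real.sqrt _), Real.sq_sqrt (by positivity)]
    exact hb
  intro y hy
  have hyB : y ∈ closedBall x d := ball_subset_closedBall (ball_subset_ball (by linarith) hy)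
  have hy1 : q y * w y ≤ q z * w z := hzmax hyB
  rw [mem_ball_iff_norm] at hy
  have hqy : 3 / 4 * d ^ 2 ≤ q y := by
    have : ‖y - x‖ ^ 2 ≤ (d / 2) ^ 2 := pow_le_pow_left₀ (norm_nonneg _) hy.le 2
    simp only [hq]; linarith
  have h6 : 3 / 4 * d ^ 2 * w y ≤ q y * w y := mul_le_mul_of_nonneg_right hqy (pos y).le
  rw [le_div_iff₀ hd]
  have h7 : (w y * d) * (3 / 4 * d) ≤ (4 / 3 * Real.sqrt (2 * n + 8)) * (3 / 4 * d) := by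
    calc (w y * d) * (3 / 4 * d) = 3 / 4 * d ^ 2 * w y := by ring
      _ ≤ Real.sqrt (2 * n + 8) * d := by linarith
      _ = _ := by ring
  exact le_of_mul_le_mul_right h7 (by positivity)

/-- Estimates away from the nodal set, on the side where `v < u`. -/
lemma far_est (h : Sol u v) {K E d : ℝ} (hE : 0 < E) (hK : 0 < K)
    (hgrad : ∀ w : Euc n → ℝ, Sm w → ∀ (x : Euc n) (ρ A F : ℝ), 0 < ρ →
      (∀ z ∈ closedBall x ρ, |w z| ≤ A) → (∀ z ∈ closedBall x ρ, |lap w z| ≤ F) →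
      ∀ i, |pd i w x| ≤ K * (A / ρ + F * ρ))
    (x : Euc n) (hd : 2 < d) (hlt : ∀ z ∈ ball x d, v z < u z)
    (hb : ∀ z ∈ closedBall x (d / 4), u z ≤ 2 * E * d) {c : ℝ}
    (hc : c = 4 / 3 * Real.sqrt (2 * n + 8)) :
    (∀ i, |pd i u x| ≤ K * (8 * E + E * c ^ 2 / 2) ∧ |pd i v x| ≤ K * (c + 4 * c * E ^ 2)) ∧
      v x ≤ c := by
  have hd0 : 0 < d := by linarith
  have hc0 : 0 ≤ c := by rw [hc]; positivity
  have hko : ∀ z ∈ ball x (d / 2), v z ≤ c / d := by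
    rw [hc]
    refine keller_osserman h.sv.sm x hd0 h.pv fun z hz => ?_
    rw [h.ev, pow_succ' (v z)]
    have := pow_le_pow_left₀ (h.pv z).le (hlt z hz).le 2
    exact mul_le_mul_of_nonneg_left this (h.pv z).le
  have hsub : ∀ z ∈ closedBall x (d / 4), v z ≤ c / d := fun z hz =>
    hko z (closedBall_subset_ball (by linarith) hz)
  refine ⟨fun i => ⟨?_, ?_⟩, ?_⟩
  · refine (hgrad u h.su.sm x (d / 4) (2 * E * d) (2 * E * d * (c / d) ^ 2) (by positivity)
      (fun z hz => ?_) (fun z hz => ?_) i).trans (le_of_eq ?_)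
    · rw [abs_of_pos (h.pu z)]; exact hb z hz
    · rw [h.eu, abs_of_pos (mul_pos (h.pu z) (pow_pos (h.pv z) 2))]
      exact mul_le_mul (hb z hz) (pow_le_pow_left₀ (h.pv z).le (hsub z hz) 2)
        (sq_nonneg _) (by positivity)
    · field_simp; ring
  · have hρ : 1 / d ≤ d / 4 := by
      rw [div_le_div_iff₀ hd0 (by norm_num)]; nlinarith
    have hs : closedBall x (1 / d) ⊆ closedBall x (d / 4) := closedBall_subset_closedBall hρ
    refine (hgrad v h.sv.sm x (1 / d) (c / d) ((c / d) * (2 * E * d) ^ 2) (by positivity)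
      (fun z hz => ?_) (fun z hz => ?_) i).trans (le_of_eq ?_)
    · rw [abs_of_pos (h.pv z)]; exact hsub z (hs hz)
    · rw [h.ev, abs_of_pos (mul_pos (h.pv z) (pow_pos (h.pu z) 2))]
      exact mul_le_mul (hsub z (hs hz)) (pow_le_pow_left₀ (h.pu z).le (hb z (hs hz)) 2)
        (sq_nonneg _) (by positivity)
    · field_simp; ring
  · refine (hsub x (mem_closedBall_self (by linarith))).trans ?_
    exact div_le_self hc0 (by linarith)

/-- The gradients and the smaller component are globally bounded. -/
lemma global_est (hn : 2 ≤ n) (h : Sol u v) {C : ℝ} (hC : ∀ x, u x + v x ≤ C * (1 + ‖x‖))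
    {x₀ : Euc n} (hx₀ : u x₀ = v x₀) : ∃ L > 0, ∀ x,
      (∀ i, |pd i u x| ≤ L ∧ |pd i v x| ≤ L) ∧ (u x ≤ L ∨ v x ≤ L) := by
  obtain ⟨K, hK, hgrad⟩ := grad_est hn
  obtain ⟨E, hE, hG⟩ := nodal_growth h hC
  obtain ⟨c, hc⟩ : ∃ c : ℝ, c = 4 / 3 * Real.sqrt (2 * n + 8) := ⟨_, rfl⟩
  have hc0 : 0 ≤ c := by rw [hc]; positivity
  have p1 : 0 ≤ K * (4 * E + (4 * E) ^ 3) := by positivity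
  have p2 : 0 ≤ K * (8 * E + E * c ^ 2 / 2) := by positivity
  have p3 : 0 ≤ K * (c + 4 * c * E ^ 2) := by positivity
  refine ⟨K * (4 * E + (4 * E) ^ 3) + K * (8 * E + E * c ^ 2 / 2) + K * (c + 4 * c * E ^ 2)
    + c + 4 * E, by linarith, fun x => ?_⟩
  set L := K * (4 * E + (4 * E) ^ 3) + K * (8 * E + E * c ^ 2 / 2) + K * (c + 4 * c * E ^ 2)
    + c + 4 * E with hL
  have hcl : IsClosed {y : Euc n | u y = v y} :=
    isClosed_eq h.su.cont h.sv.cont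
  obtain ⟨c₁, hc₁, hdist⟩ := hcl.exists_infDist_eq_dist ⟨x₀, hx₀⟩ x
  set d := infDist x {y : Euc n | u y = v y} with hd
  have hbd : ∀ ρ, ∀ z ∈ closedBall x ρ, u z ≤ E * (1 + (d + ρ)) ∧ v z ≤ E * (1 + (d + ρ)) := by
    intro ρ z hz
    have h1 := hG c₁ hc₁ z
    have h2 : ‖z - c₁‖ ≤ d + ρ := by
      rw [hdist, ← dist_eq_norm]
      have := dist_triangle z x c₁
      rw [mem_closedBall] at hz
      linarith
    have h3 : E * (1 + ‖z - c₁‖) ≤ E * (1 + (d + ρ)) :=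
      mul_le_mul_of_nonneg_left (by linarith) hE.le
    exact ⟨h1.1.trans h3, h1.2.trans h3⟩
  rcases le_or_gt d 2 with hd2 | hd2
  · have hb4 : ∀ z ∈ closedBall x 1, u z ≤ 4 * E ∧ v z ≤ 4 * E := by
      intro z hz
      have h1 := hbd 1 z hz
      have h3 : E * (1 + (d + 1)) ≤ 4 * E := by
        calc E * (1 + (d + 1)) ≤ E * 4 := mul_le_mul_of_nonneg_left (by linarith) hE.le
          _ = _ := by ring
      exact ⟨h1.1.trans h3, h1.2.trans h3⟩
    have key : ∀ f g : Euc n → ℝ, Sol f g → (∀ z ∈ closedBall x 1, f z ≤ 4 * E ∧ g z ≤ 4 * E) →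
        ∀ i, |pd i f x| ≤ K * (4 * E + (4 * E) ^ 3) := by
      intro f g hf hb i
      refine (hgrad f hf.su.sm x 1 (4 * E) ((4 * E) * (4 * E) ^ 2) one_pos
        (fun z hz => ?_) (fun z hz => ?_) i).trans (le_of_eq (by ring))
      · rw [abs_of_pos (hf.pu z)]; exact (hb z hz).1
      · rw [hf.eu, abs_of_pos (mul_pos (hf.pu z) (pow_pos (hf.pv z) 2))]
        exact mul_le_mul (hb z hz).1 (pow_le_pow_left₀ (hf.pv z).le (hb z hz).2 2)
          (sq_nonneg _) (by positivity)
    refine ⟨fun i => ⟨(key u v h hb4 i).trans (by linarith), (key v u h.swap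
      (fun z hz => (hb4 z hz).symm) i).trans (by linarith)⟩, Or.inl ?_⟩
    exact (hb4 x (mem_closedBall_self zero_le_one)).1.trans (by linarith)
  · have hne : ∀ z ∈ ball x d, u z ≠ v z := by
      intro z hz he
      have := infDist_le_dist_of_mem (x := x) (show z ∈ {y : Euc n | u y = v y} from he)
      rw [mem_ball, dist_comm] at hz
      linarith
    have hsign : ∀ f g : Euc n → ℝ, Sol f g → (∀ z ∈ ball x d, f z ≠ g z) → g x < f x →
        ∀ z ∈ ball x d, g z < f z := by
      intro f g hf hfg hx z hz
      by_contra hcon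
      push Not at hcon
      obtain ⟨y, hy, hy0⟩ := (convex_ball x d).isPreconnected.intermediate_value hz
        (mem_ball_self (by linarith)) ((hf.su.cont.sub hf.sv.cont).continuousOn)
        (show (0 : ℝ) ∈ Icc (f z - g z) (f x - g x) from ⟨by linarith, by linarith⟩)
      exact hfg y hy (sub_eq_zero.1 hy0)
    have hbd' : ∀ z ∈ closedBall x (d / 4), u z ≤ 2 * E * d ∧ v z ≤ 2 * E * d := by
      intro z hz
      have h1 := hbd (d / 4) z hz
      have h3 : E * (1 + (d + d / 4)) ≤ 2 * E * d := by
        calc E * (1 + (d + d / 4)) ≤ E * (2 * d) := mul_le_mul_of_nonneg_left (by linarith) hE.le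
          _ = _ := by ring
      exact ⟨h1.1.trans h3, h1.2.trans h3⟩
    rcases lt_or_gt_of_ne (hne x (mem_ball_self (by linarith))) with hx | hx
    · obtain ⟨h1, h2⟩ := far_est h.swap hE hK hgrad x hd2
        (hsign v u h.swap (fun z hz => (hne z hz).symm) hx) (fun z hz => (hbd' z hz).2) hc
      exact ⟨fun i => ⟨(h1 i).2.trans (by linarith), (h1 i).1.trans (by linarith)⟩,
        Or.inl (h2.trans (by linarith))⟩
    · obtain ⟨h1, h2⟩ := far_est h hE hK hgrad x hd2 (hsign u v h hne hx)
        (fun z hz => (hbd' z hz).1) hc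
      exact ⟨fun i => ⟨(h1 i).1.trans (by linarith), (h1 i).2.trans (by linarith)⟩,
        Or.inr (h2.trans (by linarith))⟩

end lipschitz


/-! ### Gradient decay on the side of the other component -/

section local_grad
variable {n : ℕ} {u v : Euc n → ℝ}

/-- A smooth cutoff, equal to `1` on `B₄` and supported in the closed ball of radius `5`. -/
noncomputable def ch (y : Euc n) : ℝ := Real.smoothTransition ((25 - ‖y‖ ^ 2) / 9)

lemma ch_sm : Sm (ch (n := n)) :=
  Real.smoothTransition.contDiff.comp ((contDiff_const.sub (contDiff_norm_sq ℝ)).div_const _)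

lemma ch_nonneg (y : Euc n) : 0 ≤ ch y := Real.smoothTransition.nonneg _

lemma ch_le_one (y : Euc n) : ch y ≤ 1 := Real.smoothTransition.le_one _

lemma ch_one {y : Euc n} (hy : ‖y‖ ≤ 4) : ch y = 1 :=
  Real.smoothTransition.one_of_one_le (by
    rw [le_div_iff₀ (by norm_num)]; nlinarith [norm_nonneg y])

lemma ch_zero {y : Euc n} (hy : 5 < ‖y‖) : ch y = 0 :=
  Real.smoothTransition.zero_of_nonpos (by
    rw [div_le_iff₀ (by norm_num)]; nlinarith)

lemma norm_le_of_ch {y : Euc n} (hy : ch y ≠ 0) : ‖y‖ ≤ 5 := by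
  by_contra h; exact hy (ch_zero (not_le.1 h))

lemma ch_cs : HasCompactSupport (ch (n := n)) :=
  HasCompactSupport.intro (isCompact_closedBall 0 5) fun y hy => ch_zero (by simpa using hy)

lemma ch_smul_cs {a : ℝ} (ha : 0 < a) : HasCompactSupport fun y : Euc n => ch (a • y) :=
  HasCompactSupport.intro (isCompact_closedBall 0 (5 / a)) fun y hy => ch_zero (by
    rw [mem_closedBall_zero_iff, not_le, div_lt_iff₀ ha] at hy
    rw [norm_smul, Real.norm_eq_abs, abs_of_pos ha]; linarith)

lemma lip_of_pd {f : Euc n → ℝ} (hf : Sm f) {L : ℝ} (hL : ∀ x i, |pd i f x| ≤ L) (x y : Euc n) :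
    |f (x + y) - f x| ≤ n * L * ‖y‖ := by
  have hd := fun t => hasDerivAt_line hf.diff x y t
  have hb : ∀ t : ℝ, ‖∑ i, y i * pd i f (x + t • y)‖ ≤ n * L * ‖y‖ := by
    intro t
    refine (norm_sum_le _ _).trans ?_
    calc ∑ i, ‖y i * pd i f (x + t • y)‖ ≤ ∑ _i : Fin n, L * ‖y‖ := by
          refine Finset.sum_le_sum fun i _ => ?_
          rw [norm_mul, Real.norm_eq_abs, Real.norm_eq_abs, mul_comm]
          exact mul_le_mul (hL _ i) (abs_coord_le y i) (abs_nonneg _)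
            ((abs_nonneg _).trans (hL 0 i))
      _ = n * L * ‖y‖ := by simp; ring
  have := convex_univ.norm_image_sub_le_of_norm_hasDerivWithin_le (s := (univ : Set ℝ))
    (fun t _ => (hd t).hasDerivWithinAt) (fun t _ => hb t) (mem_univ 0) (mem_univ 1)
  simpa using this

lemma integrable_mul_cs {f k : Euc n → ℝ} (hf : Continuous f) (hk : Continuous k)
    (hc : HasCompactSupport k) : Integrable fun y => f y * k y :=
  (hf.mul hk).integrable_of_hasCompactSupport hc.mul_left

/-- Pointwise values of a nonnegative subharmonic function near `x` are controlled by its local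
mean around `x`. -/
lemma sub_local (hn : 2 ≤ n) : ∃ K > 0, ∀ u : Euc n → ℝ, Sm u → (∀ x, 0 ≤ u x) →
    (∀ x, 0 ≤ lap u x) → ∀ x : Euc n, ∀ z ∈ closedBall x (1 / 3),
    u z ≤ K * ∫ y, u (x + y) * ch ((6 : ℝ) • y) := by
  set I := ∫ y : Euc n, ek y with hI
  have hIpos : 0 < I := ek_pos hn
  obtain ⟨S, hS⟩ := (ek_cs (n := n)).exists_bound_of_continuous ek_sm.continuous
  have hS0 : 0 ≤ S := (norm_nonneg _).trans (hS 0)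
  refine ⟨I⁻¹ * (3 ^ n * (S + 1)), by positivity, fun u hu hpos hsub x z hz => ?_⟩
  have h1 := subharm_mean hu hsub z (ρ := 1 / 3) (by norm_num)
  have e1 : ∫ y, u (z + (1 / 3 : ℝ) • y) * ek y = 3 ^ n * ∫ y, u (x + y) * ek ((3 : ℝ) • (x - z + y)) := by
    have a1 := Measure.integral_comp_smul (volume : Measure (Euc n))
      (fun y => u (z + y) * ek ((3 : ℝ) • y)) (1 / 3 : ℝ)
    have a2 := integral_add_left_eq_self (μ := (volume : Measure (Euc n)))
      (fun y => u (z + y) * ek ((3 : ℝ) • y)) (x - z)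
    rw [← a2] at a1
    have b1 : (fun y : Euc n => u (z + (1 / 3 : ℝ) • y) * ek ((3 : ℝ) • (1 / 3 : ℝ) • y))
        = fun y => u (z + (1 / 3 : ℝ) • y) * ek y := by
      funext y; rw [smul_smul]; norm_num
    have b2 : (fun y : Euc n => u (z + (x - z + y)) * ek ((3 : ℝ) • (x - z + y)))
        = fun y => u (x + y) * ek ((3 : ℝ) • (x - z + y)) := by
      funext y; congr 2; abel
    rw [b1, b2] at a1
    rw [a1]
    simp
  have e2 : ∫ y, u (x + y) * ek ((3 : ℝ) • (x - z + y))
      ≤ ∫ y, (S + 1) * (u (x + y) * ch ((6 : ℝ) • y)) := by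
    have hc : Continuous fun y => u (x + y) := hu.continuous.comp (by fun_prop)
    have hch : Continuous fun y : Euc n => ch ((6 : ℝ) • y) :=
      ch_sm.continuous.comp (by fun_prop)
    refine integral_mono_of_nonneg (Filter.Eventually.of_forall fun y =>
      mul_nonneg (hpos _) (ek_nonneg _))
      ((integrable_mul_cs hc hch (ch_smul_cs (by norm_num))).const_mul _)
      (Filter.Eventually.of_forall fun y => ?_)
    have hle : ek ((3 : ℝ) • (x - z + y)) ≤ (S + 1) * ch ((6 : ℝ) • y) := by
      by_cases hy : ‖y‖ ≤ 2 / 3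
      · rw [ch_one (by rw [norm_smul]; norm_num; linarith)]
        have := hS ((3 : ℝ) • (x - z + y))
        have := le_abs_self (ek ((3 : ℝ) • (x - z + y)))
        rw [Real.norm_eq_abs] at *
        linarith
      · rw [ek_zero]
        · exact mul_nonneg (by linarith) (ch_nonneg _)
        · rw [norm_smul]
          have t1 : ‖y‖ ≤ ‖x - z + y‖ + ‖z - x‖ := by
            have := norm_add_le (x - z + y) (z - x)
            rwa [show x - z + y + (z - x) = y by abel] at this
          rw [mem_closedBall_iff_norm] at hz
          norm_num
          linarith [not_le.1 hy]
    calc u (x + y) * ek ((3 : ℝ) • (x - z + y))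
        ≤ u (x + y) * ((S + 1) * ch ((6 : ℝ) • y)) := mul_le_mul_of_nonneg_left hle (hpos _)
      _ = _ := by ring
  rw [integral_const_mul] at e2
  rw [e1] at h1
  rw [mul_assoc, mul_assoc, ← div_eq_inv_mul, le_div_iff₀ hIpos]
  exact h1.trans (mul_le_mul_of_nonneg_left e2 (by positivity))

/-- Where `v` is large, `∇u` is controlled by the local mean of `Δu = u v²`. -/
lemma grad_local (hn : 2 ≤ n) : ∃ K > 0, ∀ u v : Euc n → ℝ, Sol u v → ∀ L : ℝ,
    (∀ x i, |pd i v x| ≤ L) → ∀ x, 2 * (n * L) + 1 ≤ v x → ∀ i,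
    |pd i u x| ≤ K * ∫ y, (u (x + y) * v (x + y) ^ 2) * ch ((6 : ℝ) • y) := by
  obtain ⟨K1, hK1, hgrad⟩ := grad_est hn
  obtain ⟨K2, hK2, hsub⟩ := sub_local hn
  refine ⟨7 * K1 * K2, by positivity, fun u v h L hL x hx i => ?_⟩
  set N : ℝ := n * L with hN
  have hL0 : 0 ≤ N := mul_nonneg (Nat.cast_nonneg _) ((abs_nonneg _).trans (hL 0 i))
  set J := ∫ y, u (x + y) * ch ((6 : ℝ) • y) with hJ
  have hJ0 : 0 ≤ J := integral_nonneg fun y => mul_nonneg (h.pu _).le (ch_nonneg _)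
  have hA : ∀ z ∈ closedBall x (1 / 3), u z ≤ K2 * J := fun z hz =>
    hsub u h.su.sm (fun y => (h.pu y).le) (fun y => by
      rw [h.eu]; exact mul_nonneg (h.pu y).le (sq_nonneg _)) x z hz
  have hlip : ∀ y : Euc n, ‖y‖ ≤ 1 → |v (x + y) - v x| ≤ N := by
    intro y hy
    refine (lip_of_pd h.sv.sm hL x y).trans ?_
    calc N * ‖y‖ ≤ N * 1 := mul_le_mul_of_nonneg_left hy hL0
      _ = N := mul_one _
  have hup : ∀ z ∈ closedBall x (1 / 3), v z ≤ v x + N := by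
    intro z hz
    rw [mem_closedBall_iff_norm] at hz
    have := (abs_le.1 (hlip (z - x) (by linarith))).2
    rw [add_sub_cancel] at this
    linarith
  have h1 := hgrad u h.su.sm x (1 / 3) (K2 * J) (K2 * J * (v x + N) ^ 2) (by norm_num)
    (fun z hz => by rw [abs_of_pos (h.pu z)]; exact hA z hz)
    (fun z hz => by
      rw [h.eu, abs_of_pos (mul_pos (h.pu z) (pow_pos (h.pv z) 2))]
      exact mul_le_mul (hA z hz) (pow_le_pow_left₀ (h.pv z).le (hup z hz) 2) (sq_nonneg _)
        (by positivity)) i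
  have hJ2 : (v x - N) ^ 2 * J ≤ ∫ y, (u (x + y) * v (x + y) ^ 2) * ch ((6 : ℝ) • y) := by
    have hch : Continuous fun y : Euc n => ch ((6 : ℝ) • y) := ch_sm.continuous.comp (by fun_prop)
    have hcu : Continuous fun y => u (x + y) := h.su.cont.comp (by fun_prop)
    have hcv : Continuous fun y => v (x + y) := h.sv.cont.comp (by fun_prop)
    rw [hJ, ← integral_const_mul]
    refine integral_mono ((integrable_mul_cs hcu hch (ch_smul_cs (by norm_num))).const_mul _)
      (integrable_mul_cs (hcu.mul (hcv.pow 2)) hch (ch_smul_cs (by norm_num))) fun y => ?_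
    simp only
    by_cases hy : ch ((6 : ℝ) • y) = 0
    · simp [hy]
    · have hy' := norm_le_of_ch hy
      rw [norm_smul] at hy'
      norm_num at hy'
      have h2 := (abs_le.1 (hlip y (by linarith))).1
      have h3 : (v x - N) ^ 2 ≤ v (x + y) ^ 2 :=
        pow_le_pow_left₀ (by linarith) (by linarith) 2
      have h4 := mul_le_mul_of_nonneg_right h3 (mul_nonneg (h.pu (x + y)).le
        (ch_nonneg ((6 : ℝ) • y)))
      linarith
  have h5 : 1 ≤ (v x - N) ^ 2 := one_le_pow₀ (by linarith)
  have h6 : (v x + N) ^ 2 ≤ (3 * (v x - N)) ^ 2 :=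
    pow_le_pow_left₀ (by linarith [h.pv x]) (by linarith) 2
  have h7 : 3 + (v x + N) ^ 2 / 3 ≤ 7 * (v x - N) ^ 2 := by
    rw [mul_pow (3 : ℝ)] at h6
    linarith
  calc |pd i u x| ≤ _ := h1
    _ = K1 * K2 * J * (3 + (v x + N) ^ 2 / 3) := by ring
    _ ≤ K1 * K2 * J * (7 * (v x - N) ^ 2) := mul_le_mul_of_nonneg_left h7 (by positivity)
    _ = 7 * K1 * K2 * ((v x - N) ^ 2 * J) := by ring
    _ ≤ _ := mul_le_mul_of_nonneg_left hJ2 (by positivity)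

end local_grad


/-! ### Integral bounds for the rescaled solutions -/

section scaled
variable {n : ℕ} {u v : Euc n → ℝ}

lemma pd_zero_of_zero {f : Euc n → ℝ} {ρ : ℝ} (hf : ∀ y, ρ < ‖y‖ → f y = 0) (i : Fin n) :
    ∀ y, ρ < ‖y‖ → pd i f y = 0 := by
  intro y hy
  have : f =ᶠ[nhds y] fun _ => 0 := by
    filter_upwards [(isOpen_lt continuous_const continuous_norm).mem_nhds hy] with z hz
    exact hf z hz
  rw [pd, this.fderiv_eq]; simp

lemma Sm.one {f : Euc n → ℝ} (hf : Sm f) : ContDiff ℝ 1 f := hf.of_le (by exact_mod_cast le_top)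

lemma lap_cs {f : Euc n → ℝ} (hf : Sm f) : ∫ y, lap f y * ch y = ∫ y, f y * lap ch y := by
  simp only [lap_eq, Finset.sum_mul, Finset.mul_sum]
  have c2 : ∀ i, HasCompactSupport (pd i (ch (n := n))) := fun i => pd_cs ch_cs i
  rw [integral_finsetSum _ fun i _ => integrable_mul_cs ((hf.pd i).pd i).continuous
      ch_sm.continuous ch_cs,
    integral_finsetSum _ fun i _ => integrable_mul_cs hf.continuous ((ch_sm.pd i).pd i).continuous
      (pd_cs (c2 i) i)]
  refine Finset.sum_congr rfl fun i _ => ?_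
  have h1 := cs_ibp (hf.pd i).one ch_sm.one ch_cs i
  have h2 := cs_ibp hf.one (ch_sm.pd i).one (c2 i) i
  linarith

lemma mass_bound {f : Euc n → ℝ} (hf : Sm f) {B : ℝ} (hB : ∀ y, ‖y‖ ≤ 5 → |f y| ≤ B) :
    ∫ y, lap f y * ch y ≤ B * ∫ y : Euc n, |lap ch y| := by
  rw [lap_cs hf]
  have hz : ∀ y : Euc n, 5 < ‖y‖ → lap ch y = 0 := fun y hy => by
    rw [lap_eq]
    exact Finset.sum_eq_zero fun i _ =>
      pd_zero_of_zero (pd_zero_of_zero (fun y hy => ch_zero hy) i) i y hy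
  refine (le_abs_self _).trans (abs_integral_le_of_kernel ch_sm.lap.continuous
    (HasCompactSupport.intro (isCompact_closedBall 0 5) fun y hy => hz y (by simpa using hy))
    fun y hy => hB y ?_)
  by_contra h
  exact hy (hz y (not_le.1 h))

/-- The Caccioppoli type estimate obtained by testing with `β(f)`, `β(s) = s / (1 + R s)`. -/
lemma beta_bound {f : Euc n → ℝ} (hf : Sm f) (pos : ∀ y, 0 < f y) (hlap : ∀ y, 0 ≤ lap f y)
    {L R : ℝ} (hL : ∀ y i, |pd i f y| ≤ L) (hR : 0 < R) :
    ∫ y, (∑ i, pd i f y ^ 2 / (1 + R * f y) ^ 2) * ch y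
      ≤ L / R * ∑ i, ∫ y : Euc n, |pd i ch y| := by
  have hden : ∀ y, 0 < 1 + R * f y := fun y => by have := mul_pos hR (pos y); linarith
  set b : Euc n → ℝ := fun y => f y / (1 + R * f y) with hb
  have hdS : Sm fun y => 1 + R * f y := contDiff_const.add (contDiff_const.mul hf)
  have hbS : Sm b := hf.div hdS fun y => (hden y).ne'
  have hb0 : ∀ y, 0 ≤ b y := fun y => div_nonneg (pos y).le (hden y).le
  have hb1 : ∀ y, b y ≤ 1 / R := fun y => by
    rw [hb, div_le_div_iff₀ (hden y) hR]; linarith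
  have hpb : ∀ i y, pd i b y * pd i f y = pd i f y ^ 2 / (1 + R * f y) ^ 2 := by
    intro i y
    have e : (fun y => b y * (1 + R * f y)) = f := by
      funext y; exact div_mul_cancel₀ _ (hden y).ne'
    have h1 := congrFun (congrArg (pd i) e) y
    have hd1 : Differentiable ℝ fun y => R * f y := hf.diff.const_mul R
    rw [pd_mul hbS.diff hdS.diff, pd_add (differentiable_const _) hd1, pd_const,
      pd_const_mul _ hf.diff] at h1
    have h2 : pd i b y = pd i f y / (1 + R * f y) ^ 2 := by
      have hne := (hden y).ne'
      have h3 : pd i b y * (1 + R * f y) = pd i f y - f y / (1 + R * f y) * (R * pd i f y) := by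
        simp only [hb] at h1 ⊢
        linarith
      rw [eq_div_iff (by positivity), pow_two, ← mul_assoc, h3]
      have h4 : f y / (1 + R * f y) * (1 + R * f y) = f y := div_mul_cancel₀ _ hne
      linear_combination (-(R * pd i f y)) * h4
    rw [h2]; ring
  have hint : ∀ i, Integrable fun y => b y * (pd i (pd i f) y * ch y) := fun i =>
    (hbS.continuous.mul (((hf.pd i).pd i).continuous.mul ch_sm.continuous)).integrable_of_hasCompactSupport
      (ch_cs.mul_left.mul_left)
  have hint2 : ∀ i, Integrable fun y => b y * pd i f y * pd i ch y := fun i =>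
    integrable_mul_cs (hbS.continuous.mul (hf.pd i).continuous) (ch_sm.pd i).continuous
      (pd_cs ch_cs i)
  have hi : ∀ i, ∫ y, pd i f y ^ 2 / (1 + R * f y) ^ 2 * ch y
      = -(∫ y, b y * (pd i (pd i f) y * ch y)) - ∫ y, b y * pd i f y * pd i ch y := by
    intro i
    have hs : Sm fun y => pd i f y * ch y := (hf.pd i).mul ch_sm
    have h1 := cs_ibp hbS.one hs.one (ch_cs.mul_left) i
    rw [pd_mul (hf.pd i).diff ch_sm.diff] at h1
    have e1 : (fun y => b y * (pd i (pd i f) y * ch y + pd i f y * pd i ch y))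
        = fun y => b y * (pd i (pd i f) y * ch y) + b y * pd i f y * pd i ch y := by
      funext y; ring
    have e2 : (fun y => pd i b y * (pd i f y * ch y))
        = fun y => pd i f y ^ 2 / (1 + R * f y) ^ 2 * ch y := by
      funext y; rw [← hpb]; ring
    rw [e1, e2, integral_add (hint i) (hint2 i)] at h1
    linarith
  have hcq : ∀ i, Continuous fun y => pd i f y ^ 2 / (1 + R * f y) ^ 2 := fun i =>
    ((hf.pd i).continuous.pow 2).div (hdS.continuous.pow 2) fun y => (pow_pos (hden y) 2).ne'
  simp only [Finset.sum_mul]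
  rw [integral_finsetSum _ fun i _ => integrable_mul_cs (hcq i) ch_sm.continuous ch_cs]
  simp only [hi]
  rw [Finset.sum_sub_distrib, Finset.sum_neg_distrib]
  have k1 : 0 ≤ ∑ i, ∫ y, b y * (pd i (pd i f) y * ch y) := by
    rw [← integral_finsetSum _ fun i _ => hint i]
    refine integral_nonneg fun y => ?_
    simp only
    rw [← Finset.mul_sum, ← Finset.sum_mul, ← lap_eq]
    exact mul_nonneg (hb0 y) (mul_nonneg (hlap y) (ch_nonneg y))
  have k2 : ∀ i, -(∫ y, b y * pd i f y * pd i ch y) ≤ L / R * ∫ y : Euc n, |pd i ch y| := by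
    intro i
    refine (neg_le_abs _).trans (abs_integral_le_of_kernel (ch_sm.pd i).continuous
      (pd_cs ch_cs i) fun y _ => ?_)
    rw [abs_mul, abs_of_nonneg (hb0 y)]
    calc b y * |pd i f y| ≤ 1 / R * L :=
          mul_le_mul (hb1 y) (hL y i) (abs_nonneg _) (by positivity)
      _ = L / R := by ring
  have k3 := Finset.sum_le_sum fun i (_ : i ∈ Finset.univ) => k2 i
  rw [Finset.sum_neg_distrib, ← Finset.mul_sum] at k3
  linarith

/-- Averaging local means over the unit ball costs no more than the mass on a larger ball. -/
lemma avg_bound {g : Euc n → ℝ} (hg : Continuous g) (hg0 : ∀ y, 0 ≤ g y) (c : Euc n) {R : ℝ}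
    (hR : 1 ≤ R) :
    Integrable (fun y => ∫ z, g (c + R • y + z) * ch ((6 : ℝ) • z) * ch ((4 : ℝ) • y)) ∧
    ∫ y, ∫ z, g (c + R • y + z) * ch ((6 : ℝ) • z) * ch ((4 : ℝ) • y)
      ≤ (∫ z : Euc n, ch ((6 : ℝ) • z)) * ∫ y, g (c + R • y) * ch y := by
  have hR0 : 0 < R := by linarith
  have hcont : Continuous (Function.uncurry fun (y z : Euc n) =>
      g (c + R • y + z) * ch ((6 : ℝ) • z) * ch ((4 : ℝ) • y)) := by
    have h1 := ch_sm (n := n).continuous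
    simp only [Function.uncurry_def]
    fun_prop
  have hcs : HasCompactSupport (Function.uncurry fun (y z : Euc n) =>
      g (c + R • y + z) * ch ((6 : ℝ) • z) * ch ((4 : ℝ) • y)) := by
    refine HasCompactSupport.intro ((isCompact_closedBall (0 : Euc n) 2).prod
      (isCompact_closedBall (0 : Euc n) 2)) fun p hp => ?_
    simp only [Function.uncurry_def]
    by_contra hne
    refine hp ⟨?_, ?_⟩
    · have := norm_le_of_ch (right_ne_zero_of_mul hne)
      rw [norm_smul] at this; norm_num at this
      rw [mem_closedBall_zero_iff]; linarith
    · have := norm_le_of_ch (right_ne_zero_of_mul (left_ne_zero_of_mul hne))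
      rw [norm_smul] at this; norm_num at this
      rw [mem_closedBall_zero_iff]; linarith
  have hint : Integrable (Function.uncurry fun (y z : Euc n) =>
      g (c + R • y + z) * ch ((6 : ℝ) • z) * ch ((4 : ℝ) • y)) (volume.prod volume) :=
    hcont.integrable_of_hasCompactSupport hcs
  refine ⟨hint.integral_prod_left, ?_⟩
  rw [integral_integral_swap hint]
  set m := ∫ y, g (c + R • y) * ch y with hm
  have hgm : Continuous fun y => g (c + R • y) := hg.comp (by fun_prop)
  have h6 : Continuous fun z : Euc n => ch ((6 : ℝ) • z) := ch_sm.continuous.comp (by fun_prop)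
  rw [← integral_mul_const]
  refine integral_mono hint.integral_prod_right
    ((h6.integrable_of_hasCompactSupport (ch_smul_cs (by norm_num))).mul_const _) fun z => ?_
  simp only
  have e : ∀ y, g (c + R • y + z) * ch ((6 : ℝ) • z) * ch ((4 : ℝ) • y)
      = ch ((6 : ℝ) • z) * (g (c + R • y + z) * ch ((4 : ℝ) • y)) := fun y => by ring
  simp only [e]
  rw [integral_const_mul]
  by_cases hz : ch ((6 : ℝ) • z) = 0
  · simp [hz]
  refine mul_le_mul_of_nonneg_left ?_ (ch_nonneg _)
  have hz1 : ‖z‖ ≤ 1 := by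
    have := norm_le_of_ch hz
    rw [norm_smul] at this; norm_num at this; linarith
  have htr : m = ∫ y, g (c + R • (R⁻¹ • z + y)) * ch (R⁻¹ • z + y) :=
    (integral_add_left_eq_self (μ := (volume : Measure (Euc n)))
      (fun y => g (c + R • y) * ch y) (R⁻¹ • z)).symm
  rw [htr]
  refine integral_mono_of_nonneg (Filter.Eventually.of_forall fun y =>
    mul_nonneg (hg0 _) (ch_nonneg _))
    ((integrable_mul_cs hgm ch_sm.continuous ch_cs).comp_add_left (R⁻¹ • z))
    (Filter.Eventually.of_forall fun y => ?_)
  simp only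
  have e2 : c + R • (R⁻¹ • z + y) = c + R • y + z := by
    rw [smul_add, smul_smul, mul_inv_cancel₀ hR0.ne', one_smul]; abel
  rw [e2]
  by_cases hy : ch ((4 : ℝ) • y) = 0
  · rw [hy, mul_zero]; exact mul_nonneg (hg0 _) (ch_nonneg _)
  · have hy1 := norm_le_of_ch hy
    rw [norm_smul] at hy1; norm_num at hy1
    rw [ch_one (y := R⁻¹ • z + y)]
    · exact mul_le_mul_of_nonneg_left (ch_le_one _) (hg0 _)
    · refine (norm_add_le _ _).trans ?_
      rw [norm_smul, Real.norm_eq_abs, abs_of_pos (by positivity)]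
      have : R⁻¹ * ‖z‖ ≤ 1 * 1 := mul_le_mul (inv_le_one_of_one_le₀ hR) hz1 (norm_nonneg _) zero_le_one
      linarith

end scaled


/-! ### Stationarity of the segregation energy -/

section stat
variable {n : ℕ}

/-- Inner variation identity, one component of the vector field at a time: the stress tensor
`δ_αβ (|∇U|² + |∇V|² + κU²V²) - 2 (∂_αU ∂_βU + ∂_αV ∂_βV)` is divergence free. -/
lemma stationary {U V g : Euc n → ℝ} (hU : Sm U) (hV : Sm V) {k : ℝ}
    (eU : ∀ y, lap U y = k * (U y * V y ^ 2)) (eV : ∀ y, lap V y = k * (V y * U y ^ 2))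
    (hg : Sm g) (hc : HasCompactSupport g) (a : Fin n) :
    ∫ y, (((∑ b, (pd b U y ^ 2 + pd b V y ^ 2)) + k * (U y ^ 2 * V y ^ 2)) * pd a g y
      - ∑ b, 2 * (pd a U y * pd b U y + pd a V y * pd b V y) * pd b g y) = 0 := by
  have s2 : ∀ {f : Euc n → ℝ}, Sm f → Sm fun y => f y ^ 2 := fun hf => hf.pow 2
  have hs1 : ∀ b, Sm fun y => pd b U y ^ 2 + pd b V y ^ 2 := fun b =>
    (s2 (hU.pd b)).add (s2 (hV.pd b))
  have hS1 : Sm fun y => ∑ b, (pd b U y ^ 2 + pd b V y ^ 2) := ContDiff.sum fun b _ => hs1 b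
  have hS2 : Sm fun y => U y ^ 2 * V y ^ 2 := (s2 hU).mul (s2 hV)
  have hS3 : Sm fun y => k * (U y ^ 2 * V y ^ 2) := contDiff_const.mul hS2
  have hE : Sm fun y => (∑ b, (pd b U y ^ 2 + pd b V y ^ 2)) + k * (U y ^ 2 * V y ^ 2) :=
    hS1.add hS3
  have hpU : ∀ b, Sm fun y => pd a U y * pd b U y := fun b => (hU.pd a).mul (hU.pd b)
  have hpV : ∀ b, Sm fun y => pd a V y * pd b V y := fun b => (hV.pd a).mul (hV.pd b)
  have hpS : ∀ b, Sm fun y => pd a U y * pd b U y + pd a V y * pd b V y := fun b =>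
    (hpU b).add (hpV b)
  have hF : ∀ b, Sm fun y => 2 * (pd a U y * pd b U y + pd a V y * pd b V y) := fun b =>
    contDiff_const.mul (hpS b)
  have dE := pd_add (i := a) hS1.diff hS3.diff
  rw [pd_sum _ fun b => (hs1 b).diff, pd_const_mul _ hS2.diff,
    pd_mul (s2 hU).diff (s2 hV).diff, pd_sq hU.diff, pd_sq hV.diff] at dE
  have dF : ∀ b, pd b (fun y => 2 * (pd a U y * pd b U y + pd a V y * pd b V y)) = fun y =>
      2 * ((pd a (pd b U) y * pd b U y + pd a U y * pd b (pd b U) y)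
        + (pd a (pd b V) y * pd b V y + pd a V y * pd b (pd b V) y)) := by
    intro b
    rw [pd_const_mul _ (hpS b).diff, pd_add (hpU b).diff (hpV b).diff,
      pd_mul (hU.pd a).diff (hU.pd b).diff, pd_mul (hV.pd a).diff (hV.pd b).diff,
      pd_comm hU a b, pd_comm hV a b]
  have hpdc : ∀ b, HasCompactSupport (pd b g) := fun b => pd_cs hc b
  have i1 := integrable_mul_cs hE.continuous (hg.pd a).continuous (hpdc a)
  have i2 := fun b => integrable_mul_cs (hF b).continuous (hg.pd b).continuous (hpdc b)
  rw [integral_sub i1 (integrable_finsetSum _ fun b _ => i2 b),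
    integral_finsetSum _ fun b _ => i2 b, cs_ibp hE.one hg.one hc]
  simp_rw [fun b => cs_ibp (hF b).one hg.one hc b]
  rw [Finset.sum_neg_distrib, sub_neg_eq_add, ← integral_finsetSum _ fun b _ =>
    integrable_mul_cs ((hF b).pd b).continuous hg.continuous hc]
  rw [neg_add_eq_zero]
  congr 1
  funext y
  rw [← Finset.sum_mul, dE]
  congr 1
  simp only [dF]
  have e1 : ∀ b, pd a (fun y => pd b U y ^ 2 + pd b V y ^ 2) y
      = 2 * pd b U y * pd a (pd b U) y + 2 * pd b V y * pd a (pd b V) y := by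
    intro b
    rw [pd_add (s2 (hU.pd b)).diff (s2 (hV.pd b)).diff, pd_sq (hU.pd b).diff,
      pd_sq (hV.pd b).diff]
  have e2 : ∑ b, 2 * ((pd a (pd b U) y * pd b U y + pd a U y * pd b (pd b U) y)
        + (pd a (pd b V) y * pd b V y + pd a V y * pd b (pd b V) y))
      = ∑ b, (2 * pd b U y * pd a (pd b U) y + 2 * pd b V y * pd a (pd b V) y)
        + 2 * pd a U y * lap U y + 2 * pd a V y * lap V y := by
    rw [lap_eq, lap_eq, Finset.mul_sum, Finset.mul_sum, ← Finset.sum_add_distrib,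
      ← Finset.sum_add_distrib]
    refine Finset.sum_congr rfl fun b _ => ?_
    ring
  rw [e2, eU, eV]
  simp only [e1]
  ring

end stat

/-! ### Smallness of the interaction terms -/

section tail
variable {n : ℕ} {u v : Euc n → ℝ}

/-- One half of the majorant of the interaction terms: a combination of the Laplacian, of the energy
density of `U / (1 + R U)`, and of a local mean of `u v²`, all localized by cutoffs. -/
noncomputable def Mj (u v : Euc n → ℝ) (c : Euc n) (R A B D : ℝ) (y : Euc n) : ℝ :=
  A * (lap (resc u c R) y * ch y)
    + B * ((∑ i, pd i (resc u c R) y ^ 2 / (1 + R * resc u c R y) ^ 2) * ch y)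
    + D * ∫ z, (u (c + R • y + z) * v (c + R • y + z) ^ 2) * ch ((6 : ℝ) • z) * ch ((4 : ℝ) • y)

lemma resc_sm (hu : Sm u) (c : Euc n) (R : ℝ) : Sm (resc u c R) :=
  contDiff_const.mul (sm_affine hu c R)

lemma pd_resc (hu : Sm u) (c : Euc n) {R : ℝ} (hR : 0 < R) (i : Fin n) (y : Euc n) :
    pd i (resc u c R) y = pd i u (c + R • y) := by
  have := congrFun (pd_const_mul (i := i) R⁻¹ (sm_affine hu c R).diff) y
  rw [pd_affine hu.diff] at this
  rw [show resc u c R = fun y => R⁻¹ * u (c + R • y) from rfl, this, ← mul_assoc,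
    inv_mul_cancel₀ hR.ne', one_mul]

lemma lap_resc (hu : Sm u) (c : Euc n) {R : ℝ} (hR : 0 < R) (y : Euc n) :
    lap (resc u c R) y = R * lap u (c + R • y) := by
  rw [show resc u c R = fun y => R⁻¹ * u (c + R • y) from rfl,
    lap_const_mul (sm_affine hu c R), lap_affine hu]
  field_simp

lemma mul_resc (c : Euc n) {R : ℝ} (hR : 0 < R) (y : Euc n) :
    R * resc u c R y = u (c + R • y) := by
  rw [resc, ← mul_assoc, mul_inv_cancel₀ hR.ne', one_mul]

lemma Mj_bound (h : Sol u v) {L : ℝ} (hL0 : 0 < L) (hL : ∀ x i, |pd i u x| ≤ L) {c : Euc n}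
    (hc : u c ≤ L) {R : ℝ} (hR : 1 ≤ R) {A B D : ℝ} (hA : 0 ≤ A) (hB : 0 ≤ B) (hD : 0 ≤ D) :
    Integrable (Mj u v c R (A / R) B D) ∧
    ∫ y, Mj u v c R (A / R) B D y
      ≤ (A * ((L + 5 * (n * L)) * ∫ y : Euc n, |lap ch y|)
        + B * (L * ∑ i, ∫ y : Euc n, |pd i ch y|)
        + D * ((∫ z : Euc n, ch ((6 : ℝ) • z)) *
            ((L + 5 * (n * L)) * ∫ y : Euc n, |lap ch y|))) / R := by
  have hR0 : 0 < R := by linarith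
  have hS := resc_sm h.su.sm c R
  have hpos : ∀ y, 0 < resc u c R y := fun y => mul_pos (inv_pos.2 hR0) (h.pu _)
  have hlap : ∀ y, lap (resc u c R) y = R * (u (c + R • y) * v (c + R • y) ^ 2) := fun y => by
    rw [lap_resc h.su.sm c hR0, h.eu]
  have hg0 : ∀ x, 0 ≤ u x * v x ^ 2 := fun x => mul_nonneg (h.pu x).le (sq_nonneg _)
  have hlap0 : ∀ y, 0 ≤ lap (resc u c R) y := fun y => by
    rw [hlap]; exact mul_nonneg hR0.le (hg0 _)
  have hUb : ∀ y, ‖y‖ ≤ 5 → |resc u c R y| ≤ L + 5 * (n * L) := by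
    intro y hy
    rw [abs_of_pos (hpos y)]
    have h1 := (abs_le.1 (lip_of_pd h.su.sm hL c (R • y))).2
    rw [norm_smul, Real.norm_eq_abs, abs_of_pos hR0] at h1
    have h2 : (n * L) * (R * ‖y‖) ≤ (n * L) * (R * 5) := by gcongr
    have h3 : L ≤ R * L := le_mul_of_one_le_left hL0.le hR
    have h4 : R * resc u c R y ≤ R * (L + 5 * (n * L)) := by
      rw [mul_resc c hR0]
      calc u (c + R • y) ≤ R * L + (n * L) * (R * 5) := by linarith
        _ = _ := by ring
    exact le_of_mul_le_mul_left h4 hR0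
  have m1 := mass_bound hS hUb
  have m2 := beta_bound hS hpos hlap0 (L := L) (fun y i => by rw [pd_resc h.su.sm c hR0]; exact hL _ i)
    hR0
  have hgc : Continuous fun x => u x * v x ^ 2 := h.su.cont.mul (h.sv.cont.pow 2)
  obtain ⟨j3, m3⟩ := avg_bound hgc hg0 c hR
  have e3 : ∫ y, lap (resc u c R) y * ch y
      = R * ∫ y, (u (c + R • y) * v (c + R • y) ^ 2) * ch y := by
    rw [← integral_const_mul]; congr 1; funext y; rw [hlap]; ring
  have j1 : Integrable fun y => lap (resc u c R) y * ch y :=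
    integrable_mul_cs hS.lap.continuous ch_sm.continuous ch_cs
  have hden : ∀ y, 0 < 1 + R * resc u c R y := fun y => by
    have := mul_pos hR0 (hpos y); linarith
  have hq : Continuous fun y => ∑ i, pd i (resc u c R) y ^ 2 / (1 + R * resc u c R y) ^ 2 :=
    continuous_finsetSum _ fun i _ => ((hS.pd i).continuous.pow 2).div
      ((continuous_const.add (continuous_const.mul hS.continuous)).pow 2)
      fun y => (pow_pos (hden y) 2).ne'
  have j2 := integrable_mul_cs hq ch_sm.continuous ch_cs
  have j12 := (j1.const_mul (A / R)).add (j2.const_mul B)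
  refine ⟨j12.add (j3.const_mul D), ?_⟩
  have hsplit : ∫ y, Mj u v c R (A / R) B D y = A / R * (∫ y, lap (resc u c R) y * ch y)
      + B * (∫ y, (∑ i, pd i (resc u c R) y ^ 2 / (1 + R * resc u c R y) ^ 2) * ch y)
      + D * ∫ y, ∫ z, (u (c + R • y + z) * v (c + R • y + z) ^ 2) * ch ((6 : ℝ) • z)
          * ch ((4 : ℝ) • y) := by
    rw [← integral_const_mul, ← integral_const_mul, ← integral_const_mul,
      ← integral_add (j1.const_mul (A / R)) (j2.const_mul B)]
    exact integral_add j12 (j3.const_mul D)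
  have m4 : ∫ y, (u (c + R • y) * v (c + R • y) ^ 2) * ch y
      ≤ ((L + 5 * (n * L)) * ∫ y : Euc n, |lap ch y|) / R := by
    rw [le_div_iff₀ hR0, mul_comm, ← e3]; exact m1
  have h6 : 0 ≤ ∫ z : Euc n, ch ((6 : ℝ) • z) := integral_nonneg fun z => ch_nonneg _
  have m5 := m3.trans (mul_le_mul_of_nonneg_left m4 h6)
  have f1 := mul_le_mul_of_nonneg_left m1 (div_nonneg hA hR0.le)
  have f2 := mul_le_mul_of_nonneg_left m2 hB
  have f3 := mul_le_mul_of_nonneg_left m5 hD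
  rw [hsplit]
  refine (add_le_add (add_le_add f1 f2) f3).trans (le_of_eq ?_)
  ring

lemma Mj_nonneg (h : Sol u v) (c : Euc n) {R : ℝ} (hR : 0 < R) {A B D : ℝ} (hA : 0 ≤ A)
    (hB : 0 ≤ B) (hD : 0 ≤ D) (y : Euc n) : 0 ≤ Mj u v c R A B D y := by
  have hg0 : ∀ x, 0 ≤ u x * v x ^ 2 := fun x => mul_nonneg (h.pu x).le (sq_nonneg _)
  refine add_nonneg (add_nonneg (mul_nonneg hA (mul_nonneg ?_ (ch_nonneg _)))
    (mul_nonneg hB (mul_nonneg (Finset.sum_nonneg fun i _ => by positivity) (ch_nonneg _))))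
    (mul_nonneg hD (integral_nonneg fun z =>
      mul_nonneg (mul_nonneg (hg0 _) (ch_nonneg _)) (ch_nonneg _)))
  rw [lap_resc h.su.sm c hR, h.eu]
  exact mul_nonneg hR.le (hg0 _)

/-- The majorant on the unit ball, where the cutoffs equal one. -/
lemma Mj_eq (h : Sol u v) (c : Euc n) {R : ℝ} (hR : 0 < R) (A B D : ℝ) {y : Euc n}
    (hy : ‖y‖ ≤ 1) :
    A * (u (c + R • y) * v (c + R • y) ^ 2)
      + B * (∑ i, pd i u (c + R • y) ^ 2 / (1 + u (c + R • y)) ^ 2)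
      + D * ∫ z, (u (c + R • y + z) * v (c + R • y + z) ^ 2) * ch ((6 : ℝ) • z)
      = Mj u v c R (A / R) B D y := by
  have c1 : ch y = 1 := ch_one (by linarith)
  have c2 : ch ((4 : ℝ) • y) = 1 := ch_one (by rw [norm_smul]; norm_num; linarith)
  simp only [Mj, c1, c2, mul_one, pd_resc h.su.sm c hR, mul_resc c hR, lap_resc h.su.sm c hR, h.eu]
  field_simp

end tail


section tail
variable {n : ℕ} {u v : Euc n → ℝ}

lemma sum_abs_sq_le {p : Fin n → ℝ} {a M : ℝ} (ha : 0 < a) (haM : a ≤ M) :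
    (∑ i, |p i|) ^ 2 ≤ n * (1 + M) ^ 2 * ∑ i, p i ^ 2 / (1 + a) ^ 2 := by
  have h1 : (∑ i, |p i|) ^ 2 ≤ n * ∑ i, p i ^ 2 := by
    simpa using sq_sum_le_card_mul_sum_sq (s := Finset.univ) (f := fun i => |p i|)
  refine h1.trans ?_
  rw [mul_assoc, Finset.mul_sum (a := (1 + M) ^ 2)]
  refine mul_le_mul_of_nonneg_left (Finset.sum_le_sum fun i _ => ?_) (Nat.cast_nonneg n)
  rw [← mul_div_assoc, le_div_iff₀ (by positivity), mul_comm]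
  gcongr

/-- Pointwise control of the interaction terms. Where both components are bounded the products of
derivatives are controlled by the Caccioppoli densities; where one of them is large the gradient
of the other is controlled by a local mean of the interaction. -/
lemma interaction_le (h : Sol u v) {L K : ℝ} (hL0 : 0 < L) (hK : 0 < K)
    (hLu : ∀ x i, |pd i u x| ≤ L) (hLv : ∀ x i, |pd i v x| ≤ L)
    (hmin : ∀ x, u x ≤ L ∨ v x ≤ L)
    (hG : ∀ u v : Euc n → ℝ, Sol u v → ∀ L : ℝ,
      (∀ x i, |pd i v x| ≤ L) → ∀ x, 2 * (n * L) + 1 ≤ v x → ∀ i,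
      |pd i u x| ≤ K * ∫ y, (u (x + y) * v (x + y) ^ 2) * ch ((6 : ℝ) • y)) (x : Euc n) :
    u x ^ 2 * v x ^ 2 + (∑ i, |pd i u x|) * (∑ i, |pd i v x|) ≤
      (L * (u x * v x ^ 2)
        + n * (1 + (2 * (n * L) + 1)) ^ 2 * (∑ i, pd i u x ^ 2 / (1 + u x) ^ 2)
        + n * (n * L) * K * ∫ z, (u (x + z) * v (x + z) ^ 2) * ch ((6 : ℝ) • z))
      + (L * (v x * u x ^ 2)
        + n * (1 + (2 * (n * L) + 1)) ^ 2 * (∑ i, pd i v x ^ 2 / (1 + v x) ^ 2)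
        + n * (n * L) * K * ∫ z, (v (x + z) * u (x + z) ^ 2) * ch ((6 : ℝ) • z)) := by
  obtain ⟨M, hM⟩ : ∃ M, M = 2 * (n * L) + 1 := ⟨_, rfl⟩
  rw [← hM]
  have hux := h.pu x
  have hvx := h.pv x
  have hM0 : 0 < M := by rw [hM]; positivity
  obtain ⟨Ju, hJu⟩ : ∃ J, J = ∫ z, (u (x + z) * v (x + z) ^ 2) * ch ((6 : ℝ) • z) := ⟨_, rfl⟩
  obtain ⟨Jv, hJv⟩ : ∃ J, J = ∫ z, (v (x + z) * u (x + z) ^ 2) * ch ((6 : ℝ) • z) := ⟨_, rfl⟩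
  have hJu0 : 0 ≤ Ju := by
    rw [hJu]; exact integral_nonneg fun z =>
      mul_nonneg (mul_nonneg (h.pu _).le (sq_nonneg _)) (ch_nonneg _)
  have hJv0 : 0 ≤ Jv := by
    rw [hJv]; exact integral_nonneg fun z =>
      mul_nonneg (mul_nonneg (h.pv _).le (sq_nonneg _)) (ch_nonneg _)
  have gu := hG u v h L hLv x
  have gv := hG v u h.swap L hLu x
  rw [← hM, ← hJu] at gu
  rw [← hM, ← hJv] at gv
  rw [← hJu, ← hJv]
  obtain ⟨P, hP⟩ : ∃ P, P = ∑ i, |pd i u x| := ⟨_, rfl⟩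
  obtain ⟨Q, hQ⟩ : ∃ Q, Q = ∑ i, |pd i v x| := ⟨_, rfl⟩
  have hsum : ∀ {p : Fin n → ℝ} {S : ℝ}, (∀ i, |p i| ≤ S) → ∑ i, |p i| ≤ n * S := by
    intro p S hp
    simpa using Finset.sum_le_sum fun i (_ : i ∈ Finset.univ) => hp i
  have hP0 : 0 ≤ P := by rw [hP]; exact Finset.sum_nonneg fun i _ => abs_nonneg _
  have hQ0 : 0 ≤ Q := by rw [hQ]; exact Finset.sum_nonneg fun i _ => abs_nonneg _
  have hPL : P ≤ n * L := by rw [hP]; exact hsum (hLu x)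
  have hQL : Q ≤ n * L := by rw [hQ]; exact hsum (hLv x)
  have hS1 := fun ha : u x ≤ M => sum_abs_sq_le (p := fun i => pd i u x) hux ha
  have hS2 := fun ha : v x ≤ M => sum_abs_sq_le (p := fun i => pd i v x) hvx ha
  simp only [← hP, ← hQ] at hS1 hS2
  rw [← hP, ← hQ]
  have hs1 : 0 ≤ n * (1 + M) ^ 2 * ∑ i, pd i u x ^ 2 / (1 + u x) ^ 2 :=
    mul_nonneg (by positivity) (Finset.sum_nonneg fun i _ => by positivity)
  have hs2 : 0 ≤ n * (1 + M) ^ 2 * ∑ i, pd i v x ^ 2 / (1 + v x) ^ 2 :=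
    mul_nonneg (by positivity) (Finset.sum_nonneg fun i _ => by positivity)
  have hj1 : 0 ≤ n * (n * L) * K * Ju := by positivity
  have hj2 : 0 ≤ n * (n * L) * K * Jv := by positivity
  have k1 : 0 ≤ L * (u x * v x ^ 2) := by positivity
  have k2 : 0 ≤ L * (v x * u x ^ 2) := by positivity
  have A1 : u x ^ 2 * v x ^ 2 ≤ L * (u x * v x ^ 2) + L * (v x * u x ^ 2) := by
    rcases hmin x with hm | hm
    · have : u x * (u x * v x ^ 2) ≤ L * (u x * v x ^ 2) :=
        mul_le_mul_of_nonneg_right hm (by positivity)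
      calc u x ^ 2 * v x ^ 2 = u x * (u x * v x ^ 2) := by ring
        _ ≤ _ := by linarith
    · have : v x * (v x * u x ^ 2) ≤ L * (v x * u x ^ 2) :=
        mul_le_mul_of_nonneg_right hm (by positivity)
      calc u x ^ 2 * v x ^ 2 = v x * (v x * u x ^ 2) := by ring
        _ ≤ _ := by linarith
  by_cases hv : M ≤ v x
  · have h1 : P ≤ n * (K * Ju) := by rw [hP]; exact hsum (gu hv)
    have h2 : P * Q ≤ n * (K * Ju) * (n * L) := mul_le_mul h1 hQL hQ0 (by positivity)
    have h3 : n * (K * Ju) * (n * L) = n * (n * L) * K * Ju := by ring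
    linarith
  by_cases hu : M ≤ u x
  · have h1 : Q ≤ n * (K * Jv) := by rw [hQ]; exact hsum (gv hu)
    have h2 : P * Q ≤ (n * L) * (n * (K * Jv)) := mul_le_mul hPL h1 hQ0 (by positivity)
    have h3 : (n * L) * (n * (K * Jv)) = n * (n * L) * K * Jv := by ring
    linarith
  · have h1 := hS1 (not_le.1 hu).le
    have h2 := hS2 (not_le.1 hv).le
    have h3 : P * Q ≤ P ^ 2 + Q ^ 2 := by nlinarith [sq_nonneg (P - Q), sq_nonneg P, sq_nonneg Q]
    linarith

/-- The interaction energy and the mixed products of derivatives of the rescaled solutions are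
`O(1 / R)` in `L¹` of the unit ball, uniformly in the nodal centre. -/
lemma tail_bound (hn : 2 ≤ n) (h : Sol u v) {L : ℝ} (hL0 : 0 < L)
    (hLu : ∀ x i, |pd i u x| ≤ L) (hLv : ∀ x i, |pd i v x| ≤ L)
    (hmin : ∀ x, u x ≤ L ∨ v x ≤ L) :
    ∃ C ≥ 0, ∀ c, u c = v c → ∀ R ≥ (1 : ℝ), ∃ G : Euc n → ℝ, Integrable G ∧ (∀ y, 0 ≤ G y) ∧
      (∀ y, ‖y‖ ≤ 1 → R ^ 4 * (resc u c R y ^ 2 * resc v c R y ^ 2)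
        + (∑ i, |pd i (resc u c R) y|) * (∑ i, |pd i (resc v c R) y|) ≤ G y) ∧
      ∫ y, G y ≤ C / R := by
  obtain ⟨K, hK, hG⟩ := grad_local hn
  obtain ⟨B, hB⟩ : ∃ B : ℝ, B = n * (1 + (2 * (n * L) + 1)) ^ 2 := ⟨_, rfl⟩
  obtain ⟨D, hD⟩ : ∃ D : ℝ, D = n * (n * L) * K := ⟨_, rfl⟩
  have hB0 : 0 ≤ B := by rw [hB]; positivity
  have hD0 : 0 ≤ D := by rw [hD]; positivity
  obtain ⟨E, hE⟩ : ∃ E : ℝ, E = (L * ((L + 5 * (n * L)) * ∫ y : Euc n, |lap ch y|)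
        + B * (L * ∑ i, ∫ y : Euc n, |pd i ch y|)
        + D * ((∫ z : Euc n, ch ((6 : ℝ) • z)) *
            ((L + 5 * (n * L)) * ∫ y : Euc n, |lap ch y|))) := ⟨_, rfl⟩
  refine ⟨2 * |E|, by positivity, fun c hc R hR => ?_⟩
  have hR0 : 0 < R := by linarith
  have huc : u c ≤ L := (hmin c).elim id fun h' => hc ▸ h'
  have hvc : v c ≤ L := hc ▸ huc
  obtain ⟨a1, a2⟩ := Mj_bound h hL0 hLu huc hR hL0.le hB0 hD0
  obtain ⟨b1, b2⟩ := Mj_bound h.swap hL0 hLv hvc hR hL0.le hB0 hD0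
  rw [← hE] at a2 b2
  refine ⟨fun y => Mj u v c R (L / R) B D y + Mj v u c R (L / R) B D y, a1.add b1, fun y =>
    add_nonneg (Mj_nonneg h c hR0 (by positivity) hB0 hD0 y)
      (Mj_nonneg h.swap c hR0 (by positivity) hB0 hD0 y), fun y hy => ?_, ?_⟩
  · beta_reduce
    rw [← Mj_eq h c hR0 L B D hy, ← Mj_eq h.swap c hR0 L B D hy, hB, hD]
    refine le_trans (le_of_eq ?_) (interaction_le h hL0 hK hLu hLv hmin hG (c + R • y))
    simp only [pd_resc h.su.sm c hR0, pd_resc h.sv.sm c hR0, ← mul_resc (u := u) c hR0 y,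
      ← mul_resc (u := v) c hR0 y]
    ring
  · rw [integral_add a1 b1]
    have : E / R ≤ |E| / R := by gcongr; exact le_abs_self E
    calc _ ≤ E / R + E / R := add_le_add a2 b2
      _ ≤ |E| / R + |E| / R := add_le_add this this
      _ = _ := by ring

end tail

/-! ### Almost stationarity of the difference -/

section final
variable {n : ℕ}

lemma gradient_apply {f : Euc n → ℝ} (x : Euc n) (i : Fin n) : gradient f x i = pd i f x := by
  have h1 : (gradient f x) i = ⟪gradient f x, EuclideanSpace.single i (1 : ℝ)⟫ := by
    rw [real_inner_comm, EuclideanSpace.inner_single_left]; simp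
  rw [h1, gradient, InnerProductSpace.toDual_symm_apply]
  rfl

lemma fderiv_comp_apply {Y : Euc n → Euc n} (hY : Differentiable ℝ Y) (x : Euc n) (a b : Fin n) :
    fderiv ℝ Y x (EuclideanSpace.single b 1) a = pd b (fun y => Y y a) x := by
  have h := ((EuclideanSpace.proj (𝕜 := ℝ) a).hasFDerivAt.comp x (hY x).hasFDerivAt).fderiv
  have h2 : (fun y => Y y a) = (EuclideanSpace.proj (𝕜 := ℝ) a : Euc n →L[ℝ] ℝ) ∘ Y := rfl
  rw [pd, h2, h]; rfl

/-- The algebraic remainder between the integrand for `U - V` and the stress tensor of `(U, V)`. -/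
lemma integrand_bound (p q : Fin n → ℝ) (a : Fin n → Fin n → ℝ) {w A : ℝ} (hw : 0 ≤ w)
    (hA0 : 0 ≤ A) (hA : ∀ i j, |a i j| ≤ A) :
    |((∑ b, (p b - q b) ^ 2) * (∑ i, a i i)
        - 2 * ∑ i, ∑ j, a i j * (p i - q i) * (p j - q j))
      - ∑ i, (((∑ b, (p b ^ 2 + q b ^ 2)) + w) * a i i
        - ∑ j, 2 * (p i * p j + q i * q j) * a i j)|
      ≤ (2 * n + 4) * A * (w + (∑ i, |p i|) * ∑ i, |q i|) := by
  obtain ⟨P, hP⟩ : ∃ P, P = ∑ i, |p i| := ⟨_, rfl⟩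
  obtain ⟨Q, hQ⟩ : ∃ Q, Q = ∑ i, |q i| := ⟨_, rfl⟩
  have hPQ0 : 0 ≤ P * Q := by
    rw [hP, hQ]
    exact mul_nonneg (Finset.sum_nonneg fun i _ => abs_nonneg _)
      (Finset.sum_nonneg fun i _ => abs_nonneg _)
  have hPQ : P * Q = ∑ i, ∑ j, |p i| * |q j| := by rw [hP, hQ, Finset.sum_mul_sum]
  obtain ⟨t, ht⟩ : ∃ t, t = ∑ i, a i i := ⟨_, rfl⟩
  obtain ⟨s, hs⟩ : ∃ s, s = ∑ i, p i * q i := ⟨_, rfl⟩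
  obtain ⟨X, hX⟩ : ∃ X, X = ∑ i, ∑ j, a i j * (p i * q j) := ⟨_, rfl⟩
  obtain ⟨Z, hZ⟩ : ∃ Z, Z = ∑ i, ∑ j, a i j * (q i * p j) := ⟨_, rfl⟩
  have e1 : ∑ b, (p b - q b) ^ 2 = ∑ b, (p b ^ 2 + q b ^ 2) - 2 * s := by
    rw [hs, Finset.mul_sum, ← Finset.sum_sub_distrib]
    exact Finset.sum_congr rfl fun i _ => by ring
  have e2 : ∑ i, (((∑ b, (p b ^ 2 + q b ^ 2)) + w) * a i i
        - ∑ j, 2 * (p i * p j + q i * q j) * a i j)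
      = ((∑ b, (p b ^ 2 + q b ^ 2)) + w) * t
        - ∑ i, ∑ j, 2 * (p i * p j + q i * q j) * a i j := by
    rw [Finset.sum_sub_distrib, ← Finset.mul_sum, ht]
  have e3 : 2 * ∑ i, ∑ j, a i j * (p i - q i) * (p j - q j)
      = ∑ i, ∑ j, 2 * (p i * p j + q i * q j) * a i j - 2 * X - 2 * Z := by
    rw [hX, hZ]
    simp only [Finset.mul_sum, ← Finset.sum_sub_distrib]
    exact Finset.sum_congr rfl fun i _ => Finset.sum_congr rfl fun j _ => by ring
  rw [e1, e2, e3, ← ht, ← hP, ← hQ]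
  have bt : |t| ≤ n * A := by
    rw [ht]
    refine (Finset.abs_sum_le_sum_abs _ _).trans ?_
    simpa using Finset.sum_le_sum fun i (_ : i ∈ Finset.univ) => hA i i
  have bs : |s| ≤ P * Q := by
    rw [hs, hPQ]
    refine (Finset.abs_sum_le_sum_abs _ _).trans (Finset.sum_le_sum fun i _ => ?_)
    rw [abs_mul]
    exact Finset.single_le_sum (f := fun j => |p i| * |q j|) (fun j _ => by positivity)
      (Finset.mem_univ i)
  have bX : |X| ≤ A * (P * Q) := by
    rw [hX, hPQ, Finset.mul_sum]
    refine (Finset.abs_sum_le_sum_abs _ _).trans (Finset.sum_le_sum fun i _ => ?_)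
    rw [Finset.mul_sum]
    refine (Finset.abs_sum_le_sum_abs _ _).trans (Finset.sum_le_sum fun j _ => ?_)
    rw [abs_mul, abs_mul]
    exact mul_le_mul_of_nonneg_right (hA i j) (by positivity)
  have bZ : |Z| ≤ A * (P * Q) := by
    rw [hZ, hPQ, Finset.sum_comm, Finset.mul_sum]
    refine (Finset.abs_sum_le_sum_abs _ _).trans (Finset.sum_le_sum fun i _ => ?_)
    rw [Finset.mul_sum]
    refine (Finset.abs_sum_le_sum_abs _ _).trans (Finset.sum_le_sum fun j _ => ?_)
    rw [abs_mul, abs_mul, mul_comm |q j|]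
    exact mul_le_mul_of_nonneg_right (hA j i) (by positivity)
  have bst : |s * t| ≤ P * Q * (n * A) := by
    rw [abs_mul]; exact mul_le_mul bs bt (abs_nonneg _) hPQ0
  have bwt : |w * t| ≤ w * (n * A) := by
    rw [abs_mul, abs_of_nonneg hw]; exact mul_le_mul_of_nonneg_left bt hw
  have hnA : 0 ≤ w * (n * A) := (abs_nonneg _).trans bwt
  have hwA : 0 ≤ w * A := mul_nonneg hw hA0
  have := abs_le.1 bst
  have := abs_le.1 bwt
  have := abs_le.1 bX
  have := abs_le.1 bZ
  have e4 : (2 * n + 4) * A * (w + P * Q)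
      = 2 * (w * (n * A)) + 4 * (w * A) + 2 * (P * Q * (n * A)) + 4 * (A * (P * Q)) := by ring
  rw [abs_le, e4]
  constructor <;> nlinarith

end final


theorem almost_stationarity_of_difference (n : ℕ) (hn : 2 ≤ n)
    (u v : Euc n → ℝ)
    (hu : ContDiff ℝ (⊤ : ℕ∞) u) (hv : ContDiff ℝ (⊤ : ℕ∞) v)
    (hupos : ∀ x, 0 < u x) (hvpos : ∀ x, 0 < v x)
    (hequ : ∀ x, lap u x = u x * v x ^ 2)
    (heqv : ∀ x, lap v x = v x * u x ^ 2)
    (C₀ : ℝ) (hC₀ : 0 < C₀)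
    (hgrowth : ∀ x, u x + v x ≤ C₀ * (1 + ‖x‖))
    (Y : Euc n → Euc n) (hY : ContDiff ℝ (⊤ : ℕ∞) Y)
    (hYc : HasCompactSupport Y) (hYB : tsupport Y ⊆ ball (0 : Euc n) 1) :
    ∃ C > (0 : ℝ), ∀ x₀ : Euc n, u x₀ = v x₀ → ∀ R ≥ (1 : ℝ),
      |∫ x in ball (0 : Euc n) 1,
          (‖gradient (fun y => resc u x₀ R y - resc v x₀ R y) x‖ ^ 2 * vdiv Y x
            - 2 * DYbil Y (gradient (fun y => resc u x₀ R y - resc v x₀ R y) x)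
                (gradient (fun y => resc u x₀ R y - resc v x₀ R y) x) x)|
        ≤ C * (R ^ 4 : ℝ) ^ (-(1 : ℝ) / 4) := by
  have h : Sol u v := Sol.of_growth hn hu hv hupos hvpos hequ heqv hgrowth
  by_cases hZ : ∃ x₀, u x₀ = v x₀
  swap
  · exact ⟨1, one_pos, fun x₀ hx₀ => (hZ ⟨x₀, hx₀⟩).elim⟩
  obtain ⟨z₀, hz₀⟩ := hZ
  obtain ⟨L, hL0, hL⟩ := global_est hn h hgrowth hz₀
  obtain ⟨C, hC, htail⟩ := tail_bound hn h hL0 (fun x i => ((hL x).1 i).1)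
    (fun x i => ((hL x).1 i).2) fun x => (hL x).2
  have hYd : Differentiable ℝ Y := hY.differentiable (by simp)
  have hyS : ∀ i, Sm fun y => Y y i := fun i =>
    (EuclideanSpace.proj (𝕜 := ℝ) i : Euc n →L[ℝ] ℝ).contDiff.comp hY
  have hyc : ∀ i, HasCompactSupport fun y => Y y i := fun i =>
    hYc.comp_left (g := fun w : Euc n => w i) rfl
  -- The derivatives of the components of `Y` vanish off the unit ball and are bounded.
  have hoff : ∀ x ∉ ball (0 : Euc n) 1, ∀ i j, pd j (fun y => Y y i) x = 0 := by
    intro x hx i j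
    rw [← fderiv_comp_apply hYd, fderiv_of_notMem_tsupport ℝ (fun h' => hx (hYB h'))]
    rfl
  obtain ⟨A, hA0, hA⟩ : ∃ A ≥ 0, ∀ x i j, |pd j (fun y => Y y i) x| ≤ A := by
    have hb : ∀ i j, ∃ A, ∀ x, ‖pd j (fun y => Y y i) x‖ ≤ A := fun i j =>
      (pd_cs (hyc i) j).exists_bound_of_continuous ((hyS i).pd j).continuous
    choose a ha using hb
    have ha0 : ∀ i j, 0 ≤ a i j := fun i j => (norm_nonneg _).trans (ha i j 0)
    refine ⟨∑ i, ∑ j, a i j, Finset.sum_nonneg fun i _ => Finset.sum_nonneg fun j _ => ha0 i j,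
      fun x i j => (ha i j x).trans ?_⟩
    exact (Finset.single_le_sum (f := fun j => a i j) (fun j _ => ha0 i j)
      (Finset.mem_univ j)).trans (Finset.single_le_sum (f := fun i => ∑ j, a i j)
        (fun i _ => Finset.sum_nonneg fun j _ => ha0 i j) (Finset.mem_univ i))
  refine ⟨(2 * n + 4) * A * C + 1, by positivity, fun c hc R hR => ?_⟩
  have hR0 : 0 < R := by linarith
  have hpow : (R ^ 4 : ℝ) ^ (-(1 : ℝ) / 4) = 1 / R := by
    rw [← Real.rpow_natCast, ← Real.rpow_mul hR0.le]
    norm_num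
    rw [Real.rpow_neg_one]
  obtain ⟨G, hGi, hG0, hGp, hGC⟩ := htail c hc R hR
  obtain ⟨U, hU⟩ : ∃ U, U = resc u c R := ⟨_, rfl⟩
  obtain ⟨V, hV⟩ : ∃ V, V = resc v c R := ⟨_, rfl⟩
  have hUS : Sm U := hU ▸ resc_sm hu c R
  have hVS : Sm V := hV ▸ resc_sm hv c R
  have eU : ∀ y, lap U y = R ^ 4 * (U y * V y ^ 2) := fun y => by
    rw [hU, hV, lap_resc hu c hR0, hequ, ← mul_resc (u := u) c hR0, ← mul_resc (u := v) c hR0]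
    ring
  have eV : ∀ y, lap V y = R ^ 4 * (V y * U y ^ 2) := fun y => by
    rw [hU, hV, lap_resc hv c hR0, heqv, ← mul_resc (u := u) c hR0, ← mul_resc (u := v) c hR0]
    ring
  rw [← hU, ← hV] at hGp ⊢
  have hpdc : ∀ i j, Continuous (pd j fun y => Y y i) := fun i j => ((hyS i).pd j).continuous
  have hpU : ∀ i, Continuous (pd i U) := fun i => (hUS.pd i).continuous
  have hpV : ∀ i, Continuous (pd i V) := fun i => (hVS.pd i).continuous
  have hUc := hUS.continuous
  have hVc := hVS.continuous
  obtain ⟨F, hF⟩ : ∃ F : Euc n → ℝ, F = fun x =>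
      (∑ b, (pd b U x - pd b V x) ^ 2) * (∑ i, pd i (fun y => Y y i) x)
        - 2 * ∑ i, ∑ j, pd j (fun y => Y y i) x * (pd i U x - pd i V x)
          * (pd j U x - pd j V x) := ⟨_, rfl⟩
  obtain ⟨S, hS⟩ : ∃ S : Fin n → Euc n → ℝ, S = fun i y =>
      ((∑ b, (pd b U y ^ 2 + pd b V y ^ 2)) + R ^ 4 * (U y ^ 2 * V y ^ 2))
          * pd i (fun y => Y y i) y
        - ∑ b, 2 * (pd i U y * pd b U y + pd i V y * pd b V y) * pd b (fun y => Y y i) y :=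
    ⟨_, rfl⟩
  have hFe : ∀ x, ‖gradient (fun y => U y - V y) x‖ ^ 2 * vdiv Y x
      - 2 * DYbil Y (gradient (fun y => U y - V y) x) (gradient (fun y => U y - V y) x) x
      = F x := by
    intro x
    simp only [hF, norm_sq_sum, vdiv, DYbil, gradient_apply, fderiv_comp_apply hYd,
      pd_sub hUS.diff hVS.diff]
  simp only [hFe]
  have hF0 : ∀ x ∉ ball (0 : Euc n) 1, F x = 0 := fun x hx => by
    simp only [hF, hoff x hx]; simp
  have hS0 : ∀ i, ∀ x ∉ ball (0 : Euc n) 1, S i x = 0 := fun i x hx => by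
    simp only [hS, hoff x hx]; simp
  have hcs : ∀ f : Euc n → ℝ, (∀ x ∉ ball (0 : Euc n) 1, f x = 0) → HasCompactSupport f :=
    fun f hf => HasCompactSupport.intro (isCompact_closedBall 0 1) fun x hx =>
      hf x fun h' => hx (ball_subset_closedBall h')
  have hFi : Integrable F := by
    refine Continuous.integrable_of_hasCompactSupport ?_ (hcs F hF0)
    rw [hF]; fun_prop
  have hSi : ∀ i, Integrable (S i) := fun i => by
    refine Continuous.integrable_of_hasCompactSupport ?_ (hcs _ (hS0 i))
    rw [hS]; fun_prop
  have hSt : ∫ x, ∑ i, S i x = 0 := by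
    rw [integral_finsetSum _ fun i _ => hSi i]
    refine Finset.sum_eq_zero fun i _ => ?_
    rw [hS]
    exact stationary hUS hVS eU eV (hyS i) (hyc i) i
  rw [setIntegral_eq_integral_of_forall_compl_eq_zero hF0, hpow]
  have hd : ∫ x, F x = ∫ x, (F x - ∑ i, S i x) := by
    rw [integral_sub hFi (integrable_finsetSum _ fun i _ => hSi i), hSt, sub_zero]
  have hle : ‖∫ x, (F x - ∑ i, S i x)‖ ≤ ∫ x, (2 * n + 4) * A * G x := by
    refine norm_integral_le_of_norm_le (hGi.const_mul _) (Filter.Eventually.of_forall fun x => ?_)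
    by_cases hx : x ∈ ball (0 : Euc n) 1
    · have h1 := integrand_bound (fun i => pd i U x) (fun i => pd i V x)
        (fun i j => pd j (fun y => Y y i) x) (w := R ^ 4 * (U x ^ 2 * V x ^ 2)) (by positivity)
        hA0 (hA x)
      rw [Real.norm_eq_abs, hF, hS]
      refine h1.trans (mul_le_mul_of_nonneg_left (hGp x ?_) (by positivity))
      exact (mem_ball_zero_iff.1 hx).le
    · rw [hF0 x hx, Finset.sum_eq_zero fun i _ => hS0 i x hx, sub_zero, norm_zero]
      exact mul_nonneg (by positivity) (hG0 x)
  rw [integral_const_mul] at hle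
  rw [hd, ← Real.norm_eq_abs]
  calc _ ≤ (2 * n + 4) * A * (C / R) := hle.trans (mul_le_mul_of_nonneg_left hGC (by positivity))
    _ = (2 * n + 4) * A * C * (1 / R) := by ring
    _ ≤ _ := by gcongr; linarith
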